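/- arXiv:2201.03880 — 2 statements merged into one kernel-verified Lean document; each statement's English description precedes it below -/
import Mathlib

section
/- For all positive integers k and s, if G is a graph of cliquewidth less than k that contains no K_{s,s} as a subgraph and has a path of order n, then G has an induced path of order at least (1/4)·(log₂ n)^(1/(3(k−1)(s−1))). -/
open SimpleGraph Real

/-- `G` has a (not necessarily induced) path on `n` vertices. -/
def HasPathOfOrder {V : Type*} (G : SimpleGraph V) (n : ℕ) : Prop :=
  ∃ (u v : V) (p : G.Walk u v), p.IsPath ∧ p.length + 1 = n

/-- `G` has a Hamiltonian path. -/
def HasHamPath {V : Type*} (G : SimpleGraph V) : Prop :=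
  ∃ (u v : V) (p : G.Walk u v), p.IsPath ∧ ∀ w, w ∈ p.support

/-- `G` has an induced path on at least `r` vertices (an induced subgraph isomorphic to a
path graph on `m ≥ r` vertices). -/
def HasInducedPathGE {V : Type*} (G : SimpleGraph V) (r : ℝ) : Prop :=
  ∃ m : ℕ, r ≤ (m : ℝ) ∧ Nonempty (pathGraph m ↪g G)

/-- A tree (or path) representation of `G` over the graph `T`: every vertex `v` of `G` has a
nonempty connected model `model v ⊆ V(T)`, and models of adjacent vertices intersect. -/
structure TreeRep {V N : Type*} (G : SimpleGraph V) (T : SimpleGraph N) where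
  model : V → Set N
  model_connected : ∀ v, (T.induce (model v)).Connected
  adj_meet : ∀ ⦃u v⦄, G.Adj u v → (model u ∩ model v).Nonempty

namespace TreeRep

variable {V N : Type*} {G : SimpleGraph V} {T : SimpleGraph N}

/-- The bag of the representation at a node `t`. -/
def bag (R : TreeRep G T) (t : N) : Set V := {v | t ∈ R.model v}

/-- The representation has width less than `k`, i.e. all bags have at most `k` vertices. -/
def WidthLT (R : TreeRep G T) (k : ℕ) : Prop := ∀ t, (R.bag t).ncard ≤ k

/-- The representation has width at most `k`, i.e. all bags have at most `k + 1` vertices. -/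
def WidthLE (R : TreeRep G T) (k : ℕ) : Prop := ∀ t, (R.bag t).ncard ≤ k + 1

/-- The weight of a path `p` of `T`: the number of vertices of `G` whose model meets `p`. -/
noncomputable def pathWeight (R : TreeRep G T) {x y : N} (p : T.Walk x y) : ℕ :=
  {v : V | ∃ t ∈ p.support, t ∈ R.model v}.ncard

/-- A representation is varied if no bag is contained in the bag at a neighboring node. -/
def Varied (R : TreeRep G T) : Prop := ∀ ⦃t t'⦄, T.Adj t t' → ¬ R.bag t ⊆ R.bag t'

/-- The representation has adhesion less than `a`: the adhesion set of every edge of `T`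
has fewer than `a` vertices. -/
def AdhesionLT (R : TreeRep G T) (a : ℕ) : Prop :=
  ∀ ⦃t t'⦄, T.Adj t t' → (R.bag t ∩ R.bag t').ncard < a

/-- The torso of the representation at a node `t`: the subgraph induced on the bag at `t`
together with all edges inside adhesion sets of edges of `T` incident to `t`. -/
def torso (R : TreeRep G T) (t : N) : SimpleGraph (R.bag t) :=
  SimpleGraph.fromRel (fun u v =>
    G.Adj u v ∨ ∃ t', T.Adj t t' ∧ (u : V) ∈ R.bag t' ∧ (v : V) ∈ R.bag t')

end TreeRep

/-- `G` has pathwidth less than `k`: it has a representation over a path all of whose bags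
have at most `k` vertices. -/
def PathwidthLT {V : Type*} (G : SimpleGraph V) (k : ℕ) : Prop :=
  ∃ (m : ℕ) (R : TreeRep G (pathGraph (m + 1))), R.WidthLT k

/-- `G` has treewidth less than `k`: it has a representation over a tree all of whose bags
have at most `k` vertices. -/
def TreewidthLT {V : Type*} (G : SimpleGraph V) (k : ℕ) : Prop :=
  ∃ (N : Type) (_ : Fintype N) (T : SimpleGraph N), T.IsTree ∧
    ∃ R : TreeRep G T, R.WidthLT k

/-- `G` has treewidth at most `k`. -/
def TreewidthLE {V : Type*} (G : SimpleGraph V) (k : ℕ) : Prop :=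
  ∃ (N : Type) (_ : Fintype N) (T : SimpleGraph N), T.IsTree ∧
    ∃ R : TreeRep G T, R.WidthLE k

/-- A leaf of a graph: a vertex with at most one neighbor. -/
def IsLeafNode {N : Type*} (T : SimpleGraph N) (l : N) : Prop :=
  (T.neighborSet l).Subsingleton

/-- `H` is obtained from `G` by a sequence of edge contractions: there is a surjection
from `V(G)` onto `V(H)` with connected fibers inducing the adjacency of `H`. -/
def IsContraction {W V : Type*} (H : SimpleGraph W) (G : SimpleGraph V) : Prop :=
  ∃ f : V → W, Function.Surjective f ∧
    (∀ w : W, (G.induce (f ⁻¹' {w})).Connected) ∧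
    (∀ x y : W, H.Adj x y ↔ x ≠ y ∧ ∃ u v : V, f u = x ∧ f v = y ∧ G.Adj u v)

/-- `G` is an interval graph: the intersection graph of a family of real intervals. -/
def IsIntervalGraph {V : Type*} (G : SimpleGraph V) : Prop :=
  ∃ l r : V → ℝ, (∀ v, l v ≤ r v) ∧
    ∀ u v : V, G.Adj u v ↔ u ≠ v ∧ max (l u) (l v) ≤ min (r u) (r v)

/-- The internal vertices of a walk: vertices of the walk distinct from its two endpoints. -/
def WalkInternal {V : Type*} {G : SimpleGraph V} {x y : V} (p : G.Walk x y) : Set V :=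
  {w | w ∈ p.support ∧ w ≠ x ∧ w ≠ y}

/-- `H` is a topological minor of `G`: there are branch vertices `φ u` for `u ∈ V(H)` and
internally disjoint paths of `G` joining them, one for each edge of `H`. -/
def IsTopMinor {W V : Type*} (H : SimpleGraph W) (G : SimpleGraph V) : Prop :=
  ∃ (φ : W ↪ V) (P : ∀ ⦃u v : W⦄, H.Adj u v → G.Walk (φ u) (φ v)),
    (∀ ⦃u v⦄ (h : H.Adj u v), (P h).IsPath) ∧
    (∀ ⦃u v⦄ (h : H.Adj u v), P h.symm = (P h).reverse) ∧
    (∀ ⦃u v⦄ (h : H.Adj u v), ∀ w ∈ WalkInternal (P h), w ∉ Set.range φ) ∧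
    (∀ ⦃u v u' v'⦄ (h : H.Adj u v) (h' : H.Adj u' v'), s(u, v) ≠ s(u', v') →
      ∀ w ∈ WalkInternal (P h), w ∉ WalkInternal (P h'))

/-- `H` is (an isomorphic copy of) a subgraph of `G`. -/
def ContainsSubgraphCopy {A B : Type*} (H : SimpleGraph A) (G : SimpleGraph B) : Prop :=
  ∃ f : A ↪ B, ∀ u v : A, H.Adj u v → G.Adj (f u) (f v)

/-- `G` is `k`-degenerate: every (induced) subgraph has a vertex of degree at most `k`. -/
def Degenerate {V : Type*} (G : SimpleGraph V) (k : ℕ) : Prop :=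
  ∀ s : Set V, s.Nonempty → ∃ v ∈ s, {w | w ∈ s ∧ G.Adj v w}.ncard ≤ k

/-- The cycle on `ZMod m` (for `m ≥ 3` this is the cycle graph on `m` vertices). -/
def ringGraph (m : ℕ) : SimpleGraph (ZMod m) :=
  SimpleGraph.fromRel (fun i j => j = i + 1)

/-- Cliquewidth expressions with labels in `Fin k`. -/
inductive CWExpr (k : ℕ) where
  | vertex (l : Fin k) : CWExpr k
  | union (e₁ e₂ : CWExpr k) : CWExpr k
  | addEdges (i j : Fin k) (hij : i ≠ j) (e : CWExpr k) : CWExpr k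
  | relabel (f : Fin k → Fin k) (e : CWExpr k) : CWExpr k

namespace CWExpr

variable {k : ℕ}

/-- The vertex set of the graph described by a cliquewidth expression. -/
def verts : CWExpr k → Type
  | vertex _ => Unit
  | union e₁ e₂ => e₁.verts ⊕ e₂.verts
  | addEdges _ _ _ e => e.verts
  | relabel _ e => e.verts

/-- The labelling of the vertices described by a cliquewidth expression. -/
def label : (e : CWExpr k) → e.verts → Fin k
  | vertex l, _ => l
  | union e₁ _, Sum.inl x => e₁.label x
  | union _ e₂, Sum.inr x => e₂.label x
  | addEdges _ _ _ e, x => e.label x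
  | relabel f e, x => f (e.label x)

/-- The adjacency relation described by a cliquewidth expression. -/
def adj : (e : CWExpr k) → e.verts → e.verts → Prop
  | vertex _, _, _ => False
  | union e₁ _, Sum.inl x, Sum.inl y => e₁.adj x y
  | union _ e₂, Sum.inr x, Sum.inr y => e₂.adj x y
  | union _ _, _, _ => False
  | addEdges i j _ e, x, y =>
      e.adj x y ∨ (e.label x = i ∧ e.label y = j) ∨ (e.label x = j ∧ e.label y = i)
  | relabel _ e, x, y => e.adj x y

/-- The graph described by a cliquewidth expression. -/
def graph (e : CWExpr k) : SimpleGraph e.verts := SimpleGraph.fromRel e.adj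

end CWExpr

/-- `G` has cliquewidth at most `k`: it is isomorphic to the graph of a cliquewidth
expression with at most `k` labels. -/
def CliquewidthLE {V : Type*} (G : SimpleGraph V) (k : ℕ) : Prop :=
  ∃ e : CWExpr k, Nonempty (G ≃g e.graph)

/-- `G` has `(k, Δ)`-almost bounded degree: removing at most `k` vertices yields a graph of
maximum degree at most `Δ`. -/
def AlmostBoundedDegree {V : Type*} (G : SimpleGraph V) (k Δ : ℕ) : Prop :=
  ∃ X : Set V, X.ncard ≤ k ∧ ∀ v ∉ X, {w | w ∉ X ∧ G.Adj v w}.ncard ≤ Δ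

/-- An embedding scheme for `H`: a rotation system (a permutation of the darts that is,
around each vertex, a single cycle on the darts leaving that vertex) together with a
signature on the edges. -/
structure EmbScheme {W : Type*} (H : SimpleGraph W) where
  rot : Equiv.Perm H.Dart
  rot_fst : ∀ d : H.Dart, (rot d).fst = d.fst
  rot_cyclic : ∀ d d' : H.Dart, d.fst = d'.fst → ∃ n : ℕ, (rot ^ n) d = d'
  sign : Sym2 W → Bool

namespace EmbScheme

variable {W : Type*} {H : SimpleGraph W}

/-- The face-tracing step of an embedding scheme, acting on darts with a direction. -/
def faceStep (S : EmbScheme H) : H.Dart × Bool → H.Dart × Bool :=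
  fun p =>
    let s' := xor p.2 (S.sign p.1.edge)
    ((if s' then S.rot.symm p.1.symm else S.rot p.1.symm), s')

/-- The number of orbits of a function. -/
noncomputable def orbitCount {α : Type*} (f : α → α) : ℕ :=
  Nat.card (Quotient (Relation.EqvGen.setoid (fun x y => f x = y)))

/-- The scheme describes an embedding of `H` in a surface of Euler genus at most `g`.
Isolated vertices each bound one face; every other face is traced twice by `faceStep`,
so the number of faces is `orbitCount (faceStep) / 2` plus the number of isolated
vertices, and the Euler genus of the embedding is `2c - |V| + |E| - F`. -/
def GenusLE (S : EmbScheme H) (g : ℕ) : Prop :=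
  2 * Nat.card H.ConnectedComponent + Nat.card H.edgeSet ≤
    g + Nat.card W +
      (orbitCount S.faceStep / 2 + Nat.card {v : W | ∀ w, ¬ H.Adj v w})

/-- The cycle `e 0, e 1, …, e (m-1)` is a facial cycle of the embedding scheme `S`:
its consecutive darts are consecutive in a face traversal. -/
def IsFacialCycle (S : EmbScheme H) {m : ℕ} (e : ZMod m → W)
    (hadj : ∀ x : ZMod m, H.Adj (e x) (e (x + 1))) : Prop :=
  ∃ b : ZMod m → Bool, ∀ x : ZMod m,
    S.faceStep (⟨(e x, e (x + 1)), hadj x⟩, b x) =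
      (⟨(e (x + 1), e (x + 1 + 1)), hadj (x + 1)⟩, b (x + 1))

end EmbScheme

/-- `Hs` has a `C`-vortex of width less than `k`, where `C` is the cycle of `G₀` given by
`e`: the vertices common to `Hs` and `G₀` are exactly those of `C`, and `Hs` has a cycle
representation over `C` in which the model of each vertex of `C` contains that vertex and
every bag has at most `k` vertices. -/
def IsVortex {V : Type*} {G : SimpleGraph V} (Hs G₀ : G.Subgraph) {m : ℕ}
    (e : ZMod m → G₀.verts) (k : ℕ) : Prop :=
  Hs.verts ∩ G₀.verts = Subtype.val '' Set.range e ∧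
  ∃ model : Hs.verts → Set (ZMod m),
    (∀ v, ((ringGraph m).induce (model v)).Connected) ∧
    (∀ (x : ZMod m) (v : Hs.verts), (e x : V) = (v : V) → x ∈ model v) ∧
    (∀ ⦃u v⦄, Hs.coe.Adj u v → (model u ∩ model v).Nonempty) ∧
    (∀ t : ZMod m, {v : Hs.verts | t ∈ model v}.ncard ≤ k)

/-- `G` is `(g, p, a, k)`-almost-embeddable. -/
def AlmostEmbeddable {V : Type*} (G : SimpleGraph V) (g p a k : ℕ) : Prop :=
  ∃ A : Set V, A.ncard ≤ a ∧
  ∃ s : ℕ, s ≤ p ∧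
  ∃ (G₀ : G.Subgraph) (Gv : Fin s → G.Subgraph),
    (G₀ ⊔ ⨆ i, Gv i) = (⊤ : G.Subgraph).deleteVerts A ∧
    (∀ i j, i ≠ j → Disjoint (Gv i).verts (Gv j).verts) ∧
    ∃ S : EmbScheme G₀.coe, S.GenusLE g ∧
    ∃ (m : Fin s → ℕ) (e : ∀ i, ZMod (m i) → G₀.verts)
      (hadj : ∀ i x, G₀.coe.Adj (e i x) (e i (x + 1))),
      (∀ i, 3 ≤ m i) ∧
      (∀ i, Function.Injective (e i)) ∧
      (∀ i, S.IsFacialCycle (e i) (hadj i)) ∧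
      (∀ i j, i ≠ j → Disjoint (Set.range (e i)) (Set.range (e j))) ∧
      (∀ i, IsVortex (Gv i) G₀ (e i) k)


/-! ### Proof -/

namespace IndPath

open Classical in
/-- number of entries of `l` lying in `A`. -/
noncomputable def cnt {V : Type*} (A : Set V) (l : List V) : ℕ := l.countP (fun x => decide (x ∈ A))

variable {V : Type*}

theorem cnt_append (A : Set V) (l m : List V) : cnt A (l ++ m) = cnt A l + cnt A m := by
  simp [cnt]

theorem cnt_mono {A B : Set V} (h : A ⊆ B) (l : List V) : cnt A l ≤ cnt B l := by
  unfold cnt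
  apply List.countP_mono_left
  intro x _ hx
  simp only [decide_eq_true_eq] at hx ⊢
  exact h hx

theorem cnt_eq_zero {A : Set V} {l : List V} (h : ∀ x ∈ l, x ∉ A) : cnt A l = 0 := by
  simpa [cnt, List.countP_eq_zero] using h

theorem cnt_pos {A : Set V} {l : List V} {x : V} (hx : x ∈ l) (hA : x ∈ A) : 0 < cnt A l := by
  simpa [cnt, List.countP_pos_iff] using ⟨x, hx, hA⟩

theorem exists_of_cnt_pos {A : Set V} {l : List V} (h : 0 < cnt A l) : ∃ x ∈ l, x ∈ A := by
  simpa [cnt, List.countP_pos_iff] using h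

theorem cnt_le_length (A : Set V) (l : List V) : cnt A l ≤ l.length := List.countP_le_length

theorem cnt_univ (l : List V) : cnt Set.univ l = l.length := by simp [cnt]

theorem cnt_le_ncard [Finite V] (A : Set V) {l : List V} (hl : l.Nodup) : cnt A l ≤ A.ncard := by
  classical
  have h1 : cnt A l = (l.filter (fun x => decide (x ∈ A))).length := by
    unfold cnt; rw [List.countP_eq_length_filter]
  have h2 : (l.filter (fun x => decide (x ∈ A))).Nodup := hl.filter _
  rw [h1, ← List.toFinset_card_of_nodup h2, ← Set.ncard_coe_finset]
  apply Set.ncard_le_ncard _ (Set.toFinite _)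
  intro x hx
  simp at hx
  exact hx.2

/-- Deleting the entries in `A` leaves a long contiguous piece. -/
theorem piece (A Q : Set V) : ∀ (N : ℕ) (l : List V), l.length ≤ N → ∃ l', l' <:+: l ∧ (∀ x ∈ l', x ∉ A) ∧
    cnt Q l + 1 ≤ (cnt A l + 1) * (cnt Q l' + 1) := by
  intro N
  induction N with
  | zero =>
    intro l hl
    have : l = [] := by simpa using hl
    subst this
    exact ⟨[], List.infix_rfl, by simp, by simp [cnt]⟩
  | succ N ih =>
    intro l hl
    by_cases h : ∃ x ∈ l, x ∈ A
    · have : ∃ l1 a l2, l = l1 ++ a :: l2 ∧ a ∈ A ∧ ∀ x ∈ l1, x ∉ A := by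
        clear hl
        induction l with
        | nil => simp at h
        | cons b l ihl =>
          by_cases hb : b ∈ A
          · exact ⟨[], b, l, rfl, hb, by simp⟩
          · obtain ⟨x, hx, hxA⟩ := h
            have hx' : x ∈ l := by
              rcases List.mem_cons.1 hx with rfl | h
              · exact absurd hxA hb
              · exact h
            obtain ⟨l1, a, l2, rfl, ha, h1⟩ := ihl ⟨x, hx', hxA⟩
            refine ⟨b :: l1, a, l2, rfl, ha, ?_⟩
            intro y hy
            rcases List.mem_cons.1 hy with rfl | h
            · exact hb
            · exact h1 y h
      obtain ⟨l1, a, l2, rfl, ha, h1⟩ := this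
      obtain ⟨l', hl', hA', hc⟩ := ih l2 (by simp at hl; omega)
      have e1 : cnt Q (l1 ++ a :: l2) ≤ cnt Q l1 + 1 + cnt Q l2 := by
        have := cnt_append Q [a] l2
        have h2 := cnt_le_length Q [a]
        rw [cnt_append]
        simp at this h2
        omega
      have e2 : cnt A (l1 ++ a :: l2) = 1 + cnt A l2 := by
        have h3 := cnt_append A [a] l2
        rw [cnt_append, cnt_eq_zero h1]
        have : cnt A [a] = 1 := by simp [cnt, ha]
        simp at h3
        omega
      rw [e2]
      by_cases hle : cnt Q l1 ≤ cnt Q l'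
      · refine ⟨l', ?_, hA', ?_⟩
        · obtain ⟨p, q, rfl⟩ := hl'
          exact ⟨l1 ++ a :: p, q, by simp⟩
        · nlinarith
      · refine ⟨l1, ⟨[], a :: l2, by simp⟩, h1, ?_⟩
        push Not at hle
        have : (cnt A l2 + 1) * (cnt Q l' + 1) ≤ (cnt A l2 + 1) * (cnt Q l1 + 1) :=
          Nat.mul_le_mul_left _ (by omega)
        nlinarith
    · push Not at h
      refine ⟨l, List.infix_rfl, h, ?_⟩
      nlinarith [Nat.zero_le (cnt A l * (cnt Q l + 1))]

theorem chain_cut {G : SimpleGraph V} (S : Set V) : ∀ (l : List V), l.IsChain G.Adj →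
    (∃ x ∈ l, x ∈ S) → (∃ y ∈ l, y ∉ S) → ∃ u ∈ l, ∃ v ∈ l, u ∈ S ∧ v ∉ S ∧ G.Adj u v := by
  intro l
  induction l with
  | nil => simp
  | cons a l ih =>
    intro hc hx hy
    cases l with
    | nil => simp at hx hy; exact absurd hx hy
    | cons b l =>
      rw [List.isChain_cons_cons] at hc
      by_cases hS : (∃ x ∈ b :: l, x ∈ S) ∧ (∃ y ∈ b :: l, y ∉ S)
      · obtain ⟨u, hu, v, hv, h⟩ := ih hc.2 hS.1 hS.2
        exact ⟨u, List.mem_cons_of_mem _ hu, v, List.mem_cons_of_mem _ hv, h⟩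
      · by_cases ha : a ∈ S
        · have hb : b ∉ S := by
            intro hb
            apply hS
            refine ⟨⟨b, by simp, hb⟩, ?_⟩
            obtain ⟨y, hy, hyS⟩ := hy
            rcases List.mem_cons.1 hy with rfl | h
            · exact absurd ha hyS
            · exact ⟨y, h, hyS⟩
          exact ⟨a, by simp, b, by simp, ha, hb, hc.1⟩
        · have hb : b ∈ S := by
            by_contra hb
            apply hS
            refine ⟨?_, ⟨b, by simp, hb⟩⟩
            obtain ⟨y, hy, hyS⟩ := hx
            rcases List.mem_cons.1 hy with rfl | h
            · exact absurd hyS ha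
            · exact ⟨y, h, hyS⟩
          exact ⟨b, by simp, a, by simp, hb, ha, hc.1.symm⟩

theorem chain_reach {G : SimpleGraph V} (T : Set V) : ∀ (l : List V), l.IsChain G.Adj →
    ∀ (hT : ∀ x ∈ l, x ∈ T) (x y : V) (hx : x ∈ l) (hy : y ∈ l),
    (G.induce T).Reachable ⟨x, hT x hx⟩ ⟨y, hT y hy⟩ := by
  intro l hc hT x y hx hy
  by_contra hn
  obtain ⟨u, hu, v, hv, ⟨hu1, hu2⟩, hv', hadj⟩ := chain_cut
    {z | ∃ h : z ∈ T, (G.induce T).Reachable ⟨x, hT x hx⟩ ⟨z, h⟩} l hc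
    ⟨x, hx, hT x hx, Reachable.refl _⟩ ⟨y, hy, fun ⟨_, h⟩ => hn h⟩
  apply hv'
  refine ⟨hT v hv, hu2.trans ?_⟩
  apply SimpleGraph.Adj.reachable
  exact hadj

/-- A geodesic is an induced path. -/
theorem geodesic_embed {W : Type*} {H : SimpleGraph W} {x y : W} (p : H.Walk x y)
    (hp : p.length = H.dist x y) : Nonempty (pathGraph (p.length + 1) ↪g H) := by
  have key : ∀ i j, i ≤ j → j ≤ p.length → j - i ≤ H.dist (p.getVert i) (p.getVert j) := by
    intro i j hij hj
    have h1 : H.dist x (p.getVert i) ≤ i := by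
      have := SimpleGraph.dist_le (p.take i)
      rw [Walk.take_length] at this
      omega
    have h2 : H.dist (p.getVert j) y ≤ p.length - j := by
      have := SimpleGraph.dist_le (p.drop j)
      rw [Walk.drop_length] at this
      omega
    obtain ⟨q, hq⟩ : ∃ q : H.Walk (p.getVert i) (p.getVert j), q.length = H.dist (p.getVert i) (p.getVert j) := by
      apply SimpleGraph.Reachable.exists_walk_length_eq_dist
      exact ((p.take i).reachable.symm).trans (p.take j).reachable
    have h3 := SimpleGraph.dist_le (((p.take i).append q).append (p.drop j))
    simp only [Walk.length_append, Walk.take_length, Walk.drop_length] at h3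
    omega
  have keyadj : ∀ i j, i ≤ j → j ≤ p.length → H.Adj (p.getVert i) (p.getVert j) → i + 1 = j := by
    intro i j hij hj ha
    have h1 := key i j hij hj
    rw [SimpleGraph.dist_eq_one_iff_adj.2 ha] at h1
    have : i ≠ j := by rintro rfl; exact H.loopless.irrefl _ ha
    omega
  refine ⟨⟨⟨fun i => p.getVert i, ?_⟩, ?_⟩⟩
  · have : ∀ i j, i ≤ j → j ≤ p.length → p.getVert i = p.getVert j → i = j := by
      intro i j hij hj he
      have h1 := key i j hij hj
      rw [he, SimpleGraph.dist_self] at h1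
      omega
    intro i j hij
    apply Fin.ext
    rcases le_total i.1 j.1 with h | h
    · exact this _ _ h (by omega) hij
    · exact (this _ _ h (by omega) hij.symm).symm
  · intro i j
    rw [pathGraph_adj]
    constructor
    · intro ha
      rcases le_total i.1 j.1 with h | h
      · exact Or.inl (keyadj _ _ h (by omega) ha)
      · exact Or.inr (keyadj _ _ h (by omega) ha.symm)
    · rintro (h | h)
      · show H.Adj (p.getVert i) (p.getVert j)
        rw [← h]; exact p.adj_getVert_succ (by omega)
      · show H.Adj (p.getVert i) (p.getVert j)
        rw [← h]; exact (p.adj_getVert_succ (by omega)).symm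

theorem exists_induced {G : SimpleGraph V} (l : List V) (hl : l.IsChain G.Adj) {x y : V}
    (hx : x ∈ l) (hy : y ∈ l) : ∃ R : List V, R.IsChain G.Adj ∧ R.Nodup ∧ (∀ z ∈ R, z ∈ l) ∧ x ∈ R ∧ y ∈ R ∧
      Nonempty (pathGraph R.length ↪g G) := by
  have hr := chain_reach (G := G) {z | z ∈ l} l hl (fun _ h => h) x y hx hy
  obtain ⟨p, hp⟩ := hr.exists_walk_length_eq_dist
  have hpp : p.IsPath := p.isPath_of_length_eq_dist hp
  refine ⟨p.support.map Subtype.val, ?_, ?_, ?_, ?_, ?_, ?_⟩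
  · rw [List.isChain_map]
    exact p.isChain_adj_support.imp (fun a b h => h)
  · exact hpp.support_nodup.map Subtype.val_injective
  · intro z hz
    rw [List.mem_map] at hz
    obtain ⟨a, _, rfl⟩ := hz
    exact a.2
  · exact List.mem_map.2 ⟨_, p.start_mem_support, rfl⟩
  · exact List.mem_map.2 ⟨_, p.end_mem_support, rfl⟩
  · obtain ⟨f⟩ := geodesic_embed p hp
    rw [List.length_map, Walk.length_support]
    exact ⟨f.trans (SimpleGraph.Embedding.induce _)⟩

/-- The bags `B` behave like the bags of a path decomposition. -/
def Sep (G : SimpleGraph V) (B : ℕ → Set V) : Prop :=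
  ∀ R : List V, R.IsChain G.Adj → ∀ a i b, a ≤ i → i ≤ b → (∃ x ∈ R, x ∈ B a) →
    (∃ y ∈ R, y ∈ B b) → ∃ z ∈ R, z ∈ B i

theorem pathwidth_bound {G : SimpleGraph V} (B : ℕ → Set V) (r : ℕ)
    (hr : ∀ i, r ≤ i → B i = ∅) (hsep : Sep G B) (ℓ : ℕ)
    (hℓ : ∀ m, Nonempty (pathGraph m ↪g G) → m ≤ ℓ) :
    ∀ (j : ℕ) (l : List V), l.IsChain G.Adj → l.Nodup → (∀ i, cnt (B i) l ≤ j) →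
      cnt {v | ∃ i, v ∈ B i} l + 1 ≤ (ℓ + 1) ^ j := by
  classical
  intro j
  induction j with
  | zero =>
    intro l _ _ h
    rw [cnt_eq_zero]
    · simp
    · rintro x hx ⟨i, hi⟩
      have := cnt_pos hx hi
      have := h i
      omega
  | succ j ih =>
    intro l hl hln h
    by_cases hne : ∃ i, ∃ x ∈ l, x ∈ B i
    · let P : ℕ → Prop := fun i => ∃ x ∈ l, x ∈ B i
      have hPr : ∀ i, P i → i ≤ r := by
        rintro i ⟨x, _, hx⟩
        by_contra hc
        rw [hr i (by omega)] at hx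
        exact hx
      have ha : P (Nat.find hne) := Nat.find_spec hne
      have hb : P (Nat.findGreatest P r) := by
        obtain ⟨i, hi⟩ := hne
        exact Nat.findGreatest_spec (P := P) (hPr i hi) hi
      obtain ⟨x, hx, hxa⟩ := ha
      obtain ⟨y, hy, hyb⟩ := hb
      obtain ⟨R, hR, hRn, hRl, hxR, hyR, hRe⟩ := exists_induced l hl hx hy
      have hRℓ := hℓ _ hRe
      obtain ⟨l', hl', hA', hc⟩ := piece {z | z ∈ R} {v | ∃ i, v ∈ B i} _ l le_rfl
      have hcR : cnt {z | z ∈ R} l ≤ ℓ := by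
        unfold cnt
        rw [List.countP_eq_length_filter]
        refine le_trans ?_ hRℓ
        apply List.Subperm.length_le
        apply (hln.filter _).subperm
        intro z hz
        simpa using (List.mem_filter.1 hz).2
      have hj : ∀ i, cnt (B i) l' ≤ j := by
        intro i
        by_cases hi : P i
        · obtain ⟨z, hz, hzi⟩ := hsep R hR (Nat.find hne) i (Nat.findGreatest P r)
            (Nat.find_min' hne hi) (Nat.le_findGreatest (hPr i hi) hi) ⟨x, hxR, hxa⟩ ⟨y, hyR, hyb⟩
          have h1 := h i
          have hzl := hRl z hz
          obtain ⟨p, q, rfl⟩ := hl'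
          rw [cnt_append, cnt_append] at h1
          have hz' : z ∉ l' := fun h => hA' z h hz
          have : z ∈ p ∨ z ∈ q := by
            simp only [List.mem_append] at hzl
            tauto
          rcases this with h | h
          · have := cnt_pos h hzi
            omega
          · have := cnt_pos h hzi
            omega
        · rw [cnt_eq_zero]
          · omega
          · intro z hz hzi
            exact hi ⟨z, hl'.subset hz, hzi⟩
      have := ih l' (hl.infix hl') (hln.sublist hl'.sublist) hj
      calc _ ≤ _ := hc
        _ ≤ (ℓ + 1) * (ℓ + 1) ^ j := Nat.mul_le_mul (by omega) this
        _ = _ := by ring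
    · rw [cnt_eq_zero]
      · simpa using Nat.one_le_pow _ _ (Nat.succ_pos ℓ)
      · rintro x hx ⟨i, hi⟩
        exact hne ⟨i, x, hx, hi⟩


/-- Vertices outside `S` do not distinguish equally labelled vertices of `S`. -/
def Good (G : SimpleGraph V) {c : ℕ} (S : Set V) (lab : V → Fin c) : Prop :=
  ∀ x ∈ S, ∀ x' ∈ S, lab x = lab x' → ∀ y, y ∉ S → G.Adj x y → G.Adj x' y

/-- The vertex cover of the cut between `S` and its complement. -/
def Cov (G : SimpleGraph V) (s : ℕ) {c : ℕ} (S : Set V) (lab : V → Fin c) : Set V :=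
  {v | (v ∈ S ∧ {u | u ∈ S ∧ lab u = lab v}.ncard < s) ∨
    (v ∉ S ∧ ∃ i, s ≤ {u | u ∈ S ∧ lab u = i}.ncard ∧ ∀ u ∈ S, lab u = i → G.Adj u v)}

/-- No complete bipartite graph with sides of size at least `s`. -/
def NoK (G : SimpleGraph V) (s : ℕ) : Prop :=
  ∀ A B : Set V, s ≤ A.ncard → s ≤ B.ncard → (∀ a ∈ A, ∀ b ∈ B, G.Adj a b) → False

/-- Abstract decomposition trees. -/
inductive Dec (G : SimpleGraph V) {c : ℕ} : Set V → (V → Fin c) → Prop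
  | leaf (v : V) (lab : V → Fin c) : Dec G {v} lab
  | union (S T : Set V) (lab : V → Fin c) (hd : Disjoint S T) (hS : Dec G S lab) (hT : Dec G T lab)
      (hgS : Good G S lab) (hgT : Good G T lab) (hg : Good G (S ∪ T) lab) : Dec G (S ∪ T) lab
  | coarsen (S : Set V) (lab lab' : V → Fin c) (h : Dec G S lab)
      (href : ∀ x ∈ S, ∀ y ∈ S, lab x = lab y → lab' x = lab' y)
      (hg : Good G S lab') : Dec G S lab'

section cov

variable [Finite V] {G : SimpleGraph V} {s c : ℕ}

theorem cov_down {S T : Set V} {lab lab' : V → Fin c} (hST : S ⊆ T)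
    (href : ∀ x ∈ S, ∀ y ∈ S, lab x = lab y → lab' x = lab' y) {x : V}
    (hx : x ∈ Cov G s T lab') (hxS : x ∈ S) : x ∈ Cov G s S lab := by
  rcases hx with ⟨_, h⟩ | ⟨h, _⟩
  · left
    refine ⟨hxS, lt_of_le_of_lt (Set.ncard_le_ncard ?_ (Set.toFinite _)) h⟩
    rintro u ⟨hu, hl⟩
    exact ⟨hST hu, href u hu x hxS hl⟩
  · exact absurd (hST hxS) h

theorem cov_up {S T : Set V} {lab lab' : V → Fin c} (hs : 0 < s) (hST : S ⊆ T)
    (href : ∀ x ∈ S, ∀ y ∈ S, lab x = lab y → lab' x = lab' y) (hg : Good G T lab') {x : V}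
    (hx : x ∈ Cov G s S lab) (hxT : x ∉ T) : x ∈ Cov G s T lab' := by
  rcases hx with ⟨h, _⟩ | ⟨h, i, hi, hadj⟩
  · exact absurd (hST h) hxT
  · right
    have hne : {u | u ∈ S ∧ lab u = i}.Nonempty := by
      rw [← Set.ncard_pos (Set.toFinite _)]
      omega
    obtain ⟨u, hu, hui⟩ := hne
    refine ⟨hxT, lab' u, hi.trans (Set.ncard_le_ncard ?_ (Set.toFinite _)), ?_⟩
    · rintro v ⟨hv, hvi⟩
      exact ⟨hST hv, href v hv u hu (hvi.trans hui.symm)⟩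
    · intro v hv hvu
      exact hg u (hST hu) v hv hvu.symm x hxT (hadj u hu hui)

theorem cov_cross {S T : Set V} {lab lab' : V → Fin c} (hd : Disjoint S T)
    (hK : NoK G s) (hg : Good G S lab) {x : V}
    (hx : x ∈ Cov G s T lab') (hxS : x ∈ S) : x ∈ Cov G s S lab := by
  rcases hx with ⟨h, _⟩ | ⟨h, i, hi, hadj⟩
  · exact absurd h (Set.disjoint_left.1 hd hxS)
  · left
    refine ⟨hxS, ?_⟩
    by_contra hc
    push Not at hc
    refine hK _ _ hc hi ?_
    rintro a ⟨ha, hax⟩ b ⟨hb, hbi⟩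
    exact hg x hxS a ha hax.symm b (Set.disjoint_right.1 hd hb) (hadj b hb hbi).symm

theorem cov_cut {S : Set V} {lab : V → Fin c} (hg : Good G S lab) {u v : V} (hu : u ∈ S)
    (hv : v ∉ S) (h : G.Adj u v) : u ∈ Cov G s S lab ∨ v ∈ Cov G s S lab := by
  by_cases hc : {w | w ∈ S ∧ lab w = lab u}.ncard < s
  · exact Or.inl (Or.inl ⟨hu, hc⟩)
  · refine Or.inr (Or.inr ⟨hv, lab u, not_lt.1 hc, ?_⟩)
    intro w hw hwu
    exact hg u hu w hw hwu.symm v hv h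

theorem cov_card (S : Set V) (lab : V → Fin c) (hK : NoK G s) (hs : 0 < s) :
    (Cov G s S lab).ncard ≤ c * (s - 1) := by
  classical
  let D : Fin c → Set V := fun i =>
    if {u | u ∈ S ∧ lab u = i}.ncard < s then {u | u ∈ S ∧ lab u = i}
    else {v | ∀ u ∈ S, lab u = i → G.Adj u v}
  have hD : ∀ i, (D i).ncard ≤ s - 1 := by
    intro i
    by_cases h : {u | u ∈ S ∧ lab u = i}.ncard < s
    · simp only [D, if_pos h]; omega
    · simp only [D, if_neg h]
      by_contra hc
      refine hK _ {v | ∀ u ∈ S, lab u = i → G.Adj u v} (not_lt.1 h) (by omega) ?_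
      rintro a ⟨ha, hai⟩ b hb
      exact hb a ha hai
  have hsub : Cov G s S lab ⊆ ⋃ i ∈ (Finset.univ : Finset (Fin c)), D i := by
    intro v hv
    simp only [Finset.mem_univ, Set.iUnion_true, Set.mem_iUnion]
    rcases hv with ⟨h, h2⟩ | ⟨h, i, hi, hadj⟩
    · refine ⟨lab v, ?_⟩
      simp only [D, if_pos h2]
      exact ⟨h, rfl⟩
    · refine ⟨i, ?_⟩
      simp only [D, if_neg (not_lt.2 hi)]
      exact hadj
  calc _ ≤ _ := Set.ncard_le_ncard hsub (Set.toFinite _)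
    _ ≤ ∑ i : Fin c, (D i).ncard := Finset.set_ncard_biUnion_le _ _
    _ ≤ ∑ i : Fin c, (s - 1) := Finset.sum_le_sum (fun i _ => hD i)
    _ = _ := by simp

/-- The conclusion of the descent through the decomposition tree. -/
def Desc (G : SimpleGraph V) (s : ℕ) (S : Set V) (lab : V → Fin c) (l : List V) : Prop :=
  ∃ (B : ℕ → Set V) (r : ℕ), (∀ i, r ≤ i → B i = ∅) ∧ (∀ i, (B i).ncard ≤ 2 * (c * (s - 1))) ∧
    Sep G B ∧
    (∀ R : List V, R.IsChain G.Adj → ∀ i b, i ≤ b → (∃ x ∈ R, x ∈ Cov G s S lab ∨ x ∉ S) →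
      (∃ y ∈ R, y ∈ B b) → ∃ z ∈ R, z ∈ B i) ∧
    (∀ i, ∀ y ∈ B i, y ∈ S ∨ y ∈ Cov G s S lab) ∧
    l.length + 1 ≤ 2 ^ cnt {v | ∃ i, v ∈ B i} l

/-- Extend the chain of bags upwards over a union node. -/
theorem desc_step {S T : Set V} {lab : V → Fin c} (hs : 0 < s) (hK : NoK G s) (hd : Disjoint S T)
    (hgS : Good G S lab) (hg : Good G (S ∪ T) lab) {l l' : List V} (hl' : l' <:+: l)
    (hA : ∀ x ∈ l', x ∉ Cov G s S lab ∪ Cov G s T lab)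
    (hlen : l.length + 1 ≤ (cnt (Cov G s S lab ∪ Cov G s T lab) l + 1) * (l'.length + 1))
    (h : Desc G s S lab l') : Desc G s (S ∪ T) lab l := by
  obtain ⟨B, r, hr, hcard, h1, h2, h3, h4⟩ := h
  set B0 := Cov G s S lab ∪ Cov G s T lab with hB0
  let B' : ℕ → Set V := fun i => Nat.casesOn i B0 B
  have hB'0 : B' 0 = B0 := rfl
  have hB's : ∀ i, B' (i + 1) = B i := fun i => rfl
  have hx0 : ∀ x ∈ B0, x ∈ Cov G s S lab ∨ x ∉ S := by
    rintro x (hx | hx)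
    · exact Or.inl hx
    · by_cases hxS : x ∈ S
      · exact Or.inl (cov_cross hd hK hgS hx hxS)
      · exact Or.inr hxS
  have hx1 : ∀ x, x ∈ Cov G s (S ∪ T) lab ∨ x ∉ S ∪ T → x ∈ Cov G s S lab ∨ x ∉ S := by
    rintro x (hx | hx)
    · by_cases hxS : x ∈ S
      · exact Or.inl (cov_down Set.subset_union_left (fun _ _ _ _ h => h) hx hxS)
      · exact Or.inr hxS
    · exact Or.inr (fun h => hx (Or.inl h))
  have hup : ∀ y, y ∈ Cov G s S lab ∨ y ∈ Cov G s T lab → y ∈ S ∪ T ∨ y ∈ Cov G s (S ∪ T) lab := by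
    intro y hy
    by_cases hyS : y ∈ S ∪ T
    · exact Or.inl hyS
    · rcases hy with hy | hy
      · exact Or.inr (cov_up hs Set.subset_union_left (fun _ _ _ _ h => h) hg hy hyS)
      · exact Or.inr (cov_up hs Set.subset_union_right (fun _ _ _ _ h => h) hg hy hyS)
  refine ⟨B', r + 1, ?_, ?_, ?_, ?_, ?_, ?_⟩
  · intro i hi
    cases i with
    | zero => omega
    | succ i => exact hr i (by omega)
  · intro i
    cases i with
    | zero =>
      have e1 := cov_card S lab hK hs
      have e2 := cov_card T lab hK hs
      have e3 := Set.ncard_union_le (Cov G s S lab) (Cov G s T lab)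
      rw [← hB0] at e3
      rw [hB'0]
      omega
    | succ i => exact hcard i
  · intro R hR a i b hai hib hx hy
    cases i with
    | zero =>
      have : a = 0 := by omega
      subst this
      exact hx
    | succ i =>
      cases b with
      | zero => omega
      | succ b =>
        cases a with
        | zero =>
          obtain ⟨x, hxR, hx⟩ := hx
          exact h2 R hR i b (by omega) ⟨x, hxR, hx0 x hx⟩ hy
        | succ a => exact h1 R hR a i b (by omega) (by omega) hx hy
  · intro R hR i b hib hx hy
    obtain ⟨x, hxR, hx⟩ := hx
    have hx' := hx1 x hx
    cases b with
    | zero =>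
      have : i = 0 := by omega
      subst this
      exact hy
    | succ b =>
      cases i with
      | succ i => exact h2 R hR i b (by omega) ⟨x, hxR, hx'⟩ hy
      | zero =>
        obtain ⟨y, hyR, hy⟩ := hy
        rcases h3 b y hy with hyS | hyC
        · rcases hx' with hxC | hxS
          · exact ⟨x, hxR, Or.inl hxC⟩
          · obtain ⟨u, hu, v, hv, huS, hvS, hadj⟩ := chain_cut S R hR ⟨y, hyR, hyS⟩ ⟨x, hxR, hxS⟩
            rcases cov_cut (s := s) hgS huS hvS hadj with h | h
            · exact ⟨u, hu, Or.inl h⟩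
            · exact ⟨v, hv, Or.inl h⟩
        · exact ⟨y, hyR, Or.inl hyC⟩
  · intro i y hy
    cases i with
    | zero => exact hup y hy
    | succ i =>
      rcases h3 i y hy with h | h
      · exact Or.inl (Or.inl h)
      · exact hup y (Or.inl h)
  · have e : cnt B0 l + cnt {v | ∃ i, v ∈ B i} l' ≤ cnt {v | ∃ i, v ∈ B' i} l := by
      obtain ⟨p, q, rfl⟩ := hl'
      simp only [cnt_append]
      have s1 : B0 ⊆ {v | ∃ i, v ∈ B' i} := fun v hv => ⟨0, hv⟩
      have s2 : {v | ∃ i, v ∈ B i} ⊆ {v | ∃ i, v ∈ B' i} := fun v ⟨i, hv⟩ => ⟨i + 1, hv⟩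
      have := cnt_mono s1 p
      have := cnt_mono s1 q
      have := cnt_mono s2 l'
      have := cnt_eq_zero hA
      omega
    calc l.length + 1 ≤ _ := hlen
      _ ≤ 2 ^ cnt B0 l * 2 ^ cnt {v | ∃ i, v ∈ B i} l' :=
        Nat.mul_le_mul Nat.lt_two_pow_self h4
      _ = 2 ^ (cnt B0 l + cnt {v | ∃ i, v ∈ B i} l') := by rw [pow_add]
      _ ≤ _ := Nat.pow_le_pow_right (by norm_num) e

theorem desc_main (hs : 2 ≤ s) (hc : 0 < c) (hK : NoK G s) {S : Set V} {lab : V → Fin c}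
    (h : Dec G S lab) : ∀ l : List V, l.IsChain G.Adj → l.Nodup → (∀ x ∈ l, x ∈ S) →
      Desc G s S lab l := by
  induction h with
  | leaf v lab =>
    intro l hl hn hS
    let B : ℕ → Set V := fun i => if i = 0 then {v} else ∅
    have hB : ∀ i x, x ∈ B i → i = 0 ∧ x = v := by
      intro i x hx
      by_cases hi : i = 0
      · simpa [B, hi] using hx
      · simp [B, hi] at hx
    refine ⟨B, 1, ?_, ?_, ?_, ?_, ?_, ?_⟩
    · intro i hi
      simp [B, show i ≠ 0 by omega]
    · intro i
      have : 1 ≤ c * (s - 1) := Nat.mul_pos hc (by omega)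
      by_cases hi : i = 0
      · simp [B, hi]; omega
      · simp [B, hi]
    · rintro R hR a i b hai hib hx ⟨y, hyR, hy⟩
      have := (hB b y hy).1
      have : i = b := by omega
      subst this
      exact ⟨y, hyR, hy⟩
    · rintro R hR i b hib hx ⟨y, hyR, hy⟩
      have := (hB b y hy).1
      have : i = b := by omega
      subst this
      exact ⟨y, hyR, hy⟩
    · intro i y hy
      left
      exact (hB i y hy).2
    · cases l with
      | nil => simp [cnt]
      | cons a l =>
        have ha : a = v := hS a (by simp)
        have hlnil : l = [] := by
          rw [List.eq_nil_iff_forall_not_mem]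
          intro b hb
          have : b = v := hS b (by simp [hb])
          subst this ha
          simp at hn
          exact hn.1 hb
        subst hlnil ha
        have : 0 < cnt {v | ∃ i, v ∈ B i} [a] := cnt_pos (x := a) (by simp) ⟨0, by simp [B]⟩
        calc _ = 2 ^ 1 := by simp
          _ ≤ _ := Nat.pow_le_pow_right (by norm_num) this
  | union S T lab hd _ _ hgS hgT hg ihS ihT =>
    intro l hl hn hST
    obtain ⟨l', hl', hA, hlen⟩ := piece (Cov G s S lab ∪ Cov G s T lab) Set.univ _ l le_rfl
    rw [cnt_univ, cnt_univ] at hlen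
    have hcl := hl.infix hl'
    have hnl := hn.sublist hl'.sublist
    by_cases hx : ∃ x ∈ l', x ∈ S
    · have hall : ∀ x ∈ l', x ∈ S := by
        by_contra hc
        push Not at hc
        obtain ⟨u, hu, v, hv, huS, hvS, hadj⟩ := chain_cut S l' hcl hx hc
        rcases cov_cut (s := s) hgS huS hvS hadj with h | h
        · exact hA u hu (Or.inl h)
        · exact hA v hv (Or.inl h)
      exact desc_step (by omega) hK hd hgS hg hl' hA hlen (ihS l' hcl hnl hall)
    · have hall : ∀ x ∈ l', x ∈ T := by
        intro x hxl
        rcases hST x (hl'.subset hxl) with h | h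
        · exact absurd ⟨x, hxl, h⟩ hx
        · exact h
      rw [Set.union_comm S T] at hg ⊢
      rw [Set.union_comm] at hA hlen
      exact desc_step (by omega) hK hd.symm hgT hg hl' hA hlen (ihT l' hcl hnl hall)
  | coarsen S lab lab' _ href hg ih =>
    intro l hl hn hS
    obtain ⟨B, r, hr, hcard, h1, h2, h3, h4⟩ := ih l hl hn hS
    refine ⟨B, r, hr, hcard, h1, ?_, ?_, h4⟩
    · rintro R hR i b hib ⟨x, hxR, hx⟩ hy
      refine h2 R hR i b hib ⟨x, hxR, ?_⟩ hy
      by_cases hxS : x ∈ S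
      · left
        rcases hx with hx | hx
        · exact cov_down subset_rfl href hx hxS
        · exact absurd hxS hx
      · exact Or.inr hxS
    · intro i y hy
      by_cases hyS : y ∈ S
      · exact Or.inl hyS
      · right
        rcases h3 i y hy with h | h
        · exact absurd h hyS
        · exact cov_up (by omega) subset_rfl href hg h hyS

end cov

theorem dec_of_expr {G : SimpleGraph V} {c : ℕ} : ∀ (e : CWExpr c) (φ : e.verts → V)
    (_ : Function.Injective φ) (lab : V → Fin c) (_ : ∀ u, lab (φ u) = e.label u)
    (R : Fin c → Fin c → Prop)
    (_ : ∀ u v, u ≠ v → (G.Adj (φ u) (φ v) ↔ (e.adj u v ∨ e.adj v u) ∨ R (e.label u) (e.label v)))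
    (_ : Good G (Set.range φ) lab), Dec G (Set.range φ) lab := by
  intro e
  induction e with
  | vertex i =>
    intro φ hφ lab hlab R hR hg
    have : Set.range φ = {φ ()} := by
      ext x
      constructor
      · rintro ⟨u, rfl⟩; rfl
      · rintro rfl; exact ⟨(), rfl⟩
    rw [this]
    exact Dec.leaf _ _
  | union e₁ e₂ ih₁ ih₂ =>
    intro φ hφ lab hlab R hR hg
    let φ₁ : e₁.verts → V := fun x => φ (Sum.inl x)
    let φ₂ : e₂.verts → V := fun x => φ (Sum.inr x)
    have hrange : Set.range φ = Set.range φ₁ ∪ Set.range φ₂ := by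
      ext x
      constructor
      · rintro ⟨u | u, rfl⟩
        · exact Or.inl ⟨u, rfl⟩
        · exact Or.inr ⟨u, rfl⟩
      · rintro (⟨u, rfl⟩ | ⟨u, rfl⟩)
        · exact ⟨Sum.inl u, rfl⟩
        · exact ⟨Sum.inr u, rfl⟩
    have hd : Disjoint (Set.range φ₁) (Set.range φ₂) := by
      rw [Set.disjoint_left]
      rintro _ ⟨u, rfl⟩ ⟨v, hv⟩
      have h := hφ hv
      cases h
    have hl₁ : ∀ u, lab (φ₁ u) = e₁.label u := fun u => hlab (Sum.inl u)
    have hl₂ : ∀ u, lab (φ₂ u) = e₂.label u := fun u => hlab (Sum.inr u)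
    have hcr : ∀ u v, G.Adj (φ₁ u) (φ₂ v) ↔ R (lab (φ₁ u)) (lab (φ₂ v)) := by
      intro u v
      rw [hl₁, hl₂]
      have := hR (Sum.inl u) (Sum.inr v) (fun h => by cases h)
      simpa [CWExpr.adj, CWExpr.label, φ₁, φ₂] using this
    have hcr' : ∀ u v, G.Adj (φ₂ u) (φ₁ v) ↔ R (lab (φ₂ u)) (lab (φ₁ v)) := by
      intro u v
      rw [hl₁, hl₂]
      have := hR (Sum.inr u) (Sum.inl v) (fun h => by cases h)
      simpa [CWExpr.adj, CWExpr.label, φ₁, φ₂] using this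
    have hg' := hg
    rw [hrange] at hg'
    have hg₁ : Good G (Set.range φ₁) lab := by
      intro x hx x' hx' hxx y hy hadj
      by_cases hy2 : y ∈ Set.range φ₂
      · obtain ⟨x, rfl⟩ := hx
        obtain ⟨x', rfl⟩ := hx'
        obtain ⟨y, rfl⟩ := hy2
        rw [hcr] at hadj ⊢
        rwa [← hxx]
      · exact hg' x (Or.inl hx) x' (Or.inl hx') hxx y (fun h => h.elim hy hy2) hadj
    have hg₂ : Good G (Set.range φ₂) lab := by
      intro x hx x' hx' hxx y hy hadj
      by_cases hy2 : y ∈ Set.range φ₁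
      · obtain ⟨x, rfl⟩ := hx
        obtain ⟨x', rfl⟩ := hx'
        obtain ⟨y, rfl⟩ := hy2
        rw [hcr'] at hadj ⊢
        rwa [← hxx]
      · exact hg' x (Or.inr hx) x' (Or.inr hx') hxx y (fun h => h.elim hy2 hy) hadj
    rw [hrange]
    refine Dec.union _ _ lab hd (ih₁ φ₁ ?_ lab hl₁ R ?_ hg₁) (ih₂ φ₂ ?_ lab hl₂ R ?_ hg₂) hg₁ hg₂ hg'
    · exact fun a b h => Sum.inl_injective (hφ h)
    · intro u v huv
      exact hR (Sum.inl u) (Sum.inl v) (fun h => huv (Sum.inl_injective h))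
    · exact fun a b h => Sum.inr_injective (hφ h)
    · intro u v huv
      exact hR (Sum.inr u) (Sum.inr v) (fun h => huv (Sum.inr_injective h))
  | addEdges i j hij e ih =>
    intro φ hφ lab hlab R hR hg
    refine ih φ hφ lab hlab (fun a b => R a b ∨ (a = i ∧ b = j) ∨ (a = j ∧ b = i)) ?_ hg
    intro u v huv
    refine (hR u v huv).trans ?_
    simp only [CWExpr.adj, CWExpr.label]
    tauto
  | relabel f e ih =>
    intro φ hφ lab hlab R hR hg
    let lab₁ : V → Fin c := Function.extend φ e.label lab
    have hl₁ : ∀ u : e.verts, lab₁ (φ u) = e.label u := fun u => hφ.extend_apply _ _ _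
    have href : ∀ x ∈ Set.range φ, ∀ y ∈ Set.range φ, lab₁ x = lab₁ y → lab x = lab y := by
      rintro _ ⟨x, rfl⟩ _ ⟨y, rfl⟩ h
      rw [hlab, hlab]
      exact congrArg f ((hl₁ x).symm.trans (h.trans (hl₁ y)))
    refine Dec.coarsen _ lab₁ lab (ih φ hφ lab₁ hl₁ (fun a b => R (f a) (f b)) ?_ ?_) href hg
    · intro u v huv
      exact hR u v huv
    · intro x hx x' hx' h
      exact hg x hx x' hx' (href x hx x' hx' h)

theorem noK_of {G : SimpleGraph V} [Finite V] {s : ℕ}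
    (hss : ¬ ContainsSubgraphCopy (completeBipartiteGraph (Fin s) (Fin s)) G) : NoK G s := by
  intro A B hA hB hadj
  apply hss
  have emb : ∀ A : Set V, s ≤ A.ncard → ∃ f : Fin s → V, Function.Injective f ∧ ∀ i, f i ∈ A := by
    intro A hA
    have : Fintype A := Fintype.ofFinite _
    have hc : Fintype.card (Fin s) ≤ Fintype.card A := by
      rw [Fintype.card_fin, ← Nat.card_eq_fintype_card]
      exact hA
    obtain ⟨f⟩ := Function.Embedding.nonempty_of_card_le hc
    exact ⟨fun i => f i, fun i j h => f.injective (Subtype.ext h), fun i => (f i).2⟩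
  obtain ⟨f, hf, hfA⟩ := emb A hA
  obtain ⟨g, hg, hgB⟩ := emb B hB
  refine ⟨⟨Sum.elim f g, ?_⟩, ?_⟩
  · apply hf.sumElim hg
    intro i j h
    have := hadj _ (hfA i) _ (hgB j)
    rw [h] at this
    exact G.loopless.irrefl _ this
  · rintro (u | u) (v | v) h
    · simp at h
    · exact hadj _ (hfA u) _ (hgB v)
    · exact (hadj _ (hfA v) _ (hgB u)).symm
    · simp at h

theorem nat_bound {G : SimpleGraph V} [Finite V] {c s n ℓ : ℕ} (hs : 2 ≤ s)
    (hcw : CliquewidthLE G c)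
    (hss : ¬ ContainsSubgraphCopy (completeBipartiteGraph (Fin s) (Fin s)) G)
    (hpath : HasPathOfOrder G n)
    (hℓ : ∀ m, Nonempty (pathGraph m ↪g G) → m ≤ ℓ) :
    0 < c ∧ n ≤ 2 ^ ((ℓ + 1) ^ (3 * (c * (s - 1)))) := by
  obtain ⟨u, v, p, hp, hn⟩ := hpath
  obtain ⟨e, ⟨ψ⟩⟩ := hcw
  have hc : 0 < c := lt_of_le_of_lt (Nat.zero_le _) (e.label (ψ u)).isLt
  have hK := noK_of hss
  have hr : Set.range ψ.symm = Set.univ := ψ.symm.surjective.range_eq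
  have hdec : Dec G (Set.univ : Set V) (fun x => e.label (ψ x)) := by
    rw [← hr]
    refine dec_of_expr e ψ.symm ψ.symm.injective _ ?_ (fun _ _ => False) ?_ ?_
    · intro u
      simp
    · intro u v huv
      rw [ψ.symm.map_adj_iff]
      simp [CWExpr.graph, huv]
    · intro x _ x' _ _ y hy
      rw [hr] at hy
      exact absurd (Set.mem_univ y) hy
  obtain ⟨B, r, hr, hcard, h1, -, -, h4⟩ := desc_main hs hc hK hdec p.support p.isChain_adj_support
    hp.support_nodup (fun x _ => Set.mem_univ x)
  have h5 := pathwidth_bound B r hr h1 ℓ hℓ (2 * (c * (s - 1))) p.support p.isChain_adj_support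
    hp.support_nodup (fun i => (cnt_le_ncard _ hp.support_nodup).trans (hcard i))
  refine ⟨hc, ?_⟩
  rw [Walk.length_support, hn] at h4
  calc n ≤ 2 ^ cnt {v | ∃ i, v ∈ B i} p.support := by omega
    _ ≤ 2 ^ ((ℓ + 1) ^ (2 * (c * (s - 1)))) := Nat.pow_le_pow_right (by norm_num) (by omega)
    _ ≤ _ := Nat.pow_le_pow_right (by norm_num) (Nat.pow_le_pow_right (by omega) (by omega))

theorem hasPath_one {G : SimpleGraph V} (v : V) : Nonempty (pathGraph 1 ↪g G) := by
  refine ⟨⟨⟨fun _ => v, fun i j _ => Subsingleton.elim _ _⟩, ?_⟩⟩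
  intro i j
  have : i = j := Subsingleton.elim _ _
  subst this
  simp

end IndPath

theorem stmt5 (k s : ℕ) (hk : 0 < k) (hs : 0 < s)
    {V : Type} [Fintype V] (G : SimpleGraph V) (n : ℕ)
    (hcw : CliquewidthLE G (k - 1))
    (hss : ¬ ContainsSubgraphCopy (completeBipartiteGraph (Fin s) (Fin s)) G)
    (hpath : HasPathOfOrder G n) :
    HasInducedPathGE G
      ((1 / 4 : ℝ) * Real.logb 2 n ^ ((1 : ℝ) / (3 * ((k : ℝ) - 1) * ((s : ℝ) - 1)))) := by
  have hv : Nonempty V := ⟨hpath.choose⟩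
  obtain ⟨v⟩ := hv
  have hone := IndPath.hasPath_one (G := G) v
  rcases Nat.lt_or_ge s 2 with hs2 | hs2
  · have : s = 1 := by omega
    subst this
    refine ⟨1, ?_, hone⟩
    norm_num
  by_contra hcon
  set r := (1 / 4 : ℝ) * Real.logb 2 n ^ ((1 : ℝ) / (3 * ((k : ℝ) - 1) * ((s : ℝ) - 1))) with hr
  have hlt : ∀ m : ℕ, Nonempty (pathGraph m ↪g G) → (m : ℝ) < r := by
    intro m hm
    by_contra hc
    exact hcon ⟨m, not_lt.1 hc, hm⟩
  have hr1 : (1 : ℝ) < r := by simpa using hlt 1 hone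
  have hℓ : ∀ m, Nonempty (pathGraph m ↪g G) → m ≤ ⌊r⌋₊ := fun m hm => Nat.le_floor (hlt m hm).le
  obtain ⟨hc, hb⟩ := IndPath.nat_bound hs2 hcw hss hpath hℓ
  have hfl : (⌊r⌋₊ : ℝ) ≤ r := Nat.floor_le (by linarith)
  have hn : 0 < n := by
    obtain ⟨_, _, p, _, h⟩ := hpath
    omega
  set t : ℕ := 3 * ((k - 1) * (s - 1)) with ht
  have ht0 : 0 < t := by
    have : 0 < (k - 1) * (s - 1) := Nat.mul_pos hc (by omega)
    omega
  have hexp : (3 * ((k : ℝ) - 1) * ((s : ℝ) - 1)) = (t : ℝ) := by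
    rw [ht]
    push_cast [Nat.cast_sub (show 1 ≤ k by omega), Nat.cast_sub (show 1 ≤ s by omega)]
    ring
  rw [hexp] at hr
  have hlog0 : 0 ≤ Real.logb 2 n := Real.logb_nonneg (by norm_num) (by exact_mod_cast hn)
  have hlog : Real.logb 2 n ≤ ((⌊r⌋₊ : ℝ) + 1) ^ t := by
    rw [Real.logb_le_iff_le_rpow (by norm_num) (by exact_mod_cast hn)]
    have : (n : ℝ) ≤ ((2 ^ ((⌊r⌋₊ + 1) ^ t) : ℕ) : ℝ) := by exact_mod_cast hb
    refine this.trans (le_of_eq ?_)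
    rw [show ((⌊r⌋₊ : ℝ) + 1) ^ t = (((⌊r⌋₊ + 1) ^ t : ℕ) : ℝ) by push_cast; ring, Real.rpow_natCast]
    push_cast
    rfl
  have hroot : Real.logb 2 n ^ ((1 : ℝ) / (t : ℝ)) ≤ (⌊r⌋₊ : ℝ) + 1 := by
    calc _ ≤ (((⌊r⌋₊ : ℝ) + 1) ^ t) ^ ((1 : ℝ) / (t : ℝ)) :=
          Real.rpow_le_rpow hlog0 hlog (by positivity)
      _ = _ := by
          rw [one_div]
          exact Real.pow_rpow_inv_natCast (by positivity) (by omega)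
  linarith
end

section
/- Let 𝒢 be a hereditary class of graphs that neither contains all complete graphs nor all complete bipartite graphs. If 𝒢 is well-quasi-ordered by the induced subgraph relation, then there is a constant d ∈ (0,1) such that every graph G ∈ 𝒢 that has a path of order n also has an induced path of order at least n^d. -/
open SimpleGraph Real

namespace IP6

/-- `G` restricted to a vertex set (kept on the same type). -/
def gS {V : Type*} (G : SimpleGraph V) (S : Set V) : SimpleGraph V where
  Adj u v := G.Adj u v ∧ u ∈ S ∧ v ∈ S
  symm := ⟨fun _ _ h => ⟨h.1.symm, h.2.2, h.2.1⟩⟩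
  loopless := ⟨fun _ h => G.loopless.irrefl _ h.1⟩

/-- `S` is connected in `G` (possibly empty). -/
def Cn {V : Type*} (G : SimpleGraph V) (S : Set V) : Prop :=
  ∀ u ∈ S, ∀ v ∈ S, (gS G S).Reachable u v

/-- `x` has a neighbour in `S`. -/
def Tch {V : Type*} (G : SimpleGraph V) (x : V) (S : Set V) : Prop := ∃ y ∈ S, G.Adj x y

/-- `w 0, …, w k` is an induced path. -/
def IndP {V : Type*} (G : SimpleGraph V) (w : ℕ → V) (k : ℕ) : Prop :=
  ∀ i j, i ≤ k → j ≤ k → (w i = w j → i = j) ∧ (G.Adj (w i) (w j) ↔ i + 1 = j ∨ j + 1 = i)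

/-- `c 0, …, c (n-1)` is an induced cycle. -/
def IndHole {V : Type*} (G : SimpleGraph V) (c : ℕ → V) (n : ℕ) : Prop :=
  ∀ i j, i < n → j < n → (c i = c j → i = j) ∧
    (G.Adj (c i) (c j) ↔ i + 1 = j ∨ j + 1 = i ∨ (i = 0 ∧ j + 1 = n) ∨ (j = 0 ∧ i + 1 = n))

def NoHole {V : Type*} (G : SimpleGraph V) (L : ℕ) : Prop :=
  ∀ n c, L ≤ n → 3 ≤ n → ¬ IndHole G c n

def NoBic {V : Type*} (G : SimpleGraph V) (q : ℕ) : Prop :=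
  ∀ A B : Finset V, A.card = q → B.card = q → ¬ ∀ a ∈ A, ∀ b ∈ B, G.Adj a b

/-- a long path with a fork at either end. -/
def HConf {V : Type*} (G : SimpleGraph V) (k : ℕ) : Prop :=
  ∃ (w : ℕ → V) (a b c d : V), IndP G w k ∧ a ≠ b ∧ c ≠ d ∧
    (∀ x, x = a ∨ x = b → G.Adj x (w 0) ∧ (∀ j ≤ k, w j ≠ x) ∧
      (∀ j ≤ k, 0 < j → ¬ G.Adj x (w j))) ∧
    (∀ x, x = c ∨ x = d → G.Adj x (w k) ∧ (∀ j ≤ k, w j ≠ x) ∧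
      (∀ j < k, ¬ G.Adj x (w j))) ∧
    (∀ x y, x = a ∨ x = b → y = c ∨ y = d → x ≠ y ∧ ¬ G.Adj x y)

variable {V : Type*} {G : SimpleGraph V}

theorem gS_reach_mem {S : Set V} {u v : V} (h : (gS G S).Reachable u v) (hu : u ∈ S) : v ∈ S := by
  obtain ⟨p⟩ := h
  induction p with
  | nil => exact hu
  | cons h p ih => exact ih h.2.2

theorem gS_mono {S T : Set V} (h : S ⊆ T) : gS G S ≤ gS G T :=
  fun _ _ h' => ⟨h'.1, h h'.2.1, h h'.2.2⟩

theorem exists_indP {S : Set V} {u v : V} (h : (gS G S).Reachable u v) (hu : u ∈ S) :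
    ∃ k w, IndP G w k ∧ w 0 = u ∧ w k = v ∧ ∀ i ≤ k, w i ∈ S := by
  obtain ⟨p, hp⟩ := h.exists_walk_length_eq_dist
  have key : ∀ i j, i < j → j ≤ p.length →
      (p.getVert i ≠ p.getVert j) ∧ (G.Adj (p.getVert i) (p.getVert j) → i + 1 = j) := by
    intro i j hij hj
    have hmem : ∀ i, p.getVert i ∈ S := fun i => gS_reach_mem ⟨p.take i⟩ hu
    have h1 : (p.take i).length = i := by rw [Walk.take_length]; omega
    have h2 : (p.drop j).length = p.length - j := by rw [Walk.drop_length]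
    constructor
    · intro he
      have := dist_le ((p.take i).append ((p.drop j).copy he.symm rfl))
      rw [Walk.length_append, Walk.length_copy] at this
      omega
    · intro ha
      have ha' : (gS G S).Adj (p.getVert i) (p.getVert j) := ⟨ha, hmem i, hmem j⟩
      have := dist_le ((p.take i).append (Walk.cons ha' (p.drop j)))
      rw [Walk.length_append, Walk.length_cons] at this
      omega
  refine ⟨p.length, p.getVert, ?_, by simp, by simp, fun i _ => gS_reach_mem ⟨p.take i⟩ hu⟩
  intro i j hi hj
  have hadj : ∀ i, i < p.length → G.Adj (p.getVert i) (p.getVert (i+1)) :=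
    fun i hi => (p.adj_getVert_succ hi).1
  rcases lt_trichotomy i j with hlt | rfl | hlt
  · obtain ⟨k1, k2⟩ := key i j hlt hj
    refine ⟨fun h => absurd h k1, fun h => Or.inl (k2 h), ?_⟩
    rintro (rfl | h)
    · exact hadj _ (by omega)
    · omega
  · simp
  · obtain ⟨k1, k2⟩ := key j i hlt hi
    refine ⟨fun h => absurd h.symm k1, fun h => Or.inr (k2 h.symm), ?_⟩
    rintro (h | rfl)
    · omega
    · exact (hadj _ (by omega)).symm

theorem exists_hole {w : ℕ → V} {k : ℕ} (hw : IndP G w k) (hk : 2 ≤ k) {R : Set V}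
    (hR : Cn G R) (hdis : ∀ j ≤ k, w j ∉ R) (h0 : Tch G (w 0) R) (h1 : Tch G (w k) R)
    (hn : ∀ j, 0 < j → j < k → ¬ Tch G (w j) R) :
    ∃ n c, k ≤ n ∧ 3 ≤ n ∧ IndHole G c n := by
  classical
  set S : Set V := insert (w 0) (insert (w k) R) with hS
  have hreach : (gS G S).Reachable (w k) (w 0) := by
    obtain ⟨y, hy, hy'⟩ := h0
    obtain ⟨z, hz, hz'⟩ := h1
    have a1 : (gS G S).Reachable (w k) z :=
      Adj.reachable ⟨hz', by simp [hS], by simp [hS, hz]⟩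
    have a2 : (gS G S).Reachable z y := (hR z hz y hy).mono (gS_mono (by
      intro x hx; simp [hS, hx]))
    have a3 : (gS G S).Reachable y (w 0) :=
      Adj.reachable ⟨hy'.symm, by simp [hS, hy], by simp [hS]⟩
    exact (a1.trans a2).trans a3
  obtain ⟨k', u, hu, hu0, huk, huS⟩ := exists_indP hreach (by simp [hS])
  have hne : w k ≠ w 0 := fun h => by have := (hw k 0 le_rfl (by omega)).1 h; omega
  have hk'0 : k' ≠ 0 := by
    rintro rfl
    exact hne (hu0.symm.trans huk)
  have huR : ∀ j, 0 < j → j < k' → u j ∈ R := by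
    intro j h1 h2
    have := huS j h2.le
    simp only [hS, Set.mem_insert_iff] at this
    rcases this with h | h | h
    · have := (hu j k' h2.le le_rfl).1 (h.trans huk.symm); omega
    · have := (hu j 0 h2.le (by omega)).1 (h.trans hu0.symm); omega
    · exact h
  have hk'1 : k' ≠ 1 := by
    rintro rfl
    have := (hu 0 1 (by omega) le_rfl).2.2 (by omega)
    rw [hu0, huk] at this
    have := (hw k 0 le_rfl (by omega)).2.1 this
    omega
  have hx : ∀ i j, i ≤ k → 0 < j → j < k' → w i ≠ u j ∧
      (G.Adj (w i) (u j) ↔ (i = k ∧ j = 1) ∨ (i = 0 ∧ j + 1 = k')) := by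
    intro i j hi hj hjk
    refine ⟨fun h => hdis i hi (h ▸ huR j hj hjk), ?_⟩
    by_cases hik : i = k
    · subst hik
      rw [← hu0, (hu 0 j (by omega) hjk.le).2]
      omega
    · by_cases hi0 : i = 0
      · subst hi0
        rw [← huk, (hu k' j (by omega) hjk.le).2]
        omega
      · constructor
        · intro h
          exact absurd ⟨u j, huR j hj hjk, h⟩ (hn i (by omega) (by omega))
        · omega
  refine ⟨k + k', fun i => if i ≤ k then w i else u (i - k), by omega, by omega, ?_⟩
  intro i j hi hj
  by_cases h1 : i ≤ k <;> by_cases h2 : j ≤ k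
  · simp only [h1, h2, if_true]
    refine ⟨(hw i j h1 h2).1, ?_⟩
    rw [(hw i j h1 h2).2]
    omega
  · simp only [h1, h2, if_true, if_false]
    obtain ⟨e1, e2⟩ := hx i (j - k) h1 (by omega) (by omega)
    refine ⟨fun h => absurd h e1, ?_⟩
    rw [e2]; omega
  · simp only [h1, h2, if_true, if_false]
    obtain ⟨e1, e2⟩ := hx j (i - k) h2 (by omega) (by omega)
    refine ⟨fun h => absurd h.symm e1, ?_⟩
    rw [G.adj_comm, e2]; omega
  · simp only [h1, h2, if_false]
    obtain ⟨e1, e2⟩ := hu (i - k) (j - k) (by omega) (by omega)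
    refine ⟨fun h => by have := e1 h; omega, ?_⟩
    rw [e2]; omega

theorem IndP.mono {w : ℕ → V} {k j : ℕ} (hw : IndP G w k) (h : j ≤ k) : IndP G w j :=
  fun a b ha hb => hw a b (ha.trans h) (hb.trans h)

/-- a connected set touching the start of an induced path, and touching it again, touches it again early. -/
theorem touch_early {L : ℕ} (hL : 2 ≤ L) (hG : NoHole G L) {w : ℕ → V} {k : ℕ} (hw : IndP G w k)
    {R : Set V} (hR : Cn G R) (hdis : ∀ j ≤ k, w j ∉ R) (h0 : Tch G (w 0) R)
    (h1 : ∃ j, 0 < j ∧ j ≤ k ∧ Tch G (w j) R) : ∃ j, 0 < j ∧ j ≤ k ∧ j < L ∧ Tch G (w j) R := by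
  classical
  have hs := Nat.find_spec h1
  have hm := fun m => @Nat.find_min _ _ h1 m
  set j := Nat.find h1
  by_cases hjL : j < L
  · exact ⟨j, hs.1, hs.2.1, hjL, hs.2.2⟩
  · exfalso
    obtain ⟨n, c, hn, hn3, hc⟩ := exists_hole (hw.mono hs.2.1) (by omega) hR
      (fun i hi => hdis i (hi.trans hs.2.1)) h0 hs.2.2
      (fun i hi hij ht => hm i hij ⟨hi, by omega, ht⟩)
    exact hG n c (by omega) hn3 hc

/-- segments of induced paths are connected. -/
theorem IndP.cn_seg {w : ℕ → V} {k : ℕ} (hw : IndP G w k) {a b : ℕ} (hb : b ≤ k + 1) :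
    Cn G (w '' Set.Ico a b) := by
  have key : ∀ j, a ≤ j → j < b → (gS G (w '' Set.Ico a b)).Reachable (w a) (w j) := by
    intro j haj
    induction j, haj using Nat.le_induction with
    | base => intro _; exact Reachable.refl _
    | succ j haj ih =>
      intro hj
      refine (ih (by omega)).trans (Adj.reachable ⟨(hw j (j+1) (by omega) (by omega)).2.2 (by omega),
        ⟨j, ⟨haj, by omega⟩, rfl⟩, ⟨j+1, ⟨by omega, hj⟩, rfl⟩⟩)
  rintro _ ⟨i, hi, rfl⟩ _ ⟨j, hj, rfl⟩
  exact (key i hi.1 hi.2).symm.trans (key j hj.1 hj.2)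

end IP6

namespace IP6
variable {V : Type*} {G : SimpleGraph V}

theorem reach_set {D I Z : Set V} (hD : Cn G D) (hI : I ⊆ D) (hne : I.Nonempty) (hc : Cn G I)
    (hIZ : ∀ x ∈ I, x ∉ Z) (hDZ : ∃ x ∈ D, x ∈ Z) :
    ∃ E z, I ⊆ E ∧ E ⊆ D ∧ Cn G E ∧ (∀ x ∈ E, x ∉ Z) ∧ z ∈ D ∧ z ∈ Z ∧ Tch G z E := by
  obtain ⟨i0, hi0⟩ := hne
  set E : Set V := {v | (gS G (D \ Z)).Reachable i0 v} with hE
  have hi0' : i0 ∈ D \ Z := ⟨hI hi0, hIZ _ hi0⟩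
  have hED : E ⊆ D \ Z := fun v hv => gS_reach_mem hv hi0'
  have hIE : I ⊆ E := fun v hv => (hc i0 hi0 v hv).mono (gS_mono fun x hx => ⟨hI hx, hIZ x hx⟩)
  have hEi : ∀ v ∈ E, (gS G E).Reachable i0 v := by
    intro v hv
    have hv' := hv
    rw [hE, Set.mem_ofPred_eq, reachable_iff_reflTransGen] at hv'
    induction hv' with
    | refl => exact Reachable.refl _
    | @tail b c hb hbc ih =>
      have hbE : b ∈ E := (reachable_iff_reflTransGen _ _).2 hb
      exact (ih hbE).trans (Adj.reachable ⟨hbc.1, hbE, hv⟩)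
  have hz : ∃ z, z ∈ D ∧ z ∈ Z ∧ Tch G z E := by
    by_contra hno
    have : ∀ v, (gS G D).Reachable i0 v → v ∈ E := by
      intro v hv
      rw [reachable_iff_reflTransGen] at hv
      induction hv with
      | refl => exact hIE hi0
      | @tail b c hb hbc ih =>
        by_cases hcZ : c ∈ Z
        · exact absurd ⟨c, hbc.2.2, hcZ, b, ih, hbc.1.symm⟩ hno
        · have : (gS G (D \ Z)).Reachable i0 b := ih
          exact this.trans (Adj.reachable ⟨hbc.1, hED ih, hbc.2.2, hcZ⟩)
    obtain ⟨x, hx, hxZ⟩ := hDZ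
    exact (hED (this x (hD _ (hI hi0) _ hx))).2 hxZ
  obtain ⟨z, h1, h2, h3⟩ := hz
  exact ⟨E, z, hIE, fun x hx => (hED hx).1, fun u hu v hv => (hEi u hu).symm.trans (hEi v hv),
    fun x hx => (hED hx).2, h1, h2, h3⟩

def pushv (w : ℕ → V) (k : ℕ) (z : V) : ℕ → V := fun i => if i ≤ k then w i else z

theorem pushv_le (w : ℕ → V) {k i : ℕ} (z : V) (h : i ≤ k) : pushv w k z i = w i := by simp [pushv, h]
theorem pushv_succ (w : ℕ → V) (k : ℕ) (z : V) : pushv w k z (k+1) = z := by simp [pushv]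

theorem IndP.push {w : ℕ → V} {k : ℕ} (hw : IndP G w k) {z : V} (h1 : G.Adj (w k) z)
    (h2 : ∀ j < k, ¬ G.Adj (w j) z) (h3 : ∀ j ≤ k, w j ≠ z) : IndP G (pushv w k z) (k+1) := by
  have h4 : ∀ j ≤ k, (G.Adj (w j) z ↔ j = k) := by
    intro j hj
    constructor
    · intro h; by_contra hne; exact h2 j (by omega) h
    · rintro rfl; exact h1
  intro i j hi hj
  rcases Nat.lt_or_ge k i with hi' | hi' <;> rcases Nat.lt_or_ge k j with hj' | hj'
  · obtain rfl : i = k + 1 := by omega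
    obtain rfl : j = k + 1 := by omega
    simp
  · obtain rfl : i = k + 1 := by omega
    rw [pushv_succ, pushv_le _ _ hj', G.adj_comm, h4 j hj']
    exact ⟨fun h => absurd h.symm (h3 j hj'), by omega⟩
  · obtain rfl : j = k + 1 := by omega
    rw [pushv_succ, pushv_le _ _ hi', h4 i hi']
    exact ⟨fun h => absurd h (h3 i hi'), by omega⟩
  · rw [pushv_le _ _ hi', pushv_le _ _ hj']
    exact hw i j hi' hj'

theorem IndP.zero (v : V) : IndP G (fun _ => v) 0 := by
  intro i j hi hj
  obtain rfl : i = 0 := by omega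
  obtain rfl : j = 0 := by omega
  simp

/-- an induced path with a fork at its start, whose last vertex touches the connected set `D`. -/
structure St (G : SimpleGraph V) (w : ℕ → V) (k : ℕ) (a b : V) (D : Set V) : Prop where
  ip : IndP G w k
  ne : a ≠ b
  leaf : ∀ x, x = a ∨ x = b → G.Adj x (w 0) ∧ (∀ j ≤ k, w j ≠ x) ∧
      (∀ j ≤ k, 0 < j → ¬ G.Adj x (w j))
  cn : Cn G D
  wD : ∀ j ≤ k, w j ∉ D
  lD : ∀ x, x = a ∨ x = b → x ∉ D ∧ ¬ Tch G x D
  nt : ∀ j < k, ¬ Tch G (w j) D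
  t : Tch G (w k) D

theorem St.push {w : ℕ → V} {k : ℕ} {a b : V} {D E : Set V} (st : St G w k a b D) {z : V}
    (hz : z ∈ D) (hzk : G.Adj (w k) z) (hE : E ⊆ D) (hcn : Cn G E) (hzE : z ∉ E)
    (hk : ¬ Tch G (w k) E) (ht : Tch G z E) : St G (pushv w k z) (k+1) a b E where
  ip := st.ip.push hzk (fun j hj h => st.nt j hj ⟨z, hz, h⟩) (fun j hj h => st.wD j hj (h ▸ hz))
  ne := st.ne
  leaf := by
    intro x hx
    obtain ⟨h1, h2, h3⟩ := st.leaf x hx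
    obtain ⟨h4, h5⟩ := st.lD x hx
    refine ⟨by rwa [pushv_le _ _ (by omega)], ?_, ?_⟩
    · intro j hj
      rcases Nat.lt_or_ge k j with h | h
      · obtain rfl : j = k + 1 := by omega
        rw [pushv_succ]; rintro rfl; exact h4 hz
      · rw [pushv_le _ _ h]; exact h2 j h
    · intro j hj hj0
      rcases Nat.lt_or_ge k j with h | h
      · obtain rfl : j = k + 1 := by omega
        rw [pushv_succ]; exact fun h => h5 ⟨z, hz, h⟩
      · rw [pushv_le _ _ h]; exact h3 j h hj0
  cn := hcn
  wD := by
    intro j hj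
    rcases Nat.lt_or_ge k j with h | h
    · obtain rfl : j = k + 1 := by omega
      rwa [pushv_succ]
    · rw [pushv_le _ _ h]; exact fun h' => st.wD j h (hE h')
  lD := by
    intro x hx
    obtain ⟨h4, h5⟩ := st.lD x hx
    exact ⟨fun h => h4 (hE h), fun ⟨y, hy, h⟩ => h5 ⟨y, hE hy, h⟩⟩
  nt := by
    intro j hj
    rw [pushv_le _ _ (by omega)]
    rcases Nat.lt_or_ge j k with h | h
    · rintro ⟨y, hy, h'⟩; exact st.nt j h ⟨y, hE hy, h'⟩
    · obtain rfl : j = k := by omega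
      exact hk
  t := by rwa [pushv_succ]

theorem St.advance {w : ℕ → V} {k : ℕ} {a b : V} {D I : Set V} (st : St G w k a b D)
    (hI : I ⊆ D) (hne : I.Nonempty) (hc : Cn G I) (hnt : ¬ Tch G (w k) I) :
    ∃ w' D', St G w' (k+1) a b D' ∧ I ⊆ D' ∧ D' ⊂ D ∧ w' (k+1) ∈ D := by
  obtain ⟨E, z, h1, h2, h3, h4, h5, h6, h7⟩ := reach_set (Z := {x | G.Adj (w k) x}) st.cn hI hne hc
    (fun x hx h => hnt ⟨x, hx, h⟩) (by obtain ⟨y, hy, h⟩ := st.t; exact ⟨y, hy, h⟩)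
  have hzE : z ∉ E := fun h => h4 z h h6
  exact ⟨_, E, st.push h5 h6 h2 h3 hzE (fun ⟨y, hy, h⟩ => h4 y hy h) h7, h1,
    ⟨h2, fun h => hzE (h h5)⟩, by rwa [pushv_succ]⟩

/-- A star with three leaves (not nec. induced). -/
structure Claw (G : SimpleGraph V) (c x y z : V) : Prop where
  cx : G.Adj c x
  cy : G.Adj c y
  cz : G.Adj c z
  xy : x ≠ y
  xz : x ≠ z
  yz : y ≠ z

def clawSet (c x y z : V) : Set V := {c, x, y, z}

theorem Claw.cn {c x y z : V} (h : Claw G c x y z) : Cn G (clawSet c x y z) := by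
  have key : ∀ u ∈ clawSet c x y z, (gS G (clawSet c x y z)).Reachable c u := by
    intro u hu
    have hc : c ∈ clawSet c x y z := by simp [clawSet]
    have hu' := hu
    simp only [clawSet, Set.mem_insert_iff, Set.mem_singleton_iff] at hu'
    rcases hu' with rfl | rfl | rfl | rfl
    · exact Reachable.refl _
    · exact Adj.reachable ⟨h.cx, hc, hu⟩
    · exact Adj.reachable ⟨h.cy, hc, hu⟩
    · exact Adj.reachable ⟨h.cz, hc, hu⟩
  exact fun u hu v hv => (key u hu).symm.trans (key v hv)

theorem Claw.exit {c x y z v : V} (h : Claw G c x y z) (hv : v ∉ clawSet c x y z)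
    (ht : Tch G v (clawSet c x y z)) :
    ∃ a b, a ≠ b ∧ a ∈ clawSet c x y z ∧ b ∈ clawSet c x y z ∧
      ((G.Adj v a ∧ G.Adj v b) ∨
       (¬ G.Adj v a ∧ ¬ G.Adj v b ∧ ∃ s ∈ clawSet c x y z, G.Adj v s ∧ G.Adj s a ∧ G.Adj s b) ∨
       (¬ G.Adj v a ∧ ¬ G.Adj v b ∧ ∃ s ∈ clawSet c x y z, ∃ r ∈ clawSet c x y z, G.Adj v s ∧
          G.Adj s r ∧ ¬ G.Adj v r ∧ G.Adj r a ∧ G.Adj r b ∧ ¬ G.Adj s a ∧ ¬ G.Adj s b)) := by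
  by_cases h2 : ∃ a b, a ≠ b ∧ a ∈ clawSet c x y z ∧ b ∈ clawSet c x y z ∧ G.Adj v a ∧ G.Adj v b
  · obtain ⟨a, b, h1, h2, h3, h4⟩ := h2
    exact ⟨a, b, h1, h2, h3, Or.inl h4⟩
  · have huniq : ∀ a ∈ clawSet c x y z, ∀ b ∈ clawSet c x y z, G.Adj v a → a ≠ b → ¬ G.Adj v b :=
      fun a ha b hb h1 h3 h4 => h2 ⟨a, b, h3, ha, hb, h1, h4⟩
    obtain ⟨s, hs, hvs⟩ := ht
    have mc : c ∈ clawSet c x y z := by simp [clawSet]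
    have mx : x ∈ clawSet c x y z := by simp [clawSet]
    have my : y ∈ clawSet c x y z := by simp [clawSet]
    have mz : z ∈ clawSet c x y z := by simp [clawSet]
    -- the case where the unique neighbour is a leaf
    have leafcase : ∀ x' y' z', x' ∈ clawSet c x y z → y' ∈ clawSet c x y z →
        z' ∈ clawSet c x y z → x' ≠ y' → x' ≠ z' → y' ≠ z' → G.Adj c x' → G.Adj c y' → G.Adj c z' →
        G.Adj v x' → ∃ a b, a ≠ b ∧ a ∈ clawSet c x y z ∧ b ∈ clawSet c x y z ∧
      ((G.Adj v a ∧ G.Adj v b) ∨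
       (¬ G.Adj v a ∧ ¬ G.Adj v b ∧ ∃ s ∈ clawSet c x y z, G.Adj v s ∧ G.Adj s a ∧ G.Adj s b) ∨
       (¬ G.Adj v a ∧ ¬ G.Adj v b ∧ ∃ s ∈ clawSet c x y z, ∃ r ∈ clawSet c x y z, G.Adj v s ∧
          G.Adj s r ∧ ¬ G.Adj v r ∧ G.Adj r a ∧ G.Adj r b ∧ ¬ G.Adj s a ∧ ¬ G.Adj s b)) := by
      intro x' y' z' mx' my' mz' hxy hxz hyz hcx hcy hcz hvx
      by_cases hy : G.Adj x' y'
      · exact ⟨c, y', hcy.ne, mc, my', Or.inr (Or.inl ⟨huniq _ mx' _ mc hvx hcx.ne', huniq _ mx' _ my' hvx hxy,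
          x', mx', hvx, hcx.symm, hy⟩)⟩
      by_cases hz : G.Adj x' z'
      · exact ⟨c, z', hcz.ne, mc, mz', Or.inr (Or.inl ⟨huniq _ mx' _ mc hvx hcx.ne', huniq _ mx' _ mz' hvx hxz,
          x', mx', hvx, hcx.symm, hz⟩)⟩
      exact ⟨y', z', hyz, my', mz', Or.inr (Or.inr ⟨huniq _ mx' _ my' hvx hxy, huniq _ mx' _ mz' hvx hxz,
        x', mx', c, mc, hvx, hcx.symm, huniq _ mx' _ mc hvx hcx.ne', hcy, hcz, hy, hz⟩)⟩
    have hs' := hs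
    simp only [clawSet, Set.mem_insert_iff, Set.mem_singleton_iff] at hs'
    rcases hs' with rfl | rfl | rfl | rfl
    · exact ⟨x, y, h.xy, mx, my, Or.inr (Or.inl ⟨huniq _ mc _ mx hvs h.cx.ne, huniq _ mc _ my hvs h.cy.ne,
          s, mc, hvs, h.cx, h.cy⟩)⟩
    · exact leafcase s y z mx my mz h.xy h.xz h.yz h.cx h.cy h.cz hvs
    · exact leafcase s x z my mx mz h.xy.symm h.yz h.xz h.cy h.cx h.cz hvs
    · exact leafcase s x y mz mx my h.xz.symm h.yz.symm h.xy h.cz h.cx h.cy hvs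

/-- extend at the bottom: the last vertex touches a claw in `D`. -/
theorem St.bottom {w : ℕ → V} {k : ℕ} {a b : V} {D : Set V} (st : St G w k a b D)
    {c x y z : V} (hcl : Claw G c x y z) (hY : clawSet c x y z ⊆ D)
    (ht : Tch G (w k) (clawSet c x y z)) : ∃ k', k ≤ k' ∧ HConf G k' := by
  obtain ⟨l, m, hlm, ml, mm, h⟩ := hcl.exit (fun h => st.wD k le_rfl (hY h)) ht
  -- generic closing step
  have close : ∀ (w' : ℕ → V) (k' : ℕ) (E : Set V), St G w' k' a b E → l ∈ E → m ∈ E →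
      G.Adj (w' k') l → G.Adj (w' k') m → HConf G k' := by
    intro w' k' E st' hl hm h1 h2
    refine ⟨w', a, b, l, m, st'.ip, st'.ne, hlm, st'.leaf, ?_, ?_⟩
    · have : ∀ x ∈ E, G.Adj (w' k') x → G.Adj x (w' k') ∧ (∀ j ≤ k', w' j ≠ x) ∧
          (∀ j < k', ¬ G.Adj x (w' j)) := fun x hx hx' =>
        ⟨hx'.symm, fun j hj h => st'.wD j hj (h ▸ hx), fun j hj h => st'.nt j hj ⟨x, hx, h.symm⟩⟩
      rintro x (rfl | rfl)
      · exact this _ hl h1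
      · exact this _ hm h2
    · intro x y hx hy
      obtain ⟨h3, h4⟩ := st'.lD x hx
      have hyE : y ∈ E := by rcases hy with rfl | rfl <;> assumption
      exact ⟨fun h => h3 (h ▸ hyE), fun h => h4 ⟨y, hyE, h⟩⟩
  -- connected set made of `l`,`m` and a common neighbour is not available in general, so use a
  -- weaker pushv where the set is allowed to be disconnected
  have pairClose : ∀ (w' : ℕ → V) (k' : ℕ), IndP G w' k' → 
      (∀ x, x = a ∨ x = b → G.Adj x (w' 0) ∧ (∀ j ≤ k', w' j ≠ x) ∧
        (∀ j ≤ k', 0 < j → ¬ G.Adj x (w' j))) →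
      (∀ x, x = l ∨ x = m → G.Adj x (w' k') ∧ (∀ j ≤ k', w' j ≠ x) ∧
        (∀ j < k', ¬ G.Adj x (w' j))) → HConf G k' := by
    intro w' k' h1 h2 h3
    refine ⟨w', a, b, l, m, h1, st.ne, hlm, h2, h3, ?_⟩
    intro x y hx hy
    obtain ⟨h3, h4⟩ := st.lD x hx
    have hyE : y ∈ D := by rcases hy with rfl | rfl; exacts [hY ml, hY mm]
    exact ⟨fun h => h3 (h ▸ hyE), fun h => h4 ⟨y, hyE, h⟩⟩
  rcases h with ⟨h1, h2⟩ | ⟨h1, h2, s, ms, h3, h4, h5⟩ | ⟨h1, h2, s, ms, r, mr, h3, h4, h5, h6, h7, h8, h9⟩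
  · exact ⟨k, le_rfl, close w k D st (hY ml) (hY mm) h1 h2⟩
  · -- push `s`, with `E` the pair of leaves
    have hs := hY ms
    have ip1 := st.ip.push h3 (fun j hj h => st.nt j hj ⟨s, hs, h⟩) (fun j hj h => st.wD j hj (h ▸ hs))
    refine ⟨k+1, by omega, pairClose _ _ ip1 ?_ ?_⟩
    · intro x hx
      obtain ⟨g1, g2, g3⟩ := st.leaf x hx
      obtain ⟨g4, g5⟩ := st.lD x hx
      refine ⟨by rwa [pushv_le _ _ (by omega)], ?_, ?_⟩
      · intro j hj
        rcases Nat.lt_or_ge k j with h | h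
        · obtain rfl : j = k + 1 := by omega
          rw [pushv_succ]; rintro rfl; exact g4 hs
        · rw [pushv_le _ _ h]; exact g2 j h
      · intro j hj hj0
        rcases Nat.lt_or_ge k j with h | h
        · obtain rfl : j = k + 1 := by omega
          rw [pushv_succ]; exact fun h => g5 ⟨s, hs, h⟩
        · rw [pushv_le _ _ h]; exact g3 j h hj0
    · have : ∀ x ∈ D, G.Adj s x → ¬ G.Adj (w k) x → G.Adj x (pushv w k s (k+1)) ∧
          (∀ j ≤ k+1, pushv w k s j ≠ x) ∧ (∀ j < k+1, ¬ G.Adj x (pushv w k s j)) := by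
        intro x hx hsx hkx
        refine ⟨by rw [pushv_succ]; exact hsx.symm, ?_, ?_⟩
        · intro j hj
          rcases Nat.lt_or_ge k j with h | h
          · obtain rfl : j = k + 1 := by omega
            rw [pushv_succ]; exact hsx.ne
          · rw [pushv_le _ _ h]; rintro rfl; exact st.wD j h hx
        · intro j hj
          rw [pushv_le _ _ (by omega)]
          rcases Nat.lt_or_ge j k with h | h
          · exact fun h' => st.nt j h ⟨x, hx, h'.symm⟩
          · obtain rfl : j = k := by omega
            exact fun h' => hkx h'.symm
      rintro x (rfl | rfl)
      · exact this _ (hY ml) h4 h1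
      · exact this _ (hY mm) h5 h2
  · -- `{r, l, m}` is connected: push `s`, then `r`
    have hs := hY ms
    have hE : ({r, l, m} : Set V) ⊆ D := by
      rintro x (rfl | rfl | rfl)
      exacts [hY mr, hY ml, hY mm]
    have hEc : Cn G ({r, l, m} : Set V) := by
      have key : ∀ u ∈ ({r, l, m} : Set V), (gS G {r, l, m}).Reachable r u := by
        rintro u (rfl | rfl | rfl)
        · exact Reachable.refl _
        · exact Adj.reachable ⟨h6, by simp, by simp⟩
        · exact Adj.reachable ⟨h7, by simp, by simp⟩
      exact fun u hu v hv => (key u hu).symm.trans (key v hv)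
    have st1 := st.push (z := s) (E := {r, l, m}) hs h3 hE hEc
      (by rintro (rfl | rfl | rfl); exacts [h4.ne rfl, h1 h3, h2 h3])
      (by rintro ⟨u, (rfl | rfl | rfl), hu⟩; exacts [h5 hu, h1 hu, h2 hu])
      ⟨r, by simp, h4⟩
    have hr : r ∈ ({r, l, m} : Set V) := by simp
    have h4' : G.Adj (pushv w k s (k+1)) r := by rwa [pushv_succ]
    have ip2 := st1.ip.push h4' (fun j hj h => st1.nt j hj ⟨r, hr, h⟩)
      (fun j hj h => st1.wD j hj (h ▸ hr))
    set w1 := pushv w k s with hw1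
    refine ⟨k+1+1, by omega, pairClose _ _ ip2 ?_ ?_⟩
    · intro x hx
      obtain ⟨g1, g2, g3⟩ := st1.leaf x hx
      obtain ⟨g4, g5⟩ := st1.lD x hx
      refine ⟨by rwa [pushv_le _ _ (by omega)], ?_, ?_⟩
      · intro j hj
        rcases Nat.lt_or_ge (k+1) j with h | h
        · obtain rfl : j = k + 1 + 1 := by omega
          rw [pushv_succ]; rintro rfl; exact g4 hr
        · rw [pushv_le _ _ h]; exact g2 j h
      · intro j hj hj0
        rcases Nat.lt_or_ge (k+1) j with h | h
        · obtain rfl : j = k + 1 + 1 := by omega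
          rw [pushv_succ]; exact fun h => g5 ⟨r, hr, h⟩
        · rw [pushv_le _ _ h]; exact g3 j h hj0
    · have : ∀ x ∈ ({r, l, m} : Set V), G.Adj r x → ¬ G.Adj s x →
          G.Adj x (pushv w1 (k+1) r (k+1+1)) ∧
          (∀ j ≤ k+1+1, pushv w1 (k+1) r j ≠ x) ∧ (∀ j < k+1+1, ¬ G.Adj x (pushv w1 (k+1) r j)) := by
        intro x hx hsx hkx
        refine ⟨by rw [pushv_succ]; exact hsx.symm, ?_, ?_⟩
        · intro j hj
          rcases Nat.lt_or_ge (k+1) j with h | h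
          · obtain rfl : j = k + 1 + 1 := by omega
            rw [pushv_succ]; exact hsx.ne
          · rw [pushv_le _ _ h]; rintro rfl; exact st1.wD j h hx
        · intro j hj
          rw [pushv_le _ _ (by omega)]
          rcases Nat.lt_or_ge j (k+1) with h | h
          · exact fun h' => st1.nt j h ⟨x, hx, h'.symm⟩
          · obtain rfl : j = k + 1 := by omega
            rw [hw1, pushv_succ]
            exact fun h' => hkx h'.symm
      rintro x (rfl | rfl)
      · exact this _ (by simp) h6 h8
      · exact this _ (by simp) h7 h9

theorem St.finish {w : ℕ → V} {k : ℕ} {a b : V} {D : Set V} (st : St G w k a b D) (hfin : D.Finite)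
    {c x y z : V} (hcl : Claw G c x y z) (hY : clawSet c x y z ⊆ D) :
    ∃ k', k ≤ k' ∧ HConf G k' := by
  induction hn : D.ncard using Nat.strong_induction_on generalizing D k w with
  | _ n ih =>
    by_cases ht : Tch G (w k) (clawSet c x y z)
    · exact st.bottom hcl hY ht
    · obtain ⟨w', D', st', h1, h2, -⟩ := st.advance hY ⟨c, by simp [clawSet]⟩ hcl.cn ht
      obtain ⟨k', hk', h⟩ := ih D'.ncard (hn ▸ Set.ncard_lt_ncard h2 hfin) st' (hfin.subset h2.1) h1 rfl
      exact ⟨k', by omega, h⟩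

theorem Claw.top {D : Set V} (hD : Cn G D) {c x y z : V} (hcl : Claw G c x y z)
    (hY : clawSet c x y z ⊆ D) {I : Set V} (hI : I ⊆ D) (hne : I.Nonempty) (hc : Cn G I)
    (hd : ∀ u ∈ clawSet c x y z, u ∉ I ∧ ¬ Tch G u I) :
    ∃ w k a b E, St G w k a b E ∧ I ⊆ E ∧ E ⊆ D ∧ w k ∈ D := by
  set Y := clawSet c x y z with hYd
  obtain ⟨E, v, h1, h2, h3, h4, h5, h6, h7⟩ := reach_set (Z := Y ∪ {u | Tch G u Y}) hD hI hne hc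
    (by
      rintro u hu (h | ⟨s, hs, h⟩)
      · exact (hd u h).1 hu
      · exact (hd s hs).2 ⟨u, hu, h.symm⟩)
    ⟨c, hY (by simp [hYd, clawSet]), Or.inl (by simp [hYd, clawSet])⟩
  have hYE : ∀ u ∈ Y, u ∉ E ∧ ¬ Tch G u E := by
    intro u hu
    exact ⟨fun h => h4 u h (Or.inl hu), fun ⟨s, hs, h⟩ => h4 s hs (Or.inr ⟨u, hu, h.symm⟩)⟩
  have hvY : v ∉ Y := fun h => (hYE v h).2 h7
  have hvt : Tch G v Y := by
    rcases h6 with h | h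
    · exact absurd h hvY
    · exact h
  have hvE : v ∉ E := fun h => h4 v h (Or.inr hvt)
  obtain ⟨l, m, hlm, ml, mm, h⟩ := hcl.exit hvY hvt
  have hvne : ∀ u ∈ Y, v ≠ u := fun u hu h => hvY (h ▸ hu)
  rcases h with ⟨g1, g2⟩ | ⟨g1, g2, s, ms, g3, g4, g5⟩ | ⟨g1, g2, s, ms, r, mr, g3, g4, g5, g6, g7, g8, g9⟩
  · refine ⟨fun _ => v, 0, l, m, E, ⟨IndP.zero v, hlm, ?_, h3, fun _ _ => hvE, ?_, by omega, h7⟩,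
      h1, h2, h5⟩
    · rintro u (rfl | rfl)
      · exact ⟨g1.symm, fun _ _ => hvne _ ml, by omega⟩
      · exact ⟨g2.symm, fun _ _ => hvne _ mm, by omega⟩
    · rintro u (rfl | rfl)
      exacts [hYE _ ml, hYE _ mm]
  · have ip : IndP G (pushv (fun _ => s) 0 v) 1 := (IndP.zero s).push g3.symm (by omega)
      (fun _ _ => (hvne s ms).symm)
    have e0 : pushv (fun _ => s) 0 v 0 = s := pushv_le _ _ le_rfl
    have e1 : pushv (fun _ => s) 0 v 1 = v := pushv_succ _ _ _
    refine ⟨_, 1, l, m, E, ⟨ip, hlm, ?_, h3, ?_, ?_, ?_, ?_⟩, h1, h2, by rwa [e1]⟩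
    · have : ∀ u ∈ Y, G.Adj s u → ¬ G.Adj v u → G.Adj u (pushv (fun _ => s) 0 v 0) ∧
          (∀ j ≤ 1, pushv (fun _ => s) 0 v j ≠ u) ∧
          ∀ j ≤ 1, 0 < j → ¬ G.Adj u (pushv (fun _ => s) 0 v j) := by
        intro u hu a1 a2
        refine ⟨by rw [e0]; exact a1.symm, ?_, ?_⟩
        · intro j hj
          interval_cases j
          · rw [e0]; exact a1.ne
          · rw [e1]; exact hvne u hu
        · intro j hj hj0
          interval_cases j
          rw [e1]; exact fun h => a2 h.symm
      rintro u (rfl | rfl)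
      exacts [this _ ml g4 g1, this _ mm g5 g2]
    · intro j hj
      interval_cases j
      · rw [e0]; exact (hYE s ms).1
      · rw [e1]; exact hvE
    · rintro u (rfl | rfl)
      exacts [hYE _ ml, hYE _ mm]
    · intro j hj
      interval_cases j
      rw [e0]; exact (hYE s ms).2
    · rwa [e1]
  · have ip1 : IndP G (pushv (fun _ => r) 0 s) 1 := (IndP.zero r).push g4.symm (by omega)
      (fun _ _ => g4.ne')
    have e0 : pushv (fun _ => r) 0 s 0 = r := pushv_le _ _ le_rfl
    have e1 : pushv (fun _ => r) 0 s 1 = s := pushv_succ _ _ _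
    have ip : IndP G (pushv (pushv (fun _ => r) 0 s) 1 v) 2 := ip1.push (by rw [e1]; exact g3.symm)
      (by intro j hj; interval_cases j; rw [e0]; exact fun h => g5 h.symm)
      (by
        intro j hj; interval_cases j
        · rw [e0]; exact (hvne r mr).symm
        · rw [e1]; exact (hvne s ms).symm)
    have f0 : pushv (pushv (fun _ => r) 0 s) 1 v 0 = r := by rw [pushv_le _ _ (by omega), e0]
    have f1 : pushv (pushv (fun _ => r) 0 s) 1 v 1 = s := by rw [pushv_le _ _ (by omega), e1]
    have f2 : pushv (pushv (fun _ => r) 0 s) 1 v 2 = v := pushv_succ _ _ _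
    refine ⟨_, 2, l, m, E, ⟨ip, hlm, ?_, h3, ?_, ?_, ?_, ?_⟩, h1, h2, by rwa [f2]⟩
    · have : ∀ u ∈ Y, G.Adj r u → ¬ G.Adj v u → ¬ G.Adj s u →
          G.Adj u (pushv (pushv (fun _ => r) 0 s) 1 v 0) ∧
          (∀ j ≤ 2, pushv (pushv (fun _ => r) 0 s) 1 v j ≠ u) ∧
          ∀ j ≤ 2, 0 < j → ¬ G.Adj u (pushv (pushv (fun _ => r) 0 s) 1 v j) := by
        intro u hu a1 a2 a3
        refine ⟨by rw [f0]; exact a1.symm, ?_, ?_⟩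
        · intro j hj
          interval_cases j
          · rw [f0]; exact a1.ne
          · rw [f1]; rintro rfl; exact a2 g3
          · rw [f2]; exact hvne u hu
        · intro j hj hj0
          interval_cases j
          · rw [f1]; exact fun h => a3 h.symm
          · rw [f2]; exact fun h => a2 h.symm
      rintro u (rfl | rfl)
      exacts [this _ ml g6 g1 g8, this _ mm g7 g2 g9]
    · intro j hj
      interval_cases j
      · rw [f0]; exact (hYE r mr).1
      · rw [f1]; exact (hYE s ms).1
      · rw [f2]; exact hvE
    · rintro u (rfl | rfl)
      exacts [hYE _ ml, hYE _ mm]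
    · intro j hj
      interval_cases j
      · rw [f0]; exact (hYE r mr).2
      · rw [f1]; exact (hYE s ms).2
    · rwa [f2]

end IP6

namespace IP6

theorem ramsey (t s : ℕ) : ∃ N : ℕ, ∀ (ι : Type) (r : ι → ι → Prop), (∀ a b, r a b → r b a) →
    ∀ A : Finset ι, N ≤ A.card →
    (∃ T ⊆ A, T.card = t ∧ ∀ a ∈ T, ∀ b ∈ T, a ≠ b → r a b) ∨
    (∃ T ⊆ A, T.card = s ∧ ∀ a ∈ T, ∀ b ∈ T, a ≠ b → ¬ r a b) := by
  induction t generalizing s with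
  | zero => exact ⟨0, fun ι r _ A _ => Or.inl ⟨∅, by simp, by simp, by simp⟩⟩
  | succ t iht =>
    induction s with
    | zero => exact ⟨0, fun ι r _ A _ => Or.inr ⟨∅, by simp, by simp, by simp⟩⟩
    | succ s ihs =>
      obtain ⟨N1, h1⟩ := iht (s+1)
      obtain ⟨N2, h2⟩ := ihs
      refine ⟨N1 + N2 + 1, fun ι r hr A hA => ?_⟩
      classical
      obtain ⟨v, hv⟩ : A.Nonempty := Finset.card_pos.1 (by omega)
      have hc := Finset.card_filter_add_card_filter_not (s := A.erase v) (fun x => r v x)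
      rw [Finset.card_erase_of_mem hv] at hc
      have hsub : ∀ (p : ι → Prop) [DecidablePred p], (A.erase v).filter p ⊆ A := fun p _ =>
        (Finset.filter_subset _ _).trans (Finset.erase_subset _ _)
      rcases Nat.lt_or_ge ((A.erase v).filter (fun x => r v x)).card N1 with hlt | hge
      · rcases h2 ι r hr ((A.erase v).filter (fun x => ¬ r v x)) (by omega) with ⟨T, hT, hTc, hTr⟩ | ⟨T, hT, hTc, hTr⟩
        · exact Or.inl ⟨T, hT.trans (hsub _), hTc, hTr⟩
        · have hm : ∀ x ∈ T, x ≠ v ∧ ¬ r v x := by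
            intro x hx
            have := hT hx
            simp only [Finset.mem_filter, Finset.mem_erase] at this
            exact ⟨this.1.1, this.2⟩
          refine Or.inr ⟨insert v T, Finset.insert_subset hv (hT.trans (hsub _)), ?_, ?_⟩
          · rw [Finset.card_insert_of_notMem (fun h => (hm v h).1 rfl), hTc]
          · intro a ha b hb hab
            rcases Finset.mem_insert.1 ha with rfl | ha1 <;> rcases Finset.mem_insert.1 hb with rfl | hb1
            · exact absurd rfl hab
            · exact (hm b hb1).2
            · exact fun h => (hm a ha1).2 (hr _ _ h)
            · exact hTr a ha1 b hb1 hab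
      · rcases h1 ι r hr ((A.erase v).filter (fun x => r v x)) hge with ⟨T, hT, hTc, hTr⟩ | ⟨T, hT, hTc, hTr⟩
        · have hm : ∀ x ∈ T, x ≠ v ∧ r v x := by
            intro x hx
            have := hT hx
            simp only [Finset.mem_filter, Finset.mem_erase] at this
            exact ⟨this.1.1, this.2⟩
          refine Or.inl ⟨insert v T, Finset.insert_subset hv (hT.trans (hsub _)), ?_, ?_⟩
          · rw [Finset.card_insert_of_notMem (fun h => (hm v h).1 rfl), hTc]
          · intro a ha b hb hab
            rcases Finset.mem_insert.1 ha with rfl | ha1 <;> rcases Finset.mem_insert.1 hb with rfl | hb1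
            · exact absurd rfl hab
            · exact (hm b hb1).2
            · exact hr _ _ (hm a ha1).2
            · exact hTr a ha1 b hb1 hab
        · exact Or.inr ⟨T, hT.trans (hsub _), hTc, hTr⟩

/-- many pairwise touching disjoint bounded sets give a large biclique. -/
theorem blemma (κ : Type) [Fintype κ] (q : ℕ) : ∃ N : ℕ, ∀ (V : Type) (G : SimpleGraph V),
    NoBic G q → ∀ (ι : Type) (C : Finset ι) (b : ι → κ → V), N ≤ C.card →
    (∀ i ∈ C, ∀ i' ∈ C, i ≠ i' → ∀ α β, b i α ≠ b i' β) →
    ¬ (∀ i ∈ C, ∀ i' ∈ C, i ≠ i' → ∃ α β, G.Adj (b i α) (b i' β)) := by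
  classical
  set d := Fintype.card (Option (κ × κ)) with hd
  refine ⟨d * q + d ^ (d * q) * q, fun V G hq ι C b hC hdis hadj => ?_⟩
  obtain ⟨C', hC', hC'c⟩ := Finset.exists_subset_card_eq (s := C) (n := d * q) (by omega)
  have hC2 : d ^ (d * q) * q ≤ (C \ C').card := by
    rw [Finset.card_sdiff_of_subset hC']; omega
  let col : ι → ι → Option (κ × κ) := fun i i' =>
    if h : ∃ αβ : κ × κ, G.Adj (b i αβ.1) (b i' αβ.2) then some h.choose else none
  have hcol : ∀ i ∈ C, ∀ i' ∈ C, i ≠ i' → ∃ αβ : κ × κ, col i i' = some αβ ∧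
      G.Adj (b i αβ.1) (b i' αβ.2) := by
    intro i hi i' hi' hne
    obtain ⟨α, β, h⟩ := hadj i hi i' hi' hne
    have h' : ∃ αβ : κ × κ, G.Adj (b i αβ.1) (b i' αβ.2) := ⟨(α, β), h⟩
    exact ⟨h'.choose, by simp only [col, dif_pos h'], h'.choose_spec⟩
  obtain ⟨φ, -, hφ⟩ := Finset.exists_le_card_fiber_of_mul_le_card_of_maps_to
    (s := C \ C') (t := (Finset.univ : Finset (C' → Option (κ × κ))))
    (f := fun i => fun j : C' => col i j) (n := q) (by simp) ⟨fun _ => none, by simp⟩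
    (by rw [Finset.card_univ, Fintype.card_fun, Fintype.card_coe, hC'c, ← hd]; exact hC2)
  obtain ⟨e, -, he⟩ := Finset.exists_le_card_fiber_of_mul_le_card_of_maps_to
    (s := (Finset.univ : Finset C')) (t := (Finset.univ : Finset (Option (κ × κ))))
    (f := φ) (n := q) (by simp) ⟨none, by simp⟩
    (by rw [Finset.card_univ, Finset.card_univ, Fintype.card_coe, hC'c])
  obtain ⟨P, hP, hPc⟩ := Finset.exists_subset_card_eq hφ
  obtain ⟨Q, hQ, hQc⟩ := Finset.exists_subset_card_eq he
  rcases Nat.eq_zero_or_pos q with rfl | hq0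
  · exact hq ∅ ∅ rfl rfl (by simp)
  have hPm : ∀ i ∈ P, i ∈ C ∧ i ∉ C' ∧ ∀ j : C', col i j = φ j := by
    intro i hi
    have := hP hi
    simp only [Finset.mem_filter, Finset.mem_sdiff] at this
    exact ⟨this.1.1, this.1.2, fun j => congrFun this.2 j⟩
  have hQm : ∀ j ∈ Q, φ j = e := by
    intro j hj
    have := hQ hj
    simpa using this
  obtain ⟨i0, hi0⟩ : P.Nonempty := Finset.card_pos.1 (by omega)
  obtain ⟨j0, hj0⟩ : Q.Nonempty := Finset.card_pos.1 (by omega)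
  have hcol' : ∀ i ∈ P, ∀ j ∈ Q, ∃ αβ : κ × κ, e = some αβ ∧ G.Adj (b i αβ.1) (b j αβ.2) := by
    intro i hi j hj
    obtain ⟨h1, h2, h3⟩ := hPm i hi
    obtain ⟨αβ, h4, h5⟩ := hcol i h1 j (hC' j.2) (fun h => h2 (h ▸ j.2))
    exact ⟨αβ, by rw [← h4, h3, hQm j hj], h5⟩
  obtain ⟨⟨α, β⟩, rfl, -⟩ := hcol' i0 hi0 j0 hj0
  refine hq (P.image (fun i => b i α)) (Q.image (fun j : C' => b j β)) ?_ ?_ ?_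
  · rw [Finset.card_image_of_injOn, hPc]
    intro i hi i' hi' h
    by_contra hne
    exact hdis i (hPm i hi).1 i' (hPm i' hi').1 hne _ _ h
  · rw [Finset.card_image_of_injOn, hQc]
    intro i hi i' hi' h
    by_contra hne
    exact hdis i (hC' i.2) i' (hC' i'.2) (fun h => hne (Subtype.ext h)) _ _ h
  · intro x hx y hy
    obtain ⟨i, hi, rfl⟩ := Finset.mem_image.1 hx
    obtain ⟨j, hj, rfl⟩ := Finset.mem_image.1 hy
    obtain ⟨αβ, h1, h2⟩ := hcol' i hi j hj
    cases h1
    exact h2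

theorem blemma2 (κ : Type) [Fintype κ] (q s : ℕ) : ∃ N : ℕ, ∀ (V : Type) (G : SimpleGraph V),
    NoBic G q → ∀ (ι : Type) (C : Finset ι) (b : ι → κ → V), N ≤ C.card →
    (∀ i ∈ C, ∀ i' ∈ C, i ≠ i' → ∀ α β, b i α ≠ b i' β) →
    ∃ S ⊆ C, S.card = s ∧ ∀ i ∈ S, ∀ i' ∈ S, i ≠ i' → ∀ α β, ¬ G.Adj (b i α) (b i' β) := by
  obtain ⟨N1, h1⟩ := blemma κ q
  obtain ⟨N, h⟩ := ramsey N1 s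
  refine ⟨N, fun V G hq ι C b hC hdis => ?_⟩
  rcases h ι (fun i i' => ∃ α β, G.Adj (b i α) (b i' β))
    (fun a c ⟨α, β, h⟩ => ⟨β, α, h.symm⟩) C hC with ⟨T, hT, hTc, hTr⟩ | ⟨T, hT, hTc, hTr⟩
  · exact absurd hTr (h1 V G hq ι T b hTc.ge
      (fun i hi i' hi' => hdis i (hT hi) i' (hT hi')))
  · refine ⟨T, hT, hTc, fun i hi i' hi' hne α β h => hTr i hi i' hi' hne ⟨α, β, h⟩⟩

/-- few indices have a vertex adjacent to many hubs. -/
theorem few_bad {V : Type} {G : SimpleGraph V} {q m : ℕ} (hq : NoBic G q) {κ ι : Type}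
    (x : Fin m → V) (hx : Function.Injective x) (C : Finset ι) (b : ι → κ → V)
    (hdis : ∀ i ∈ C, ∀ i' ∈ C, i ≠ i' → ∀ α β, b i α ≠ b i' β)
    (hbad : ∀ i ∈ C, ∃ α, ∃ H : Finset (Fin m), H.card = q ∧ ∀ h ∈ H, G.Adj (x h) (b i α)) :
    C.card < 2 ^ m * q + 1 := by
  classical
  by_contra hcon
  have hbad' : ∀ i, ∃ H : Finset (Fin m), i ∈ C → H.card = q ∧ ∃ α, ∀ h ∈ H, G.Adj (x h) (b i α) := by
    intro i
    by_cases hi : i ∈ C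
    · obtain ⟨α, H, h1, h2⟩ := hbad i hi
      exact ⟨H, fun _ => ⟨h1, α, h2⟩⟩
    · exact ⟨∅, fun h => absurd h hi⟩
  choose H hHc using hbad'
  obtain ⟨φ, -, hφ⟩ := Finset.exists_le_card_fiber_of_mul_le_card_of_maps_to
    (s := C) (t := (Finset.univ : Finset (Finset (Fin m))))
    (f := H) (n := q) (by simp) ⟨∅, by simp⟩
    (by rw [Finset.card_univ, Fintype.card_finset, Fintype.card_fin]; omega)
  obtain ⟨P, hP, hPc⟩ := Finset.exists_subset_card_eq hφ
  rcases Nat.eq_zero_or_pos q with rfl | hq0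
  · exact hq ∅ ∅ rfl rfl (by simp)
  obtain ⟨i0, hi0⟩ : P.Nonempty := Finset.card_pos.1 (by omega)
  have hPm : ∀ i ∈ P, i ∈ C ∧ H i = φ := by
    intro i hi
    simpa using hP hi
  haveI : Nonempty κ := ⟨(hHc i0 (hPm i0 hi0).1).2.choose⟩
  have hα : ∀ i, ∃ α, i ∈ C → ∀ h ∈ H i, G.Adj (x h) (b i α) := by
    intro i
    by_cases hi : i ∈ C
    · obtain ⟨α, h2⟩ := (hHc i hi).2
      exact ⟨α, fun _ => h2⟩
    · exact ⟨Classical.arbitrary κ, fun h => absurd h hi⟩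
  choose α hH using hα
  refine hq (φ.image x) (P.image (fun i => b i (α i))) ?_ ?_ ?_
  · rw [Finset.card_image_of_injective _ hx, ← (hPm i0 hi0).2]
    exact (hHc i0 (hPm i0 hi0).1).1
  · rw [Finset.card_image_of_injOn, hPc]
    intro i hi i' hi' h
    by_contra hne
    exact hdis i (hPm i hi).1 i' (hPm i' hi').1 hne _ _ h
  · intro u hu y hy
    obtain ⟨i, hi, rfl⟩ := Finset.mem_image.1 hy
    obtain ⟨j, hj, rfl⟩ := Finset.mem_image.1 hu
    exact hH i (hPm i hi).1 j ((hPm i hi).2 ▸ hj)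

theorem free_set {s τ m : ℕ} (hm : s * s * s * τ < m) (T : Fin m → Fin m → Finset (Fin m))
    (hT : ∀ a b, (T a b).card ≤ τ) :
    ∃ a : Fin s → Fin m, ∀ l j k, l ≠ j → l ≠ k → a l ∉ T (a j) (a k) := by
  classical
  by_contra hcon
  push Not at hcon
  let Bad : Fin s × Fin s × Fin s → Finset (Fin s → Fin m) := fun t =>
    if t.1 ≠ t.2.1 ∧ t.1 ≠ t.2.2 then
      Finset.univ.filter (fun a => a t.1 ∈ T (a t.2.1) (a t.2.2)) else ∅
  have hcov : (Finset.univ : Finset (Fin s → Fin m)) ⊆ Finset.univ.biUnion Bad := by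
    intro a _
    obtain ⟨l, j, k, h1, h2, h3⟩ := hcon a
    rw [Finset.mem_biUnion]
    refine ⟨(l, j, k), Finset.mem_univ _, ?_⟩
    simp [Bad, h1, h2, h3]
  have hs0 : 0 < s := by
    obtain ⟨l, -⟩ := hcon (fun _ => ⟨0, by omega⟩)
    exact l.pos
  have hB : ∀ t, (Bad t).card ≤ τ * m ^ (s - 1) := by
    rintro ⟨l, j, k⟩
    by_cases h : l ≠ j ∧ l ≠ k
    · have h1 := Finset.card_le_mul_card_image (f := fun (a : Fin s → Fin m) (i : {i : Fin s // i ≠ l}) => a i)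
        (Bad (l, j, k)) τ (by
          intro g hg
          refine le_trans ?_ (hT (g ⟨j, h.1.symm⟩) (g ⟨k, h.2.symm⟩))
          refine Finset.card_le_card_of_injOn (fun a => a l) ?_ ?_
          · intro a ha
            simp only [Bad, if_pos h, Finset.coe_filter, Finset.mem_filter, Finset.mem_univ, true_and, Set.mem_ofPred_eq] at ha
            obtain ⟨ha1, rfl⟩ := ha
            exact ha1
          · intro a ha a' ha' hl
            simp only [Finset.coe_filter, Set.mem_ofPred_eq] at ha ha'
            have e := ha.2.trans ha'.2.symm
            funext i
            by_cases hi : i = l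
            · subst hi; exact hl
            · exact congrFun e ⟨i, hi⟩)
      refine h1.trans (Nat.mul_le_mul_left _ ?_)
      refine (Finset.card_le_univ _).trans ?_
      simp [Fintype.card_subtype_compl]
    · simp [Bad, if_neg h]
  have h1 := (Finset.card_le_card hcov).trans (Finset.card_biUnion_le_card_mul _ _ _ (fun t _ => hB t))
  simp only [Finset.card_univ, Fintype.card_fun, Fintype.card_fin, Fintype.card_prod] at h1
  have h2 : m ^ s = m * m ^ (s-1) := by
    conv_lhs => rw [show s = (s-1)+1 by omega]
    rw [pow_succ]; ring
  have h3 : 0 < m ^ (s-1) := pow_pos (by omega) _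
  have h4 : s * (s * s) * (τ * m^(s-1)) < m * m^(s-1) := by
    calc s * (s * s) * (τ * m^(s-1)) = (s*s*s*τ) * m^(s-1) := by ring
      _ < _ := Nat.mul_lt_mul_of_pos_right hm h3
  omega

end IP6

namespace IP6

theorem ring_contra {V : Type} {G : SimpleGraph V} {L s : ℕ} (hL : 2 ≤ L) (hG : NoHole G L)
    (hs : 2 ≤ s) (hLs : L ≤ 2 * s - 2) (hub : ℕ → V) (I : ℕ → Set V) (nx : ℕ → ℕ)
    (hnx : ∀ l, nx l = if l + 1 < s then l + 1 else 0)
    (F1 : ∀ l < s, ∀ l' < s, ¬ G.Adj (hub l) (hub l')) (F1' : ∀ l < s, ∀ l' < s, hub l = hub l' → l = l')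
    (F2 : ∀ h < s, ∀ l < s, Tch G (hub h) (I l) → h = l ∨ h = nx l)
    (F3 : ∀ l < s, ∀ l' < s, l ≠ l' → ∀ u ∈ I l, ∀ v ∈ I l', ¬ G.Adj u v)
    (F3' : ∀ l < s, ∀ l' < s, l ≠ l' → ∀ u ∈ I l, u ∉ I l')
    (F4 : ∀ h < s, ∀ l < s, hub h ∉ I l)
    (F5 : ∀ l < s, Cn G (I l)) (F6 : ∀ l < s, Tch G (hub l) (I l))
    (F7 : ∀ l < s, Tch G (hub (nx l)) (I l)) : False := by
  set P : ℕ → Set V := fun l => if l % 2 = 0 then {hub (l/2)} else I (l/2) with hP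
  have Pe : ∀ h, P (2*h) = {hub h} := by intro h; simp [hP]
  have Po : ∀ h, P (2*h+1) = I h := by
    intro h
    have h1 : (2*h+1) % 2 = 1 := by omega
    have h2 : (2*h+1) / 2 = h := by omega
    simp [hP, h1, h2]
  have par : ∀ l, ∃ h, l = 2*h ∨ l = 2*h+1 := fun l => ⟨l/2, by omega⟩
  have hnxs : ∀ l, l < s - 1 → nx l = l + 1 := by
    intro l hl; rw [hnx, if_pos (by omega)]
  have hnxe : nx (s-1) = 0 := by rw [hnx, if_neg (by omega)]
  set S : Set V := {v | ∃ l < 2*s-1, v ∈ P l} with hS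
  have hadj : ∀ l < 2*s-1, ∀ l' < 2*s-1, ∀ u ∈ P l, ∀ v ∈ P l', G.Adj u v → l' ≤ l + 1 := by
    intro l hl l' hl' u hu v hv huv
    obtain ⟨h, rfl | rfl⟩ := par l <;> obtain ⟨h', rfl | rfl⟩ := par l'
    · rw [Pe, Set.mem_singleton_iff] at hu hv
      subst hu hv
      exact absurd huv (F1 h (by omega) h' (by omega))
    · rw [Pe, Set.mem_singleton_iff] at hu
      rw [Po] at hv
      subst hu
      have := F2 h (by omega) h' (by omega) ⟨v, hv, huv⟩
      rw [hnxs h' (by omega)] at this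
      omega
    · rw [Pe, Set.mem_singleton_iff] at hv
      rw [Po] at hu
      subst hv
      have := F2 h' (by omega) h (by omega) ⟨u, hu, huv.symm⟩
      rw [hnxs h (by omega)] at this
      omega
    · rw [Po] at hu hv
      by_contra hne
      exact F3 h (by omega) h' (by omega) (by omega) u hu v hv huv
  have hubS : ∀ l < s, hub l ∈ S := fun l hl => ⟨2*l, by omega, by rw [Pe]; rfl⟩
  have IS : ∀ l < s - 1, I l ⊆ S := fun l hl v hv => ⟨2*l+1, by omega, by rwa [Po]⟩
  have hreach : ∀ l < s, (gS G S).Reachable (hub 0) (hub l) := by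
    intro l
    induction l with
    | zero => intro _; exact Reachable.refl _
    | succ l ih =>
      intro hl
      have hlS := IS l (by omega)
      obtain ⟨y, hy, hy'⟩ := F6 l (by omega)
      obtain ⟨z, hz, hz'⟩ := F7 l (by omega)
      rw [hnxs l (by omega)] at hz'
      refine (ih (by omega)).trans ?_
      have a1 : (gS G S).Reachable (hub l) y := Adj.reachable ⟨hy', hubS l (by omega), hlS hy⟩
      have a2 : (gS G S).Reachable y z := (F5 l (by omega) y hy z hz).mono (gS_mono hlS)
      have a3 : (gS G S).Reachable z (hub (l+1)) :=
        Adj.reachable ⟨hz'.symm, hlS hz, hubS (l+1) (by omega)⟩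
      exact (a1.trans a2).trans a3
  obtain ⟨k, w, hw, hw0, hwk, hwS⟩ := exists_indP (hreach (s-1) (by omega)) (hubS 0 (by omega))
  have hlev : ∀ j ≤ k, ∀ l < 2*s-1, w j ∈ P l → l ≤ j := by
    intro j
    induction j with
    | zero =>
      intro _ l hl h
      rw [hw0] at h
      obtain ⟨h', rfl | rfl⟩ := par l
      · rw [Pe, Set.mem_singleton_iff] at h
        have := F1' 0 (by omega) h' (by omega) h
        omega
      · rw [Po] at h
        exact absurd h (F4 0 (by omega) h' (by omega))
    | succ j ih =>
      intro hj l hl h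
      obtain ⟨l', hl', h'⟩ := hwS j (by omega)
      have := ih (by omega) l' hl' h'
      have := hadj l' hl' l hl _ h' _ h ((hw j (j+1) (by omega) hj).2.2 (by omega))
      omega
  have hk : 2 * (s-1) ≤ k := hlev k le_rfl _ (by omega) (by rw [hwk, Pe]; rfl)
  have hI : ∀ j ≤ k, w j ∉ I (s-1) := by
    intro j hj h
    obtain ⟨l', hl', h'⟩ := hwS j hj
    obtain ⟨h1, rfl | rfl⟩ := par l'
    · rw [Pe, Set.mem_singleton_iff] at h'
      exact F4 h1 (by omega) (s-1) (by omega) (h' ▸ h)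
    · rw [Po] at h'
      exact F3' h1 (by omega) (s-1) (by omega) (by omega) _ h' h
  have t0 : Tch G (w 0) (I (s-1)) := by
    have := F7 (s-1) (by omega)
    rw [hnxe] at this
    rwa [hw0]
  have tk : Tch G (w k) (I (s-1)) := by
    rw [hwk]; exact F6 (s-1) (by omega)
  obtain ⟨j, hj0, hjk, hjL, hj⟩ := touch_early hL hG hw (F5 (s-1) (by omega)) hI t0 ⟨k, by omega, le_rfl, tk⟩
  obtain ⟨l', hl', h'⟩ := hwS j hjk
  have hle := hlev j hjk l' hl' h'
  obtain ⟨h1, rfl | rfl⟩ := par l'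
  · rw [Pe, Set.mem_singleton_iff] at h'
    rw [h'] at hj
    rcases F2 h1 (by omega) (s-1) (by omega) hj with h | h
    · omega
    · rw [hnxe] at h
      subst h
      have := (hw j 0 hjk (by omega)).1 (h'.trans hw0.symm)
      omega
  · rw [Po] at h'
    obtain ⟨y, hy, hy'⟩ := hj
    exact F3 h1 (by omega) (s-1) (by omega) (by omega) _ h' _ hy hy'

/-- For a fixed pair of hubs, few paths are long. -/
theorem few_long (L q : ℕ) (hL : 2 ≤ L) : ∃ N : ℕ, ∀ (V : Type) (G : SimpleGraph V),
    NoHole G L → NoBic G q → ∀ (C : Finset ℕ) (R : ℕ → Set V) (x y : V) (w : ℕ → ℕ → V) (k : ℕ → ℕ),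
    (∀ i ∈ C, ∀ i' ∈ C, i ≠ i' → ∀ u ∈ R i, u ∉ R i') →
    (∀ i ∈ C, x ∉ R i ∧ y ∉ R i) →
    (∀ i ∈ C, L < k i ∧ IndP G (w i) (k i) ∧ w i 0 = x ∧ w i (k i) = y ∧
      ∀ j, 0 < j → j < k i → w i j ∈ R i) → C.card < N := by
  obtain ⟨N, hN⟩ := blemma (Fin (L-1)) q
  refine ⟨N, fun V G hG hq C R x y w k hR hxy hw => ?_⟩
  by_contra hC
  refine hN V G hq ℕ C (fun i α => w i (α + 1)) (by omega) ?_ ?_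
  · intro i hi i' hi' hne α β h
    obtain ⟨g1, -, -, -, g2⟩ := hw i hi
    obtain ⟨g1', -, -, -, g2'⟩ := hw i' hi'
    refine hR i hi i' hi' hne _ (g2 (α+1) (by omega) (by omega)) ?_
    have h : w i (α+1) = w i' (β+1) := h
    rw [h]
    exact g2' _ (by omega) (by omega)
  · intro i hi i' hi' hne
    have dis : ∀ i ∈ C, ∀ i' ∈ C, i ≠ i' → ∀ j ≤ k i, ∀ a b, 0 < a → b ≤ k i' →
        w i j ∉ w i' '' Set.Ico a b := by
      rintro i hi i' hi' hne j hj a b ha hb ⟨j', hj', h⟩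
      obtain ⟨-, -, g3, g4, g2⟩ := hw i hi
      obtain ⟨-, -, g3', g4', g2'⟩ := hw i' hi'
      have hm := g2' j' (by have := hj'.1; omega) (by have := hj'.2; omega)
      rw [h] at hm
      rcases Nat.eq_zero_or_pos j with rfl | hj0
      · rw [g3] at hm; exact (hxy i' hi').1 hm
      · rcases Nat.lt_or_ge j (k i) with hlt | hge
        · exact hR i hi i' hi' hne _ (g2 j hj0 hlt) hm
        · obtain rfl : j = k i := by omega
          rw [g4] at hm; exact (hxy i' hi').2 hm
    obtain ⟨g1, g5, g3, g4, g2⟩ := hw i hi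
    obtain ⟨g1', g5', g3', g4', g2'⟩ := hw i' hi'
    obtain ⟨j, hj0, hjk, hjL, u, ⟨j', hj', rfl⟩, hu⟩ := touch_early hL hG g5
      (g5'.cn_seg (a := 1) (b := k i') (by omega)) (fun j hj => dis i hi i' hi' hne j hj _ _ (by omega) le_rfl)
      ⟨w i' 1, ⟨1, ⟨le_rfl, by omega⟩, rfl⟩, by
        rw [g3, ← g3']; exact (g5' 0 1 (by omega) (by omega)).2.2 (by omega)⟩
      ⟨k i, by omega, le_rfl, w i' (k i' - 1), ⟨k i' - 1, ⟨by omega, by omega⟩, rfl⟩, by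
        rw [g4, ← g4']; exact (g5' _ _ (by omega) (by omega)).2.2 (by omega)⟩
    have hj'1 := hj'.1
    have hj'2 := hj'.2
    obtain ⟨j2, hj20, hj2k, hj2L, u, ⟨j3, hj3, rfl⟩, hu⟩ := touch_early hL hG g5'
      (g5.cn_seg (a := 1) (b := L) (by omega))
      (fun j hj => dis i' hi' i hi hne.symm j hj _ _ (by omega) (by omega))
      ⟨w i 1, ⟨1, ⟨le_rfl, by omega⟩, rfl⟩, by
        rw [g3', ← g3]; exact (g5 0 1 (by omega) (by omega)).2.2 (by omega)⟩
      ⟨j', by omega, by omega, w i j, ⟨j, ⟨by omega, by omega⟩, rfl⟩, hu.symm⟩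
    have hj31 := hj3.1
    have hj32 := hj3.2
    refine ⟨⟨j3 - 1, by omega⟩, ⟨j2 - 1, by omega⟩, ?_⟩
    simp only
    rw [Nat.sub_add_cancel (by omega), Nat.sub_add_cancel (by omega)]
    exact hu.symm

theorem lemB1 (L q : ℕ) (hL : 2 ≤ L) : ∃ m M : ℕ, ∀ (V : Type) (G : SimpleGraph V),
    NoHole G L → NoBic G q → ∀ (x : Fin m → V) (R : ℕ → Set V), Function.Injective x →
    (∀ a b, ¬ G.Adj (x a) (x b)) →
    (∀ i < M, ∀ i' < M, i ≠ i' → ∀ u ∈ R i, u ∉ R i') →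
    (∀ i < M, Cn G (R i)) → (∀ i < M, ∀ a, x a ∉ R i) →
    (∀ i < M, ∀ a, Tch G (x a) (R i)) → False := by
  classical
  obtain ⟨N1, hN1⟩ := few_long L q hL
  set s := L + 1 with hs
  set m := s * s * s * (s * L * q + 2) + 1 with hm
  obtain ⟨N2, hN2⟩ := blemma2 (Fin m × Fin m × Fin L) q s
  refine ⟨m, N2 + (2 ^ m * q + 1) + m * m * N1, ?_⟩
  set M := N2 + (2 ^ m * q + 1) + m * m * N1 with hM
  intro V G hG hq x R hx hind hR hcn hxR ht
  have hpath : ∀ i a b, ∃ k, ∃ w : ℕ → V, i < M → (2 ≤ k ∧ (∀ j, 0 < j → j < k → w j ∈ R i)) ∧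
      (a ≠ b → IndP G w k ∧ w 0 = x a ∧ w k = x b) := by
    intro i a b
    by_cases hi : i < M
    · by_cases hab : a = b
      · obtain ⟨y, hy, -⟩ := ht i hi a
        exact ⟨2, fun _ => y, fun _ => ⟨⟨le_rfl, fun _ _ _ => hy⟩, fun h => absurd hab h⟩⟩
      · set S : Set V := insert (x a) (insert (x b) (R i)) with hS
        have hreach : (gS G S).Reachable (x a) (x b) := by
          obtain ⟨y, hy, hy'⟩ := ht i hi a
          obtain ⟨z, hz, hz'⟩ := ht i hi b
          have a1 : (gS G S).Reachable (x a) y :=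
            Adj.reachable ⟨hy', by simp [hS], by simp [hS, hy]⟩
          have a2 : (gS G S).Reachable y z := (hcn i hi y hy z hz).mono (gS_mono (by
            intro x hx; simp [hS, hx]))
          have a3 : (gS G S).Reachable z (x b) :=
            Adj.reachable ⟨hz'.symm, by simp [hS, hz], by simp [hS]⟩
          exact (a1.trans a2).trans a3
        obtain ⟨k, u, hu, hu0, huk, huS⟩ := exists_indP hreach (by simp [hS])
        have hne : x a ≠ x b := fun h => hab (hx h)
        have hk0 : k ≠ 0 := by
          rintro rfl
          exact hne (hu0.symm.trans huk)
        have hk1 : k ≠ 1 := by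
          rintro rfl
          have := (hu 0 1 (by omega) le_rfl).2.2 (by omega)
          rw [hu0, huk] at this
          exact hind _ _ this
        refine ⟨k, u, fun _ => ⟨⟨by omega, ?_⟩, fun _ => ⟨hu, hu0, huk⟩⟩⟩
        intro j h1 h2
        have := huS j h2.le
        simp only [hS, Set.mem_insert_iff] at this
        rcases this with h | h | h
        · have := (hu j 0 h2.le (by omega)).1 (h.trans hu0.symm); omega
        · have := (hu j k h2.le le_rfl).1 (h.trans huk.symm); omega
        · exact h
    · exact ⟨0, fun _ => x a, fun h => absurd h hi⟩
  choose k w hw using hpath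
  let b : ℕ → Fin m × Fin m × Fin L → V := fun i t => w i t.1 t.2.1 (min (t.2.2 + 1) (k i t.1 t.2.1 - 1))
  have hbR : ∀ i < M, ∀ t, b i t ∈ R i := by
    intro i hi t
    obtain ⟨⟨h1, h2⟩, -⟩ := hw i t.1 t.2.1 hi
    exact h2 _ (by omega) (by omega)
  have hbdis : ∀ i < M, ∀ i' < M, i ≠ i' → ∀ α β, b i α ≠ b i' β := by
    intro i hi i' hi' hne α β h
    exact hR i hi i' hi' hne _ (hbR i hi α) (h ▸ hbR i' hi' β)
  -- bad indices
  let Bad := (Finset.range M).filter (fun i => ∃ α, ∃ H : Finset (Fin m), H.card = q ∧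
    ∀ h ∈ H, G.Adj (x h) (b i α))
  have hBad : Bad.card < 2 ^ m * q + 1 := by
    refine few_bad hq x hx Bad b ?_ ?_
    · intro i hi i' hi'
      simp only [Bad, Finset.mem_filter, Finset.mem_range] at hi hi'
      exact hbdis i hi.1 i' hi'.1
    · intro i hi
      simp only [Bad, Finset.mem_filter, Finset.mem_range] at hi
      exact hi.2
  let Lg : Fin m × Fin m → Finset ℕ := fun p =>
    (Finset.range M).filter (fun i => p.1 ≠ p.2 ∧ L < k i p.1 p.2)
  have hLg : ∀ p, (Lg p).card ≤ N1 := by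
    intro p
    refine (hN1 V G hG hq (Lg p) R (x p.1) (x p.2) (fun i => w i p.1 p.2) (fun i => k i p.1 p.2) ?_ ?_ ?_).le
    · intro i hi i' hi'
      simp only [Lg, Finset.mem_filter, Finset.mem_range] at hi hi'
      exact hR i hi.1 i' hi'.1
    · intro i hi
      simp only [Lg, Finset.mem_filter, Finset.mem_range] at hi
      exact ⟨hxR i hi.1 _, hxR i hi.1 _⟩
    · intro i hi
      simp only [Lg, Finset.mem_filter, Finset.mem_range] at hi
      obtain ⟨⟨h1, h2⟩, h3⟩ := hw i p.1 p.2 hi.1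
      obtain ⟨h4, h5, h6⟩ := h3 hi.2.1
      exact ⟨hi.2.2, h4, h5, h6, h2⟩
  let Long := Finset.univ.biUnion Lg
  have hLong : Long.card ≤ m * m * N1 := by
    have := Finset.card_biUnion_le_card_mul Finset.univ Lg N1 (fun p _ => hLg p)
    simpa using this
  let C := Finset.range M \ (Bad ∪ Long)
  have hC : N2 ≤ C.card := by
    have h1 := Finset.le_card_sdiff (Bad ∪ Long) (Finset.range M)
    have h2 := Finset.card_union_le Bad Long
    rw [Finset.card_range] at h1
    show N2 ≤ (Finset.range M \ (Bad ∪ Long)).card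
    omega
  have hCm : ∀ i ∈ C, i < M ∧ i ∉ Bad ∧ i ∉ Long := by
    intro i hi
    simp only [C, Finset.mem_sdiff, Finset.mem_union, Finset.mem_range, not_or] at hi
    exact hi
  obtain ⟨S, hSC, hSc, hS⟩ := hN2 V G hq ℕ C b hC
    (fun i hi i' hi' => hbdis i (hCm i hi).1 i' (hCm i' hi').1)
  -- in `S`, paths are short
  have hshort : ∀ i ∈ S, ∀ a b, a ≠ b → k i a b ≤ L := by
    intro i hi a b hab
    obtain ⟨h1, -, h3⟩ := hCm i (hSC hi)
    by_contra h
    refine h3 (Finset.mem_biUnion.2 ⟨(a, b), Finset.mem_univ _, ?_⟩)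
    simp only [Lg, Finset.mem_filter, Finset.mem_range]
    exact ⟨h1, hab, by omega⟩
  have hbint : ∀ i ∈ S, ∀ a c, a ≠ c → ∀ j, 0 < j → j < k i a c → ∃ α : Fin L, w i a c j = b i (a, c, α) := by
    intro i hi a c hac j h1 h2
    have := hshort i hi a c hac
    refine ⟨⟨j-1, by omega⟩, ?_⟩
    simp only [b]
    congr 1
    omega
  let T : Fin m → Fin m → Finset (Fin m) := fun a c =>
    {a, c} ∪ (S ×ˢ (Finset.univ : Finset (Fin L))).biUnion
      (fun p => Finset.univ.filter (fun h => G.Adj (x h) (b p.1 (a, c, p.2))))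
  have hT : ∀ a c, (T a c).card ≤ s * L * q + 2 := by
    intro a c
    refine (Finset.card_union_le _ _).trans ?_
    have h1 : ({a, c} : Finset (Fin m)).card ≤ 2 := Finset.card_le_two
    have h2 := Finset.card_biUnion_le_card_mul (S ×ˢ (Finset.univ : Finset (Fin L)))
      (fun p => Finset.univ.filter (fun h => G.Adj (x h) (b p.1 (a, c, p.2)))) q (by
        intro p hp
        simp only [Finset.mem_product] at hp
        by_contra hcon
        obtain ⟨H, hH, hHc⟩ := Finset.exists_subset_card_eq (not_le.1 hcon).le
        obtain ⟨h1, h2, -⟩ := hCm p.1 (hSC hp.1)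
        refine h2 ?_
        simp only [Bad, Finset.mem_filter, Finset.mem_range]
        refine ⟨h1, (a, c, p.2), H, hHc, ?_⟩
        intro h hh
        simpa using hH hh)
    rw [Finset.card_product, hSc, Finset.card_univ, Fintype.card_fin] at h2
    omega
  obtain ⟨f, hf⟩ := free_set (s := s) (τ := s * L * q + 2) (m := m) (by omega) T hT
  have hfinj : ∀ l j, l ≠ j → f l ≠ f j := by
    intro l j hlj h
    refine hf l j j hlj hlj ?_
    simp [T, h]
  have hfadj : ∀ l j c, l ≠ j → l ≠ c → ∀ i ∈ S, ∀ α, ¬ G.Adj (x (f l)) (b i (f j, f c, α)) := by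
    intro l j c h1 h2 i hi α h
    refine hf l j c h1 h2 ?_
    simp only [T, Finset.mem_union, Finset.mem_biUnion, Finset.mem_product, Finset.mem_filter]
    exact Or.inr ⟨(i, α), ⟨hi, Finset.mem_univ _⟩, Finset.mem_univ _, h⟩
  let idx := S.orderEmbOfFin hSc
  have hidx : ∀ l, idx l ∈ S := fun l => Finset.orderEmbOfFin_mem S hSc l
  let cl : ℕ → Fin s := fun l => if h : l < s then ⟨l, h⟩ else ⟨0, by omega⟩
  have hcl : ∀ l < s, ∀ l' < s, l ≠ l' → cl l ≠ cl l' := by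
    intro l hl l' hl' hne h
    simp only [cl, dif_pos hl, dif_pos hl'] at h
    exact hne (Fin.mk.inj_iff.1 h)
  let nx : ℕ → ℕ := fun l => if l + 1 < s then l + 1 else 0
  have hnx : ∀ l < s, nx l < s ∧ l ≠ nx l := by
    intro l hl
    simp only [nx]
    split_ifs <;> omega
  let kk : ℕ → ℕ := fun l => k (idx (cl l)) (f (cl l)) (f (cl (nx l)))
  let ww : ℕ → ℕ → V := fun l => w (idx (cl l)) (f (cl l)) (f (cl (nx l)))
  let I : ℕ → Set V := fun l => ww l '' Set.Ico 1 (kk l)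
  have hiM : ∀ l, idx (cl l) < M := fun l => (hCm _ (hSC (hidx _))).1
  have hne' : ∀ l < s, f (cl l) ≠ f (cl (nx l)) := fun l hl =>
    hfinj _ _ (hcl l hl _ (hnx l hl).1 (hnx l hl).2)
  have hww : ∀ l < s, 2 ≤ kk l ∧ IndP G (ww l) (kk l) ∧ ww l 0 = x (f (cl l)) ∧
      ww l (kk l) = x (f (cl (nx l))) := by
    intro l hl
    obtain ⟨⟨h1, h2⟩, h3⟩ := hw (idx (cl l)) (f (cl l)) (f (cl (nx l))) (hiM l)
    exact ⟨h1, h3 (hne' l hl)⟩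
  have hIR : ∀ l < s, ∀ u ∈ I l, u ∈ R (idx (cl l)) := by
    rintro l hl u ⟨j, hj, rfl⟩
    obtain ⟨⟨h1, h2⟩, h3⟩ := hw (idx (cl l)) (f (cl l)) (f (cl (nx l))) (hiM l)
    exact h2 j hj.1 hj.2
  have hIb : ∀ l < s, ∀ u ∈ I l, ∃ α, u = b (idx (cl l)) (f (cl l), f (cl (nx l)), α) := by
    rintro l hl u ⟨j, hj, rfl⟩
    exact hbint _ (hidx _) _ _ (hne' l hl) j hj.1 hj.2
  have hidxne : ∀ l < s, ∀ l' < s, l ≠ l' → idx (cl l) ≠ idx (cl l') := fun l hl l' hl' hne h =>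
    hcl l hl l' hl' hne (idx.injective h)
  refine ring_contra (s := s) hL hG (by omega) (by omega) (fun l => x (f (cl l))) I nx (fun l => rfl)
    ?_ ?_ ?_ ?_ ?_ ?_ ?_ ?_ ?_
  · intro l _ l' _; exact hind _ _
  · intro l hl l' hl' h
    by_contra hne
    exact hfinj _ _ (hcl l hl l' hl' hne) (hx h)
  · rintro h hh l hl ⟨u, hu, hadj⟩
    by_contra hcon
    push Not at hcon
    obtain ⟨α, rfl⟩ := hIb l hl u hu
    exact hfadj (cl h) (cl l) (cl (nx l)) (hcl h hh l hl hcon.1) (hcl h hh _ (hnx l hl).1 hcon.2)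
      _ (hidx _) α hadj
  · intro l hl l' hl' hne u hu v hv
    obtain ⟨α, rfl⟩ := hIb l hl u hu
    obtain ⟨β, rfl⟩ := hIb l' hl' v hv
    exact hS _ (hidx _) _ (hidx _) (hidxne l hl l' hl' hne) _ _
  · intro l hl l' hl' hne u hu hv
    exact hR _ (hiM l) _ (hiM l') (hidxne l hl l' hl' hne) u (hIR l hl u hu) (hIR l' hl' u hv)
  · intro h hh l hl hc
    exact hxR _ (hiM l) _ (hIR l hl _ hc)
  · intro l hl
    exact (hww l hl).2.1.cn_seg (by omega)
  · intro l hl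
    obtain ⟨h1, h2, h3, h4⟩ := hww l hl
    refine ⟨ww l 1, ⟨1, ⟨le_rfl, by omega⟩, rfl⟩, ?_⟩
    rw [← h3]
    exact (h2 0 1 (by omega) (by omega)).2.2 (by omega)
  · intro l hl
    obtain ⟨h1, h2, h3, h4⟩ := hww l hl
    refine ⟨ww l (kk l - 1), ⟨kk l - 1, ⟨by omega, by omega⟩, rfl⟩, ?_⟩
    rw [← h4]
    exact (h2 _ _ (by omega) (by omega)).2.2 (by omega)

theorem lemB (L q : ℕ) (hL : 2 ≤ L) : ∃ m M : ℕ, ∀ (V : Type) (G : SimpleGraph V),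
    NoHole G L → NoBic G q → ∀ (X : Finset V) (R : ℕ → Set V), X.card = m →
    (∀ i < M, ∀ i' < M, i ≠ i' → ∀ u ∈ R i, u ∉ R i') →
    (∀ i < M, Cn G (R i)) → (∀ i < M, ∀ a ∈ X, a ∉ R i) →
    (∀ i < M, ∀ a ∈ X, Tch G a (R i)) → False := by
  classical
  obtain ⟨m, M, h⟩ := lemB1 L q hL
  obtain ⟨N, hN⟩ := ramsey (2 * q) m
  refine ⟨N, M, fun V G hG hq X R hX h1 h2 h3 h4 => ?_⟩
  rcases hN V G.Adj (fun _ _ h => h.symm) X hX.ge with ⟨T, hT, hTc, hTr⟩ | ⟨T, hT, hTc, hTr⟩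
  · obtain ⟨A, hA, hAc⟩ := Finset.exists_subset_card_eq (s := T) (n := q) (by omega)
    refine hq A (T \ A) hAc (by rw [Finset.card_sdiff_of_subset hA]; omega) ?_
    intro a ha b hb
    rw [Finset.mem_sdiff] at hb
    exact hTr a (hA ha) b hb.1 (fun h => hb.2 (h ▸ ha))
  · let e := T.equivFinOfCardEq hTc
    refine h V G hG hq (fun a => (e.symm a : V)) R ?_ ?_ h1 h2 ?_ ?_
    · intro a b hab
      exact e.symm.injective (Subtype.ext hab)
    · intro a b hab
      exact hTr _ (e.symm a).2 _ (e.symm b).2 hab.ne hab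
    · intro i hi a
      exact h3 i hi _ (hT (e.symm a).2)
    · intro i hi a
      exact h4 i hi _ (hT (e.symm a).2)

end IP6

namespace IP6

def PathV {V : Type} (G : SimpleGraph V) (v : ℕ → V) (n : ℕ) : Prop :=
  (∀ i < n, ∀ j < n, v i = v j → i = j) ∧ ∀ i, i + 1 < n → G.Adj (v i) (v (i+1))

def Iv {V : Type} (v : ℕ → V) (a N : ℕ) : Set V := v '' Set.Ico a (a + N)

theorem Iv_mono {V : Type} {v : ℕ → V} {a N b M : ℕ} (h1 : a ≤ b) (h2 : b + M ≤ a + N) :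
    Iv v b M ⊆ Iv v a N :=
  Set.image_mono (Set.Ico_subset_Ico h1 h2)

theorem PathV.cn {V : Type} {G : SimpleGraph V} {v : ℕ → V} {n a N : ℕ} (hv : PathV G v n)
    (h : a + N ≤ n) : Cn G (Iv v a N) := by
  have key : ∀ j, a ≤ j → j < a + N → (gS G (Iv v a N)).Reachable (v a) (v j) := by
    intro j haj
    induction j, haj using Nat.le_induction with
    | base => intro _; exact Reachable.refl _
    | succ j haj ih =>
      intro hj
      exact (ih (by omega)).trans (Adj.reachable ⟨hv.2 j (by omega),
        ⟨j, ⟨haj, by omega⟩, rfl⟩, ⟨j+1, ⟨by omega, hj⟩, rfl⟩⟩)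
  rintro _ ⟨i, hi, rfl⟩ _ ⟨j, hj, rfl⟩
  exact (key i hi.1 hi.2).symm.trans (key j hj.1 hj.2)

theorem PathV.claw {V : Type} {G : SimpleGraph V} {v : ℕ → V} {n a N p : ℕ} (hv : PathV G v n)
    (hp : ∀ w k, IndP G w k → k + 1 ≤ p) (h : a + N ≤ n) (hN : p + 2 ≤ N) :
    ∃ c x y z, Claw G c x y z ∧ clawSet c x y z ⊆ Iv v a N := by
  obtain ⟨i, j, hij, hj, hadj⟩ : ∃ i j, i + 2 ≤ j ∧ j ≤ p ∧ G.Adj (v (a+i)) (v (a+j)) := by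
    by_contra hcon
    push Not at hcon
    have : IndP G (fun i => v (a+i)) p := by
      intro i j hi hj
      refine ⟨fun h => by have := hv.1 _ (by omega) _ (by omega) h; omega, ?_, ?_⟩
      · intro h'
        have hne : i ≠ j := by rintro rfl; exact h'.ne rfl
        by_contra hc
        rcases Nat.lt_or_ge i j with hlt | hge
        · exact hcon i j (by omega) hj h'
        · exact hcon j i (by omega) hi h'.symm
      · rintro (rfl | rfl)
        · exact hv.2 (a+i) (by omega)
        · exact (hv.2 (a+j) (by omega)).symm
    have := hp _ _ this
    omega
  refine ⟨v (a+j), v (a+j-1), v (a+j+1), v (a+i), ⟨?_, hv.2 _ (by omega), hadj.symm, ?_, ?_, ?_⟩, ?_⟩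
  · have := hv.2 (a+j-1) (by omega)
    rw [Nat.sub_add_cancel (by omega)] at this
    exact this.symm
  · intro h; have := hv.1 _ (by omega) _ (by omega) h; omega
  · intro h; have := hv.1 _ (by omega) _ (by omega) h; omega
  · intro h; have := hv.1 _ (by omega) _ (by omega) h; omega
  · intro u hu
    simp only [clawSet, Set.mem_insert_iff, Set.mem_singleton_iff] at hu
    rcases hu with rfl | rfl | rfl | rfl
    · exact ⟨_, ⟨by omega, by omega⟩, rfl⟩
    · exact ⟨_, ⟨by omega, by omega⟩, rfl⟩
    · exact ⟨_, ⟨by omega, by omega⟩, rfl⟩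
    · exact ⟨_, ⟨by omega, by omega⟩, rfl⟩

def Phi (L q l h K : ℕ) : Prop := ∀ (V : Type) (G : SimpleGraph V), NoHole G L → NoBic G q →
  (∀ k, l ≤ k → ¬ HConf G k) → ∀ (v : ℕ → V) (n p : ℕ), PathV G v n →
  (∀ w k, IndP G w k → k + 1 ≤ p) → ∀ (a N : ℕ) (X : Finset V), K * (p + 2) ≤ N → a + N ≤ n →
  X.card = h → (∀ x ∈ X, x ∉ Iv v a N) →
  (∀ b len, a ≤ b → b + len ≤ a + N → N ≤ K * len → ∀ x ∈ X, Tch G x (Iv v b len)) → False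

theorem phi_base (L q l : ℕ) (hL : 2 ≤ L) : ∃ m K, 1 ≤ K ∧ Phi L q l m K := by
  obtain ⟨m, M, h⟩ := lemB L q hL
  refine ⟨m, 2*M+1, by omega, ?_⟩
  intro V G h1 h2 _ v n p hv _ a N X hN haN hX hXI ht
  set Q := N / (2*M+1) with hQ
  have e1 : (2*M+1) * Q ≤ N := Nat.mul_div_le N (2*M+1)
  have e2 : N < (2*M+1) * (Q+1) := by
    have := Nat.lt_mul_div_succ N (show 0 < 2*M+1 by omega)
    exact this
  have e3 : 1 ≤ Q := by
    rw [hQ, Nat.le_div_iff_mul_le (by omega)]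
    nlinarith
  have e4 : ∀ i < M, (i + 1) * (Q+1) ≤ N := by
    intro i hi
    calc (i+1) * (Q+1) ≤ M * (2 * Q) := Nat.mul_le_mul (by omega) (by omega)
      _ ≤ (2*M+1) * Q := by nlinarith
      _ ≤ N := e1
  have e5 : ∀ i, (i+1) * (Q+1) = i * (Q+1) + (Q+1) := fun i => by ring
  have hsub : ∀ i < M, Iv v (a + i*(Q+1)) (Q+1) ⊆ Iv v a N := by
    intro i hi
    refine Iv_mono (by omega) ?_
    have := e4 i hi; have := e5 i; omega
  refine h V G h1 h2 X (fun i => Iv v (a + i*(Q+1)) (Q+1)) hX ?_ ?_ ?_ ?_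
  · rintro i hi i' hi' hne u ⟨j, hj, rfl⟩ ⟨j', hj', hjj⟩
    have a1 := e4 i hi; have a2 := e5 i; have a3 := e4 i' hi'; have a4 := e5 i'
    obtain ⟨b1, b2⟩ := hj
    obtain ⟨b3, b4⟩ := hj'
    have := hv.1 _ (by omega) _ (by omega) hjj
    subst this
    rcases Nat.lt_or_ge i i' with hlt | hge
    · have : (i+1) * (Q+1) ≤ i' * (Q+1) := Nat.mul_le_mul_right _ hlt
      omega
    · have : (i'+1) * (Q+1) ≤ i * (Q+1) := Nat.mul_le_mul_right _ (by omega)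
      omega
  · intro i hi
    refine hv.cn ?_
    have := e4 i hi; have := e5 i; omega
  · intro i hi x hx hc
    exact hXI x hx (hsub i hi hc)
  · intro i hi x hx
    refine ht _ _ (by omega) ?_ e2.le x hx
    have := e4 i hi; have := e5 i; omega

theorem phi_step {L q l h K : ℕ} (hK : 1 ≤ K) (hphi : Phi L q l (h+1) K) :
    Phi L q l h ((4*K)^(l+4)) := by
  classical
  intro V G h1 h2 h3 v n p hv hp a N X hN haN hX hXI ht
  set D := 4*K with hD
  have hDp : ∀ j, 1 ≤ D^j := fun j => Nat.one_le_pow _ _ (by omega)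
  -- dodging
  have dodge : ∀ j b M, j < l + 4 → a ≤ b → b + M ≤ a + N → N ≤ D^j * M → ∀ y, y ∉ X →
      ∃ b' M', b ≤ b' ∧ b' + M' ≤ b + M ∧ N ≤ D^(j+1) * M' ∧ y ∉ Iv v b' M' ∧
        ¬ Tch G y (Iv v b' M') := by
    intro j b M hj hab hbM hNM y hyX
    have hM : D * (p+2) ≤ M := by
      have e1 : D^(l+4) = D^j * D^(l+4-j) := by rw [← pow_add]; congr 1; omega
      have e2 : D^j * (D^(l+4-j) * (p+2)) ≤ D^j * M := by
        rw [← mul_assoc, ← e1]; exact hN.trans hNM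
      have e3 := Nat.le_of_mul_le_mul_left e2 (hDp j)
      have e4 : D ≤ D^(l+4-j) := Nat.le_self_pow (by omega) _
      exact (Nat.mul_le_mul_right _ e4).trans e3
    have hM2 : 4 * K * (p+2) ≤ M := hM
    have hKp : 2 ≤ K * (p+2) := by nlinarith
    have hM3 : 4 * (K * (p+2)) ≤ M := by rw [← mul_assoc]; exact hM2
    obtain ⟨b1, hb1, hb1', hy⟩ : ∃ b1, b ≤ b1 ∧ b1 + M/2 ≤ b + M ∧ y ∉ Iv v b1 (M/2) := by
      by_cases hy : y ∈ Iv v b (M/2)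
      · refine ⟨b + M/2, by omega, by omega, ?_⟩
        obtain ⟨i, hi, rfl⟩ := hy
        rintro ⟨i', hi', he⟩
        obtain ⟨c1, c2⟩ := hi
        obtain ⟨c3, c4⟩ := hi'
        have := hv.1 _ (by omega) _ (by omega) he
        omega
      · exact ⟨b, le_rfl, by omega, hy⟩
    by_contra hcon
    push Not at hcon
    refine hphi V G h1 h2 h3 v n p hv hp b1 (M/2) (insert y X) (by omega) (by omega)
      (by rw [Finset.card_insert_of_notMem hyX, hX]) ?_ ?_
    · intro x hx
      rcases Finset.mem_insert.1 hx with rfl | hx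
      · exact hy
      · exact fun hc => hXI x hx (Iv_mono (by omega) (by omega) hc)
    · intro b' M' hb' hbM' hlen x hx
      have hlev : N ≤ D^(j+1) * M' := by
        calc N ≤ D^j * M := hNM
          _ ≤ D^j * (4 * (K * M')) := Nat.mul_le_mul_left _ (by omega)
          _ = D^(j+1) * M' := by rw [pow_succ, hD]; ring
      rcases Finset.mem_insert.1 hx with rfl | hx
      · exact hcon b' M' (by omega) (by omega) hlev (fun hc => hy (Iv_mono hb' hbM' hc))
      · refine ht b' M' (by omega) (by omega) (hlev.trans ?_) x hx
        exact Nat.mul_le_mul_right _ (Nat.pow_le_pow_right (by omega) (by omega))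
  have hlarge : ∀ j M, j ≤ l + 4 → N ≤ D^j * M → p + 2 ≤ M := by
    intro j M hj hNM
    have e1 : D^j * (p+2) ≤ D^j * M :=
      (Nat.mul_le_mul_right _ (Nat.pow_le_pow_right (by omega) hj)).trans (hN.trans hNM)
    exact Nat.le_of_mul_le_mul_left e1 (hDp j)
  have hnX : ∀ y ∈ Iv v a N, y ∉ X := fun y hy hyX => hXI y hyX hy
  have ivne : ∀ b M, p + 2 ≤ M → (Iv v b M).Nonempty := fun b M hM =>
    ⟨v b, b, ⟨le_rfl, by omega⟩, rfl⟩
  obtain ⟨c, x, y, z, hcl, hclI⟩ := hv.claw hp haN (hlarge 0 N (by omega) (by simp))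
  have mc : c ∈ clawSet c x y z := by simp [clawSet]
  have mx : x ∈ clawSet c x y z := by simp [clawSet]
  have my : y ∈ clawSet c x y z := by simp [clawSet]
  have mz : z ∈ clawSet c x y z := by simp [clawSet]
  obtain ⟨b1, M1, c1, d1, e1, f1, g1⟩ := dodge 0 a N (by omega) le_rfl le_rfl (by simp) c (hnX _ (hclI mc))
  obtain ⟨b2, M2, c2, d2, e2, f2, g2⟩ := dodge 1 b1 M1 (by omega) (by omega) (by omega) e1 x (hnX _ (hclI mx))
  obtain ⟨b3, M3, c3, d3, e3, f3, g3⟩ := dodge 2 b2 M2 (by omega) (by omega) (by omega) e2 y (hnX _ (hclI my))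
  obtain ⟨b4, M4, c4, d4, e4, f4, g4⟩ := dodge 3 b3 M3 (by omega) (by omega) (by omega) e3 z (hnX _ (hclI mz))
  have mono : ∀ u b M b' M', b ≤ b' → b' + M' ≤ b + M → u ∉ Iv v b M → ¬ Tch G u (Iv v b M) →
      u ∉ Iv v b' M' ∧ ¬ Tch G u (Iv v b' M') := by
    intro u b M b' M' k1 k2 k3 k4
    exact ⟨fun hc => k3 (Iv_mono k1 k2 hc), fun ⟨t, ht, ht'⟩ => k4 ⟨t, Iv_mono k1 k2 ht, ht'⟩⟩
  have hd : ∀ u ∈ clawSet c x y z, u ∉ Iv v b4 M4 ∧ ¬ Tch G u (Iv v b4 M4) := by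
    intro u hu
    simp only [clawSet, Set.mem_insert_iff, Set.mem_singleton_iff] at hu
    rcases hu with rfl | rfl | rfl | rfl
    · exact mono _ b1 M1 _ _ (by omega) (by omega) f1 g1
    · exact mono _ b2 M2 _ _ (by omega) (by omega) f2 g2
    · exact mono _ b3 M3 _ _ (by omega) (by omega) f3 g3
    · exact ⟨f4, g4⟩
  have loop : ∀ t, t ≤ l → ∃ w k a' b' E b M, t ≤ k ∧ St G w k a' b' E ∧ Iv v b M ⊆ E ∧
      E ⊆ Iv v a N ∧ w k ∈ Iv v a N ∧ a ≤ b ∧ b + M ≤ a + N ∧ N ≤ D^(t+4) * M := by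
    intro t
    induction t with
    | zero =>
      intro _
      obtain ⟨w, k, a', b', E, st, i1, i2, i3⟩ := Claw.top (hv.cn haN) hcl hclI
        (Iv_mono (v := v) (a := a) (N := N) (b := b4) (M := M4) (by omega) (by omega))
        (ivne _ _ (hlarge 4 M4 (by omega) e4)) (hv.cn (by omega)) hd
      exact ⟨w, k, a', b', E, b4, M4, by omega, st, i1, i2, i3, by omega, by omega, by simpa using e4⟩
    | succ t ih =>
      intro htl
      obtain ⟨w, k, a', b', E, b, M, i0, st, i1, i2, i3, i4, i5, i6⟩ := ih (by omega)
      obtain ⟨b', M', j1, j2, j3, j4, j5⟩ := dodge (t+4) b M (by omega) i4 i5 i6 (w k) (hnX _ i3)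
      have j3' : N ≤ D^(t+1+4) * M' := by
        rw [show t+1+4 = t+4+1 by omega]; exact j3
      have hss := (Iv_mono (v := v) j1 j2).trans i1
      obtain ⟨w', E', st', k1, k2, k3⟩ := st.advance hss
        (ivne _ _ (hlarge (t+1+4) M' (by omega) j3')) (hv.cn (by omega)) j5
      exact ⟨w', k+1, _, _, E', b', M', by omega, st', k1, k2.1.trans i2, i2 k3, by omega, by omega, j3'⟩
  obtain ⟨w, k, a', b', E, b, M, i0, st, i1, i2, i3, i4, i5, i6⟩ := loop l le_rfl
  obtain ⟨c', x', y', z', hcl', hclI'⟩ := hv.claw (a := b) (N := M) hp (by omega) (hlarge (l+4) M le_rfl i6)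
  have hfin : E.Finite := ((Set.finite_Ico _ _).image v).subset i2
  obtain ⟨k', hk', hH⟩ := st.finish hfin hcl' (hclI'.trans i1)
  exact h3 k' (by omega) hH

theorem phi_zero (L q l : ℕ) (hL : 2 ≤ L) : ∃ K, 1 ≤ K ∧ Phi L q l 0 K := by
  obtain ⟨m, K, hK, h⟩ := phi_base L q l hL
  have : ∀ j, j ≤ m → ∃ K, 1 ≤ K ∧ Phi L q l (m - j) K := by
    intro j
    induction j with
    | zero => intro _; exact ⟨K, hK, h⟩
    | succ j ih =>
      intro hj
      obtain ⟨K', hK', h'⟩ := ih (by omega)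
      rw [show m - j = m - (j+1) + 1 by omega] at h'
      exact ⟨_, Nat.one_le_pow _ _ (by omega), phi_step hK' h'⟩
  simpa using this m le_rfl

theorem main_bound (L q l : ℕ) (hL : 2 ≤ L) : ∃ K, 1 ≤ K ∧ ∀ (V : Type) (G : SimpleGraph V),
    NoHole G L → NoBic G q → (∀ k, l ≤ k → ¬ HConf G k) → ∀ (v : ℕ → V) (n p : ℕ), PathV G v n →
    (∀ w k, IndP G w k → k + 1 ≤ p) → n < K * (p + 2) := by
  obtain ⟨K, hK, h⟩ := phi_zero L q l hL
  refine ⟨K, hK, fun V G h1 h2 h3 v n p hv hp => ?_⟩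
  by_contra hcon
  exact h V G h1 h2 h3 v n p hv hp 0 n ∅ (by omega) (by omega) (by simp) (by simp) (by simp)

end IP6

namespace IP6

section wqo
variable {𝒢 : ∀ ⦃n : ℕ⦄, SimpleGraph (Fin n) → Prop}

theorem antichain_bound
    (hwqo : ∀ f : ℕ → Σ n : ℕ, SimpleGraph (Fin n), (∀ i, 𝒢 (f i).2) →
      ∃ i j : ℕ, i < j ∧ Nonempty ((f i).2 ↪g (f j).2))
    (P : ℕ → ∀ n, SimpleGraph (Fin n) → Prop)
    (hP : ∀ k k' n n' (H : SimpleGraph (Fin n)) (H' : SimpleGraph (Fin n')), k < k' → P k n H →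
      P k' n' H' → ¬ Nonempty (H ↪g H')) :
    ∃ L, ∀ k, L ≤ k → ∀ n (H : SimpleGraph (Fin n)), 𝒢 H → ¬ P k n H := by
  by_contra hcon
  push Not at hcon
  choose k hk n H hH hPH using hcon
  let u : ℕ → ℕ := fun i => Nat.rec 0 (fun _ r => k r + 1) i
  have hu : ∀ i, u (i+1) = k (u i) + 1 := fun i => rfl
  have hmono : StrictMono (fun i => k (u i)) := by
    refine strictMono_nat_of_lt_succ (fun i => ?_)
    have := hk (u (i+1))
    have := hu i
    omega
  obtain ⟨i, j, hij, h⟩ := hwqo (fun i => ⟨n (u i), H (u i)⟩) (fun i => hH (u i))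
  exact hP _ _ _ _ _ _ (hmono hij) (hPH (u i)) (hPH (u j)) h

theorem restrict {n : ℕ} (S : Set (Fin n)) (hS : S.Nonempty) :
    ∃ (n' : ℕ) (f : Fin n' → Fin n) (g : Fin n → Fin n'), Function.Injective f ∧ (∀ x, f x ∈ S) ∧
      (∀ v ∈ S, f (g v) = v) ∧ ∀ x, g (f x) = x := by
  classical
  let e := Fintype.equivFin S
  obtain ⟨v0, hv0⟩ := hS
  have h1 : Function.Injective (fun x => (e.symm x : Fin n)) := fun x y h =>
    e.symm.injective (Subtype.ext h)
  have h2 : ∀ v ∈ S, ((e.symm (if h : v ∈ S then e ⟨v, h⟩ else e ⟨v0, hv0⟩) : S) : Fin n) = v := by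
    intro v hv; simp [hv]
  refine ⟨Fintype.card S, fun x => (e.symm x : Fin n),
    fun v => if h : v ∈ S then e ⟨v, h⟩ else e ⟨v0, hv0⟩, h1, fun x => (e.symm x).2, h2, ?_⟩
  intro x
  exact h1 (h2 _ (e.symm x).2)

theorem comap_mem (hhered : ∀ {m n : ℕ} (H : SimpleGraph (Fin m)) (G : SimpleGraph (Fin n)),
      𝒢 G → Nonempty (H ↪g G) → 𝒢 H) {n n' : ℕ} {G : SimpleGraph (Fin n)} (hG : 𝒢 G)
    {f : Fin n' → Fin n} (hf : Function.Injective f) : 𝒢 (G.comap f) :=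
  hhered _ G hG ⟨⟨⟨f, hf⟩, Iff.rfl⟩⟩

def SpHole (k n : ℕ) (H : SimpleGraph (Fin n)) : Prop :=
  3 ≤ k ∧ ∃ c : ℕ → Fin n, IndHole H c k ∧ ∀ x, ∃ i < k, c i = x

theorem spHole_anti (k k' n n' : ℕ) (H : SimpleGraph (Fin n)) (H' : SimpleGraph (Fin n'))
    (hkk : k < k') (h : SpHole k n H) (h' : SpHole k' n' H') : ¬ Nonempty (H ↪g H') := by
  rintro ⟨e⟩
  obtain ⟨h3, c, hc, -⟩ := h
  obtain ⟨h3', c', hc', hs'⟩ := h'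
  have step : ∀ j < k', (∃ i < k, c' j = e (c i)) → ∃ j1 j2, j1 ≠ j2 ∧ j1 < k' ∧ j2 < k' ∧
      H'.Adj (c' j) (c' j1) ∧ H'.Adj (c' j) (c' j2) ∧ (∃ i < k, c' j1 = e (c i)) ∧
      (∃ i < k, c' j2 = e (c i)) := by
    rintro j hj ⟨i, hi, hij⟩
    obtain ⟨i1, i2, g1, g2, g3, g4, g5⟩ : ∃ i1 i2, i1 < k ∧ i2 < k ∧ i1 ≠ i2 ∧
        H.Adj (c i) (c i1) ∧ H.Adj (c i) (c i2) := by
      refine ⟨if i + 1 < k then i + 1 else 0, if i = 0 then k - 1 else i - 1, ?_, ?_, ?_, ?_, ?_⟩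
      · split_ifs <;> omega
      · split_ifs <;> omega
      · split_ifs <;> omega
      · refine (hc i _ hi (by split_ifs <;> omega)).2.2 ?_
        split_ifs <;> omega
      · refine (hc i _ hi (by split_ifs <;> omega)).2.2 ?_
        split_ifs <;> omega
    obtain ⟨j1, hj1, e1⟩ := hs' (e (c i1))
    obtain ⟨j2, hj2, e2⟩ := hs' (e (c i2))
    refine ⟨j1, j2, ?_, hj1, hj2, ?_, ?_, ⟨i1, g1, e1⟩, ⟨i2, g2, e2⟩⟩
    · rintro rfl
      exact g3 ((hc i1 i2 g1 g2).1 (e.injective (e1.symm.trans e2)))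
    · rw [hij, e1]; exact e.map_adj_iff.2 g4
    · rw [hij, e2]; exact e.map_adj_iff.2 g5
  have up : ∀ j, j + 1 < k' → (∃ i < k, c' j = e (c i)) → ∃ i < k, c' (j+1) = e (c i) := by
    intro j hj hij
    obtain ⟨j1, j2, hne, h1, h2, a1, a2, b1, b2⟩ := step j (by omega) hij
    rw [(hc' j j1 (by omega) h1).2] at a1
    rw [(hc' j j2 (by omega) h2).2] at a2
    have : j1 = j + 1 ∨ j2 = j + 1 := by omega
    rcases this with rfl | rfl
    · exact b1
    · exact b2
  have down : ∀ j, j + 1 < k' → (∃ i < k, c' (j+1) = e (c i)) → ∃ i < k, c' j = e (c i) := by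
    intro j hj hij
    obtain ⟨j1, j2, hne, h1, h2, a1, a2, b1, b2⟩ := step (j+1) (by omega) hij
    rw [(hc' (j+1) j1 (by omega) h1).2] at a1
    rw [(hc' (j+1) j2 (by omega) h2).2] at a2
    have : j1 = j ∨ j2 = j := by omega
    rcases this with rfl | rfl
    · exact b1
    · exact b2
  obtain ⟨j0, hj0, e0⟩ := hs' (e (c 0))
  have d0 : ∃ i < k, c' 0 = e (c i) := by
    have : ∀ t, t ≤ j0 → ∃ i < k, c' (j0 - t) = e (c i) := by
      intro t
      induction t with
      | zero => intro _; exact ⟨0, by omega, by simpa using e0⟩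
      | succ t ih =>
        intro ht
        have := ih (by omega)
        rw [show j0 - t = j0 - (t+1) + 1 by omega] at this
        exact down _ (by omega) this
    simpa using this j0 le_rfl
  have all : ∀ j, j < k' → ∃ i < k, c' j = e (c i) := by
    intro j
    induction j with
    | zero => intro _; exact d0
    | succ j ih => intro hj; exact up j hj (ih (by omega))
  choose! φ hφ1 hφ2 using all
  have := Finset.card_le_card_of_injOn (s := Finset.range k') (t := Finset.range k) φ
    (by intro j hj; simp only [Finset.coe_range, Set.mem_Iio] at hj ⊢; exact hφ1 j hj)
    (by
      intro j hj j' hj' hjj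
      simp only [Finset.coe_range, Set.mem_Iio] at hj hj'
      refine (hc' j j' hj hj').1 ?_
      rw [hφ2 j hj, hφ2 j' hj', hjj])
  simp at this
  omega

theorem exists_noHole
    (hhered : ∀ {m n : ℕ} (H : SimpleGraph (Fin m)) (G : SimpleGraph (Fin n)),
      𝒢 G → Nonempty (H ↪g G) → 𝒢 H)
    (hwqo : ∀ f : ℕ → Σ n : ℕ, SimpleGraph (Fin n), (∀ i, 𝒢 (f i).2) →
      ∃ i j : ℕ, i < j ∧ Nonempty ((f i).2 ↪g (f j).2)) :
    ∃ L, 2 ≤ L ∧ ∀ n (G : SimpleGraph (Fin n)), 𝒢 G → NoHole G L := by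
  obtain ⟨L, hL⟩ := antichain_bound hwqo SpHole spHole_anti
  refine ⟨L + 2, by omega, fun n G hG k c hk hk3 hc => ?_⟩
  obtain ⟨n', f, g, hf, hfS, hfg, hgf⟩ := restrict (c '' Set.Iio k) ⟨c 0, 0, by simp; omega, rfl⟩
  have hfg' : ∀ i < k, f (g (c i)) = c i := fun i hi => hfg _ ⟨i, hi, rfl⟩
  refine hL k (by omega) n' _ (comap_mem hhered hG hf) ⟨hk3, fun i => g (c i), ?_, ?_⟩
  · intro i j hi hj
    refine ⟨fun h => (hc i j hi hj).1 ?_, ?_⟩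
    · rw [← hfg' i hi, ← hfg' j hj]; exact congrArg f h
    · rw [comap_adj, hfg' i hi, hfg' j hj]
      exact (hc i j hi hj).2
  · intro x
    obtain ⟨i, hi, h⟩ := hfS x
    exact ⟨i, hi, by show g (c i) = x; rw [h, hgf]⟩

/-- all the data of `HConf`. -/
structure HData {V : Type} (G : SimpleGraph V) (k : ℕ) (w : ℕ → V) (a b c d : V) : Prop where
  ip : IndP G w k
  ab : a ≠ b
  cd : c ≠ d
  top : ∀ x, x = a ∨ x = b → G.Adj x (w 0) ∧ (∀ j ≤ k, w j ≠ x) ∧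
      (∀ j ≤ k, 0 < j → ¬ G.Adj x (w j))
  bot : ∀ x, x = c ∨ x = d → G.Adj x (w k) ∧ (∀ j ≤ k, w j ≠ x) ∧
      (∀ j < k, ¬ G.Adj x (w j))
  tb : ∀ x y, x = a ∨ x = b → y = c ∨ y = d → x ≠ y ∧ ¬ G.Adj x y

def SpH (k n : ℕ) (H : SimpleGraph (Fin n)) : Prop :=
  1 ≤ k ∧ ∃ w a b c d, HData H k w a b c d ∧
    ∀ x, (∃ i ≤ k, x = w i) ∨ x = a ∨ x = b ∨ x = c ∨ x = d

theorem HData.lev {V : Type} {G : SimpleGraph V} {k : ℕ} {w : ℕ → V} {a b c d : V}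
    (h : HData G k w a b c d) (hsp : ∀ x, (∃ i ≤ k, x = w i) ∨ x = a ∨ x = b ∨ x = c ∨ x = d)
    (u : ℕ → V) (t : ℕ) (hu : ∀ i < t, G.Adj (u i) (u (i+1))) (h0 : u 0 = w 0) (ht : u t = w k) :
    k ≤ t := by
  let Lev : V → ℕ → Prop := fun x l => (l ≤ k ∧ x = w l) ∨ (l = 0 ∧ (x = a ∨ x = b)) ∨
    (l = k ∧ (x = c ∨ x = d))
  have hex : ∀ x, ∃ l, Lev x l := by
    intro x
    rcases hsp x with ⟨i, hi, rfl⟩ | h | h | h | h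
    · exact ⟨i, Or.inl ⟨hi, rfl⟩⟩
    · exact ⟨0, Or.inr (Or.inl ⟨rfl, Or.inl h⟩)⟩
    · exact ⟨0, Or.inr (Or.inl ⟨rfl, Or.inr h⟩)⟩
    · exact ⟨k, Or.inr (Or.inr ⟨rfl, Or.inl h⟩)⟩
    · exact ⟨k, Or.inr (Or.inr ⟨rfl, Or.inr h⟩)⟩
  have hlip : ∀ x y l l', Lev x l → Lev y l' → G.Adj x y → l' ≤ l + 1 := by
    rintro x y l l' (⟨h1, rfl⟩ | ⟨rfl, hx⟩ | ⟨rfl, hx⟩) (⟨h2, rfl⟩ | ⟨rfl, hy⟩ | ⟨rfl, hy⟩) hadj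
    · have := (h.ip l l' h1 h2).2.1 hadj; omega
    · omega
    · by_contra hc
      exact (h.bot y hy).2.2 l (by omega) hadj.symm
    · by_contra hc
      exact (h.top x hx).2.2 l' h2 (by omega) hadj
    · omega
    · exact absurd hadj (h.tb x y hx hy).2
    · omega
    · omega
    · omega
  have hind : ∀ j ≤ t, ∀ l, Lev (u j) l → l ≤ j := by
    intro j
    induction j with
    | zero =>
      intro _ l hl
      rw [h0] at hl
      rcases hl with ⟨h1, h2⟩ | ⟨rfl, -⟩ | ⟨rfl, hx⟩
      · have := (h.ip 0 l (by omega) h1).1 h2; omega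
      · omega
      · exact absurd rfl ((h.bot _ hx).2.1 0 (by omega))
    | succ j ih =>
      intro hj l hl
      obtain ⟨l', hl'⟩ := hex (u j)
      have := ih (by omega) l' hl'
      have := hlip _ _ _ _ hl' hl (hu j (by omega))
      omega
  exact hind t le_rfl k (Or.inl ⟨le_rfl, ht⟩)

theorem HData.deg {V : Type} {G : SimpleGraph V} {k : ℕ} {w : ℕ → V} {a b c d : V}
    (h : HData G k w a b c d) (hsp : ∀ x, (∃ i ≤ k, x = w i) ∨ x = a ∨ x = b ∨ x = c ∨ x = d)
    (u x y z : V) (hux : G.Adj u x) (huy : G.Adj u y) (huz : G.Adj u z) (hxy : x ≠ y) (hxz : x ≠ z)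
    (hyz : y ≠ z) : u = w 0 ∨ u = w k := by
  by_contra hcon
  push Not at hcon
  have key : ∃ s t, ∀ v, G.Adj u v → v = s ∨ v = t := by
    have top : ∀ a', (a' = a ∨ a' = b) → ∀ v, G.Adj a' v → v = w 0 ∨ v = a ∨ v = b := by
      intro a' ha' v hv
      rcases hsp v with ⟨i, hi, rfl⟩ | hv' | hv' | hv' | hv'
      · by_cases hi0 : i = 0
        · exact Or.inl (by rw [hi0])
        · exact absurd hv ((h.top a' ha').2.2 i hi (by omega))
      · exact Or.inr (Or.inl hv')
      · exact Or.inr (Or.inr hv')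
      · exact absurd hv (h.tb a' v ha' (Or.inl hv')).2
      · exact absurd hv (h.tb a' v ha' (Or.inr hv')).2
    have bot : ∀ a', (a' = c ∨ a' = d) → ∀ v, G.Adj a' v → v = w k ∨ v = c ∨ v = d := by
      intro a' ha' v hv
      rcases hsp v with ⟨i, hi, rfl⟩ | hv' | hv' | hv' | hv'
      · by_cases hi0 : i = k
        · exact Or.inl (by rw [hi0])
        · exact absurd hv ((h.bot a' ha').2.2 i (by omega))
      · exact absurd hv.symm (h.tb v a' (Or.inl hv') ha').2
      · exact absurd hv.symm (h.tb v a' (Or.inr hv') ha').2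
      · exact Or.inr (Or.inl hv')
      · exact Or.inr (Or.inr hv')
    rcases hsp u with ⟨i, hi, rfl⟩ | rfl | rfl | rfl | rfl
    · have hi0 : i ≠ 0 := by rintro rfl; exact hcon.1 rfl
      have hik : i ≠ k := by rintro rfl; exact hcon.2 rfl
      refine ⟨w (i-1), w (i+1), fun v hv => ?_⟩
      rcases hsp v with ⟨j, hj, rfl⟩ | hv' | hv' | hv' | hv'
      · rcases (h.ip i j hi hj).2.1 hv with rfl | rfl
        · exact Or.inr rfl
        · exact Or.inl rfl
      · exact absurd hv.symm ((h.top v (Or.inl hv')).2.2 i hi (by omega))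
      · exact absurd hv.symm ((h.top v (Or.inr hv')).2.2 i hi (by omega))
      · exact absurd hv.symm ((h.bot v (Or.inl hv')).2.2 i (by omega))
      · exact absurd hv.symm ((h.bot v (Or.inr hv')).2.2 i (by omega))
    · refine ⟨w 0, b, fun v hv => ?_⟩
      rcases top _ (Or.inl rfl) v hv with h1 | rfl | h1
      · exact Or.inl h1
      · exact absurd rfl hv.ne
      · exact Or.inr h1
    · refine ⟨w 0, a, fun v hv => ?_⟩
      rcases top _ (Or.inr rfl) v hv with h1 | h1 | rfl
      · exact Or.inl h1
      · exact Or.inr h1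
      · exact absurd rfl hv.ne
    · refine ⟨w k, d, fun v hv => ?_⟩
      rcases bot _ (Or.inl rfl) v hv with h1 | rfl | h1
      · exact Or.inl h1
      · exact absurd rfl hv.ne
      · exact Or.inr h1
    · refine ⟨w k, c, fun v hv => ?_⟩
      rcases bot _ (Or.inr rfl) v hv with h1 | h1 | rfl
      · exact Or.inl h1
      · exact Or.inr h1
      · exact absurd rfl hv.ne
  obtain ⟨s, t, key⟩ := key
  rcases key x hux with rfl | rfl <;> rcases key y huy with rfl | rfl <;>
    rcases key z huz with rfl | rfl <;> simp_all

theorem spH_anti (k k' n n' : ℕ) (H : SimpleGraph (Fin n)) (H' : SimpleGraph (Fin n'))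
    (hkk : k < k') (h : SpH k n H) (h' : SpH k' n' H') : ¬ Nonempty (H ↪g H') := by
  rintro ⟨e⟩
  obtain ⟨h3, w, a, b, c, d, hd, -⟩ := h
  obtain ⟨h3', w', a', b', c', d', hd', hsp'⟩ := h'
  have ead : ∀ x y, H.Adj x y → H'.Adj (e x) (e y) := fun x y h => e.map_adj_iff.2 h
  have ene : ∀ x y, x ≠ y → e x ≠ e y := fun x y h h' => h (e.injective h')
  have e0 := hd'.deg hsp' (e (w 0)) (e a) (e b) (e (w 1))
    (ead _ _ (hd.top a (Or.inl rfl)).1.symm) (ead _ _ (hd.top b (Or.inr rfl)).1.symm)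
    (ead _ _ ((hd.ip 0 1 (by omega) (by omega)).2.2 (by omega)))
    (ene _ _ hd.ab) (ene _ _ ((hd.top a (Or.inl rfl)).2.1 1 (by omega)).symm)
    (ene _ _ ((hd.top b (Or.inr rfl)).2.1 1 (by omega)).symm)
  have ek := hd'.deg hsp' (e (w k)) (e c) (e d) (e (w (k-1)))
    (ead _ _ (hd.bot c (Or.inl rfl)).1.symm) (ead _ _ (hd.bot d (Or.inr rfl)).1.symm)
    (ead _ _ ((hd.ip k (k-1) (by omega) (by omega)).2.2 (by omega)))
    (ene _ _ hd.cd) (ene _ _ ((hd.bot c (Or.inl rfl)).2.1 (k-1) (by omega)).symm)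
    (ene _ _ ((hd.bot d (Or.inr rfl)).2.1 (k-1) (by omega)).symm)
  have hne : e (w 0) ≠ e (w k) := ene _ _ fun h => by
    have := (hd.ip 0 k (by omega) le_rfl).1 h; omega
  rcases e0 with e0 | e0 <;> rcases ek with ek | ek
  · exact hne (e0.trans ek.symm)
  · have := hd'.lev hsp' (fun i => e (w i)) k
      (fun i hi => ead _ _ ((hd.ip i (i+1) (by omega) (by omega)).2.2 (by omega))) e0 ek
    omega
  · have := hd'.lev hsp' (fun i => e (w (k - i))) k
      (fun i hi => ead _ _ ((hd.ip (k-i) (k-(i+1)) (by omega) (by omega)).2.2 (by omega)))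
      (by simpa using ek) (by simpa using e0)
    omega
  · exact hne (e0.trans ek.symm)

theorem exists_noH
    (hhered : ∀ {m n : ℕ} (H : SimpleGraph (Fin m)) (G : SimpleGraph (Fin n)),
      𝒢 G → Nonempty (H ↪g G) → 𝒢 H)
    (hwqo : ∀ f : ℕ → Σ n : ℕ, SimpleGraph (Fin n), (∀ i, 𝒢 (f i).2) →
      ∃ i j : ℕ, i < j ∧ Nonempty ((f i).2 ↪g (f j).2)) :
    ∃ l, ∀ n (G : SimpleGraph (Fin n)), 𝒢 G → ∀ k, l ≤ k → ¬ HConf G k := by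
  obtain ⟨l, hl⟩ := antichain_bound hwqo SpH spH_anti
  refine ⟨l + 1, fun n G hG k hk ⟨w, a, b, c, d, h1, h2, h3, h4, h5, h6⟩ => ?_⟩
  let S : Set (Fin n) := {x | (∃ i ≤ k, x = w i) ∨ x = a ∨ x = b ∨ x = c ∨ x = d}
  have ma : a ∈ S := Or.inr (Or.inl rfl)
  have mb : b ∈ S := Or.inr (Or.inr (Or.inl rfl))
  have mc : c ∈ S := Or.inr (Or.inr (Or.inr (Or.inl rfl)))
  have md : d ∈ S := Or.inr (Or.inr (Or.inr (Or.inr rfl)))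
  have mw : ∀ i ≤ k, w i ∈ S := fun i hi => Or.inl ⟨i, hi, rfl⟩
  obtain ⟨n', f, g, hf, hfS, hfg, hgf⟩ := restrict S ⟨a, ma⟩
  have hg : ∀ x ∈ S, ∀ y ∈ S, g x = g y → x = y := by
    intro x hx y hy h
    rw [← hfg x hx, ← hfg y hy, h]
  have hadj : ∀ x ∈ S, ∀ y ∈ S, ((G.comap f).Adj (g x) (g y) ↔ G.Adj x y) := by
    intro x hx y hy
    rw [comap_adj, hfg x hx, hfg y hy]
  have mab : ∀ x, x = a ∨ x = b → x ∈ S := by rintro x (rfl | rfl) <;> assumption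
  have mcd : ∀ x, x = c ∨ x = d → x ∈ S := by rintro x (rfl | rfl) <;> assumption
  have pull : ∀ {p r : Fin n} (x : Fin n'), x = g p ∨ x = g r → ∃ y, (y = p ∨ y = r) ∧ x = g y := by
    rintro p r x (rfl | rfl)
    · exact ⟨p, Or.inl rfl, rfl⟩
    · exact ⟨r, Or.inr rfl, rfl⟩
  refine hl k (by omega) n' _ (comap_mem hhered hG hf) ⟨by omega, fun i => g (w i), g a, g b, g c, g d,
    ⟨?_, fun h => h2 (hg _ ma _ mb h), fun h => h3 (hg _ mc _ md h), ?_, ?_, ?_⟩, ?_⟩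
  · intro i j hi hj
    refine ⟨fun h => (h1 i j hi hj).1 (hg _ (mw i hi) _ (mw j hj) h), ?_⟩
    rw [hadj _ (mw i hi) _ (mw j hj)]
    exact (h1 i j hi hj).2
  · intro x hx
    obtain ⟨y, hy, rfl⟩ := pull x hx
    obtain ⟨p1, p2, p3⟩ := h4 y hy
    have my := mab y hy
    refine ⟨(hadj _ my _ (mw 0 (by omega))).2 p1, fun j hj h => p2 j hj (hg _ (mw j hj) _ my h), ?_⟩
    intro j hj hj0
    rw [hadj _ my _ (mw j hj)]
    exact p3 j hj hj0
  · intro x hx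
    obtain ⟨y, hy, rfl⟩ := pull x hx
    obtain ⟨p1, p2, p3⟩ := h5 y hy
    have my := mcd y hy
    refine ⟨(hadj _ my _ (mw k le_rfl)).2 p1, fun j hj h => p2 j hj (hg _ (mw j hj) _ my h), ?_⟩
    intro j hj
    rw [hadj _ my _ (mw j hj.le)]
    exact p3 j hj
  · intro x z hx hz
    obtain ⟨y, hy, rfl⟩ := pull x hx
    obtain ⟨y', hy', rfl⟩ := pull z hz
    obtain ⟨p1, p2⟩ := h6 y y' hy hy'
    refine ⟨fun h => p1 (hg _ (mab y hy) _ (mcd y' hy') h), ?_⟩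
    rwa [hadj _ (mab y hy) _ (mcd y' hy')]
  · intro x
    rcases hfS x with ⟨i, hi, h⟩ | h | h | h | h
    · exact Or.inl ⟨i, hi, by show x = g (w i); rw [← h, hgf]⟩
    · exact Or.inr (Or.inl (by rw [← h, hgf]))
    · exact Or.inr (Or.inr (Or.inl (by rw [← h, hgf])))
    · exact Or.inr (Or.inr (Or.inr (Or.inl (by rw [← h, hgf]))))
    · exact Or.inr (Or.inr (Or.inr (Or.inr (by rw [← h, hgf]))))

theorem exists_noBic
    (hhered : ∀ {m n : ℕ} (H : SimpleGraph (Fin m)) (G : SimpleGraph (Fin n)),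
      𝒢 G → Nonempty (H ↪g G) → 𝒢 H)
    (hcliques : ¬ ∀ n : ℕ, 𝒢 (⊤ : SimpleGraph (Fin n)))
    (hbicliques : ¬ ∀ s t : ℕ, ∃ (n : ℕ) (G : SimpleGraph (Fin n)), 𝒢 G ∧
      Nonempty (G ≃g completeBipartiteGraph (Fin s) (Fin t))) :
    ∃ q, ∀ n (G : SimpleGraph (Fin n)), 𝒢 G → NoBic G q := by
  push Not at hcliques hbicliques
  obtain ⟨t, ht⟩ := hcliques
  obtain ⟨s1, s2, hs⟩ := hbicliques
  obtain ⟨N1, h1⟩ := ramsey t s1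
  obtain ⟨N2, h2⟩ := ramsey t s2
  refine ⟨N1 + N2, fun n G hG A B hA hB hAB => ?_⟩
  have nocl : ∀ T : Finset (Fin n), T.card = t → ¬ ∀ a ∈ T, ∀ b ∈ T, a ≠ b → G.Adj a b := by
    intro T hT hTr
    let e := T.equivFinOfCardEq hT
    refine ht (hhered _ G hG ⟨⟨⟨fun a => (e.symm a : Fin n), fun a b h =>
      e.symm.injective (Subtype.ext h)⟩, ?_⟩⟩)
    intro a b
    simp only [top_adj]
    constructor
    · rintro h rfl; exact h.ne rfl
    · intro h
      exact hTr _ (e.symm a).2 _ (e.symm b).2 (fun h' => h (e.symm.injective (Subtype.ext h')))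
  rcases h1 _ G.Adj (fun _ _ h => h.symm) A (by omega) with ⟨T, hT, hTc, hTr⟩ | ⟨T, hT, hTc, hTr⟩
  · exact nocl T hTc hTr
  rcases h2 _ G.Adj (fun _ _ h => h.symm) B (by omega) with ⟨U, hU, hUc, hUr⟩ | ⟨U, hU, hUc, hUr⟩
  · exact nocl U hUc hUr
  let eT := T.equivFinOfCardEq hTc
  let eU := U.equivFinOfCardEq hUc
  let φ : Fin s1 ⊕ Fin s2 → Fin n := Sum.elim (fun a => (eT.symm a : Fin n)) (fun a => (eU.symm a : Fin n))
  have hTU : ∀ a b, G.Adj (eT.symm a : Fin n) (eU.symm b : Fin n) := fun a b =>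
    hAB _ (hT (eT.symm a).2) _ (hU (eU.symm b).2)
  have hφ : Function.Injective φ := by
    rintro (a | a) (b | b) h
    · exact congrArg Sum.inl (eT.symm.injective (Subtype.ext h))
    · exact absurd h (hTU a b).ne
    · exact absurd h (hTU b a).ne'
    · exact congrArg Sum.inr (eU.symm.injective (Subtype.ext h))
  have hφa : ∀ x y, G.Adj (φ x) (φ y) ↔ (completeBipartiteGraph (Fin s1) (Fin s2)).Adj x y := by
    rintro (a | a) (b | b)
    · simp only [φ, Sum.elim_inl, completeBipartiteGraph_adj]
      simp only [Sum.isLeft_inl, Sum.isRight_inl]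
      refine ⟨fun h => absurd h (hTr _ (eT.symm a).2 _ (eT.symm b).2 h.ne), by simp⟩
    · simp [φ, hTU]
    · simp [φ, (hTU _ _).symm]
    · simp only [φ, Sum.elim_inr, completeBipartiteGraph_adj]
      simp only [Sum.isLeft_inr, Sum.isRight_inr]
      refine ⟨fun h => absurd h (hUr _ (eU.symm a).2 _ (eU.symm b).2 h.ne), by simp⟩
  let e : Fin (s1 + s2) ≃ Fin s1 ⊕ Fin s2 := finSumFinEquiv.symm
  have hmem : 𝒢 ((completeBipartiteGraph (Fin s1) (Fin s2)).comap e) := by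
    refine hhered _ G hG ⟨⟨⟨fun x => φ (e x), hφ.comp e.injective⟩, ?_⟩⟩
    intro x y
    exact hφa _ _
  exact (hs _ _ hmem).false (Iso.comap e _)

end wqo

theorem embed_path {V : Type} {G : SimpleGraph V} {w : ℕ → V} {k : ℕ} (hw : IndP G w k) :
    Nonempty (pathGraph (k+1) ↪g G) := by
  refine ⟨⟨⟨fun i => w i, fun i j h => Fin.ext ((hw i j (by omega) (by omega)).1 h)⟩, ?_⟩⟩
  intro i j
  rw [pathGraph_adj]
  exact (hw i j (by omega) (by omega)).2

theorem numerics {K m P : ℕ} (hP : 2 ≤ P) (h : m < K * (P + 2)) :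
    (m : ℝ) ^ (((K + 2 : ℕ) : ℝ)⁻¹) ≤ (P : ℝ) := by
  have h1 : m ≤ P ^ (K+2) := by
    have a1 : K < 2 ^ K := Nat.lt_two_pow_self
    have a2 : 2 ^ (K+1) ≤ P ^ (K+1) := Nat.pow_le_pow_left hP _
    calc m ≤ K * (P + 2) := h.le
      _ ≤ K * (2 * P) := Nat.mul_le_mul_left _ (by omega)
      _ = (2 * K) * P := by ring
      _ ≤ 2 ^ (K+1) * P := Nat.mul_le_mul_right _ (by rw [pow_succ]; omega)
      _ ≤ P ^ (K+1) * P := Nat.mul_le_mul_right _ a2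
      _ = P ^ (K+2) := by rw [← pow_succ]
  have h2 : (m : ℝ) ≤ (P : ℝ) ^ (K+2) := by exact_mod_cast h1
  calc (m : ℝ) ^ (((K + 2 : ℕ) : ℝ)⁻¹) ≤ ((P : ℝ) ^ (K+2)) ^ (((K + 2 : ℕ) : ℝ)⁻¹) :=
        Real.rpow_le_rpow (by positivity) h2 (by positivity)
    _ = P := Real.pow_rpow_inv_natCast (by positivity) (by omega)

end IP6

theorem stmt6 (𝒢 : ∀ ⦃n : ℕ⦄, SimpleGraph (Fin n) → Prop)
    (hhered : ∀ {n m : ℕ} (G : SimpleGraph (Fin n)) (H : SimpleGraph (Fin m)),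
      𝒢 G → Nonempty (H ↪g G) → 𝒢 H)
    (hcliques : ¬ ∀ n : ℕ, 𝒢 (⊤ : SimpleGraph (Fin n)))
    (hbicliques : ¬ ∀ s t : ℕ, ∃ (n : ℕ) (G : SimpleGraph (Fin n)),
      𝒢 G ∧ Nonempty (G ≃g completeBipartiteGraph (Fin s) (Fin t)))
    (hwqo : ∀ f : ℕ → Σ n : ℕ, SimpleGraph (Fin n), (∀ i, 𝒢 (f i).2) →
      ∃ i j : ℕ, i < j ∧ Nonempty ((f i).2 ↪g (f j).2)) :
    ∃ d : ℝ, 0 < d ∧ d < 1 ∧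
      ∀ {n : ℕ} (G : SimpleGraph (Fin n)) (m : ℕ), 𝒢 G → HasPathOfOrder G m →
        HasInducedPathGE G ((m : ℝ) ^ d) := by
  obtain ⟨L, hL2, hL⟩ := IP6.exists_noHole (𝒢 := 𝒢) (fun H G hG h => hhered G H hG h) hwqo
  obtain ⟨l, hl⟩ := IP6.exists_noH (𝒢 := 𝒢) (fun H G hG h => hhered G H hG h) hwqo
  obtain ⟨q, hq⟩ := IP6.exists_noBic (𝒢 := 𝒢) (fun H G hG h => hhered G H hG h) hcliques hbicliques
  obtain ⟨K, hK1, hK⟩ := IP6.main_bound L q l hL2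
  refine ⟨(((K + 2 : ℕ) : ℝ))⁻¹, by positivity, ?_, ?_⟩
  · apply inv_lt_one_of_one_lt₀
    exact_mod_cast (by omega : 1 < K + 2)
  intro n G m hG hpath
  obtain ⟨u, v, p, hp, hlen⟩ := hpath
  have hPV : IP6.PathV G p.getVert m := by
    constructor
    · intro i hi j hj h
      exact hp.getVert_injOn (show i ≤ p.length by omega) (show j ≤ p.length by omega) h
    · intro i hi
      exact p.adj_getVert_succ (by omega)
  have hbd : ∀ w k, IP6.IndP G w k → k ≤ n := by
    intro w k hw
    have h1 : Function.Injective (fun i : Fin (k+1) => w i) := fun i j h =>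
      Fin.ext ((hw i j (by omega) (by omega)).1 h)
    have h2 := Fintype.card_le_of_injective _ h1
    simp only [Fintype.card_fin] at h2
    omega
  classical
  let Q : ℕ → Prop := fun k => ∃ w, IP6.IndP G w k
  have hQ0 : Q 0 := ⟨_, IP6.IndP.zero u⟩
  have hQ : Q (Nat.findGreatest Q n) := Nat.findGreatest_spec (Nat.zero_le n) hQ0
  have hmax : ∀ w k, IP6.IndP G w k → k ≤ Nat.findGreatest Q n := fun w k hw =>
    Nat.le_findGreatest (hbd w k hw) ⟨w, hw⟩
  generalize Nat.findGreatest Q n = k0 at hQ hmax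
  obtain ⟨w, hw⟩ := hQ
  refine ⟨k0 + 1, ?_, IP6.embed_path hw⟩
  rcases Nat.lt_or_ge m 2 with hm | hm
  · obtain rfl : m = 1 := by omega
    rw [Nat.cast_one, Real.one_rpow]
    exact_mod_cast (by omega : 1 ≤ k0 + 1)
  · have hadj := hPV.2 0 (by omega)
    have h1 := hmax _ _ ((IP6.IndP.zero (p.getVert 0)).push hadj (by omega) (fun _ _ => hadj.ne))
    exact IP6.numerics (by omega) (hK _ G (hL n G hG) (hq n G hG) (hl n G hG) _ m (k0+1) hPV
      (fun w k hw => by have := hmax w k hw; omega))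
end
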